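/- arXiv:2203.15091 — 4 statements merged into one kernel-verified Lean document; each statement's English description precedes it below -/
import Mathlib

section
/- Fix T > 0, p > 0, and v₀ ∈ C^∞([0,1]) with 0 ≤ v₀ ≤ 1. For each ε > 0 let u^ε ∈ C^∞([0,T]×[0,1]) with 0 ≤ u^ε ≤ 1 satisfy ∂_t u^ε = ε ∂_x² u^ε − p ∂_x[J(u^ε)] on (0,T)×(0,1), u^ε(0,·) = v₀, and the zero-flux boundary conditions [ε∂_x u^ε − pJ(u^ε)]|_{x=0} = 0 and [ε∂_x u^ε − pJ(u^ε)]|_{x=1} = 0 for all t ∈ [0,T]. Then as ε → 0, u^ε converges in the weak-⋆ topology of L^∞([0,T]×[0,1]) to a function u satisfying: (i) ∫∫ [F(u)∂_t ψ + pQ(u)∂_x ψ] dx dt ≥ 0 for every Lax entropy flux pair (F,Q) and every nonnegative ψ ∈ C_c^∞((0,T)×(0,1)); (ii) esslim_{t→0+} ∫₀¹ |u(t,x) − v₀(x)| dx = 0; (iii) for every boundary entropy flux pair (ℱ,𝒬) and every nonnegative φ ∈ C([0,T]), esslim_{x→0+} ∫₀ᵀ φ(t) 𝒬(u(t,x), 0)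 dt ≤ 0 and esslim_{x→1−} ∫₀ᵀ φ(t) 𝒬(u(t,x), 1) dt ≥ 0. (Theorem 2.8, zero-flux boundary case: the limit is the entropy solution with boundary data v₋ = 0, v₊ = 1.) -/
open Set MeasureTheory intervalIntegral Filter

/-- The flux `J u = u (1 - u)`. -/
noncomputable def J (u : ℝ) : ℝ := u * (1 - u)

/-- A Lax entropy flux pair for the flux `J u = u * (1 - u)`. -/
def IsLaxPair (F Q : ℝ → ℝ) : Prop :=
  ContDiff ℝ 2 F ∧ ContDiff ℝ 2 Q ∧
  (∀ u ∈ Set.Icc (0:ℝ) 1, deriv Q u = (1 - 2*u) * deriv F u) ∧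
  (∀ u ∈ Set.Icc (0:ℝ) 1, 0 ≤ deriv (deriv F) u)

/-- A boundary entropy flux pair. -/
def IsBoundaryPair (F Q : ℝ → ℝ → ℝ) : Prop :=
  ∀ v ∈ Set.Icc (0:ℝ) 1,
    IsLaxPair (fun u => F u v) (fun u => Q u v) ∧
    F v v = 0 ∧ deriv (fun u => F u v) v = 0 ∧ Q v v = 0

/-!
The maximum principle for the doubled gap `U(t,x) - V(t,y) - (x - y)²/(2α) - K t` of the space
primitives of two viscous solutions with viscosities `ε` and `δ` shows that the primitives are
`O(√(ε + δ))`-close; the zero-flux condition fixes the primitives at both end points, so no boundary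
layer interferes. The total variation in space stays bounded uniformly in the viscosity, so
`∫ (u - v)² ≤ sup |U - V| ∫ |∂ₓu - ∂ₓv|` makes the viscous solutions Cauchy in `L¹`. They therefore
converge in measure, and every entropy relation passes to the limit.

For the boundary condition, consider the viscous entropy flux through a vertical line, weighted by
`φ(t)`. By the entropy balance it is one-sided Lipschitz in `x` uniformly in `ε`, so in the limit it
is monotone up to a linear term and has essential limits at the end points. Zero flux turns its
value at an end point into `p (Q - J dF/du)`, and `Q - J dF/du` is antitone in `u` because its
derivative is `-J d²F/du²`, which gives the sign.
-/

open scoped Topology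

/-! ### Interval integrals -/

section Interval

variable {f g : ℝ → ℝ} {a b C : ℝ}

lemma integral_eq_zero_of_eqOn_Icc (hab : a ≤ b) (h : ∀ x ∈ Icc a b, f x = 0) :
    ∫ x in a..b, f x = 0 := by
  rw [integral_congr (g := fun _ => (0 : ℝ)) fun x hx => h x (uIcc_of_le hab ▸ hx),
    intervalIntegral.integral_zero]

lemma integral_le_mul_of_le (hab : a ≤ b) (hf : IntervalIntegrable f volume a b)
    (h : ∀ x ∈ Icc a b, f x ≤ C) : ∫ x in a..b, f x ≤ C * (b - a) := by
  simpa [mul_comm] using integral_mono_on hab hf intervalIntegrable_const h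

lemma mul_le_integral_of_le (hab : a ≤ b) (hf : IntervalIntegrable f volume a b)
    (h : ∀ x ∈ Icc a b, C ≤ f x) : C * (b - a) ≤ ∫ x in a..b, f x := by
  simpa [mul_comm] using integral_mono_on hab intervalIntegrable_const hf h

lemma exists_abs_le_of_continuousOn_Icc (hf : ContinuousOn f (Icc a b)) :
    ∃ C, 0 ≤ C ∧ ∀ x ∈ Icc a b, |f x| ≤ C := by
  obtain ⟨C, hC⟩ := isCompact_Icc.exists_bound_of_continuousOn hf
  exact ⟨max C 0, le_max_right _ _, fun x hx => (hC x hx).trans (le_max_left _ _)⟩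

lemma exists_abs_mul_le_of_continuousOn_Icc {c d : ℝ} (hf : ContinuousOn f (Icc a b))
    (hg : ContinuousOn g (Icc c d)) :
    ∃ K, ∀ x ∈ Icc a b, ∀ y ∈ Icc c d, |f x * g y| ≤ K := by
  obtain ⟨C, hC0, hC⟩ := exists_abs_le_of_continuousOn_Icc hf
  obtain ⟨D, -, hD⟩ := exists_abs_le_of_continuousOn_Icc hg
  refine ⟨C * D, fun x hx y hy => ?_⟩
  rw [abs_mul]
  exact mul_le_mul (hC x hx) (hD y hy) (abs_nonneg _) hC0

end Interval

/-! ### Partial derivatives on the time-space plane -/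

/-- The partial derivative in the first variable, which plays the role of time. -/
noncomputable def tderiv (f : ℝ × ℝ → ℝ) (z : ℝ × ℝ) : ℝ := fderiv ℝ f z (1, 0)

/-- The partial derivative in the second variable, which plays the role of space. -/
noncomputable def xderiv (f : ℝ × ℝ → ℝ) (z : ℝ × ℝ) : ℝ := fderiv ℝ f z (0, 1)

section PartialDerivatives

variable {f g : ℝ × ℝ → ℝ} {t x f' : ℝ} {n : WithTop ℕ∞}

lemma hasDerivAt_tderiv (hf : DifferentiableAt ℝ f (t, x)) :
    HasDerivAt (fun s => f (s, x)) (tderiv f (t, x)) t := by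
  have h : HasDerivAt (fun s : ℝ => (s, x)) ((1 : ℝ), (0 : ℝ)) t :=
    (hasDerivAt_id t).prodMk (hasDerivAt_const t x)
  exact hf.hasFDerivAt.comp_hasDerivAt t h

lemma hasDerivAt_xderiv (hf : DifferentiableAt ℝ f (t, x)) :
    HasDerivAt (fun y => f (t, y)) (xderiv f (t, x)) x := by
  have h : HasDerivAt (fun y : ℝ => (t, y)) ((0 : ℝ), (1 : ℝ)) x :=
    (hasDerivAt_const x t).prodMk (hasDerivAt_id x)
  exact hf.hasFDerivAt.comp_hasDerivAt x h

lemma tderiv_eq (hf : DifferentiableAt ℝ f (t, x)) (h : HasDerivAt (fun s => f (s, x)) f' t) :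
    tderiv f (t, x) = f' :=
  (hasDerivAt_tderiv hf).unique h

lemma xderiv_eq (hf : DifferentiableAt ℝ f (t, x)) (h : HasDerivAt (fun y => f (t, y)) f' x) :
    xderiv f (t, x) = f' :=
  (hasDerivAt_xderiv hf).unique h

lemma contDiff_tderiv (hf : ContDiff ℝ (n + 1) f) : ContDiff ℝ n (tderiv f) :=
  (hf.fderiv_right le_rfl).clm_apply contDiff_const

lemma contDiff_xderiv (hf : ContDiff ℝ (n + 1) f) : ContDiff ℝ n (xderiv f) :=
  (hf.fderiv_right le_rfl).clm_apply contDiff_const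

lemma continuous_tderiv (hf : ContDiff ℝ 1 f) : Continuous (tderiv f) :=
  (contDiff_tderiv (n := 0) (by simpa using hf)).continuous

lemma continuous_xderiv (hf : ContDiff ℝ 1 f) : Continuous (xderiv f) :=
  (contDiff_xderiv (n := 0) (by simpa using hf)).continuous

lemma tderiv_xderiv_comm (hf : ContDiff ℝ 2 f) (z : ℝ × ℝ) :
    tderiv (xderiv f) z = xderiv (tderiv f) z := by
  have hd : DifferentiableAt ℝ (fderiv ℝ f) z :=
    (hf.fderiv_right (m := 1) (by norm_num)).differentiable one_ne_zero z
  have hsecond (v w : ℝ × ℝ) :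
      fderiv ℝ (fun y => fderiv ℝ f y v) z w = fderiv ℝ (fderiv ℝ f) z w v := by
    rw [(hd.hasFDerivAt.clm_apply (hasFDerivAt_const v z)).fderiv]
    simp
  have hsymm : IsSymmSndFDerivAt ℝ f z := hf.contDiffAt.isSymmSndFDerivAt (by simp)
  exact (hsecond _ _).trans ((hsymm _ _).trans (hsecond _ _).symm)

lemma integral_divergence_rectangle (hf : ContDiff ℝ 1 f) (hg : ContDiff ℝ 1 g) (a b c d : ℝ) :
    (∫ t in a..b, ∫ x in c..d, (tderiv f (t, x) + xderiv g (t, x))) =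
      (((∫ t in a..b, g (t, d)) - ∫ t in a..b, g (t, c)) + ∫ x in c..d, f (b, x)) -
        ∫ x in c..d, f (a, x) :=
  integral2_divergence_prod_of_hasFDerivAt f g (fderiv ℝ f) (fderiv ℝ g) a c b d
    hf.continuous.continuousOn hg.continuous.continuousOn
    (fun z _ => (hf.differentiable one_ne_zero z).hasFDerivAt)
    (fun z _ => (hg.differentiable one_ne_zero z).hasFDerivAt)
    (((continuous_tderiv hf).add (continuous_xderiv hg)).continuousOn.integrableOn_compact
      (isCompact_uIcc.prod isCompact_uIcc))

lemma integral_divergence_rectangle_eq_zero (hf : ContDiff ℝ 1 f) (hg : ContDiff ℝ 1 g)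
    {a b c d : ℝ} (hf0 : ∀ z ∉ Ioo a b ×ˢ Ioo c d, f z = 0)
    (hg0 : ∀ z ∉ Ioo a b ×ˢ Ioo c d, g z = 0) :
    ∫ t in a..b, ∫ x in c..d, (tderiv f (t, x) + xderiv g (t, x)) = 0 := by
  rw [integral_divergence_rectangle hf hg]
  simp [hf0, hg0]

lemma continuous_integral_snd (hf : Continuous f) (c d : ℝ) :
    Continuous fun t => ∫ x in c..d, f (t, x) :=
  continuous_parametric_intervalIntegral_of_continuous' (f := fun t x => f (t, x)) hf c d

lemma integral_rectangle_mono (hf : Continuous f) (hg : Continuous g)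
    {a b c d : ℝ} (hab : a ≤ b) (hcd : c ≤ d)
    (h : ∀ t ∈ Icc a b, ∀ x ∈ Icc c d, f (t, x) ≤ g (t, x)) :
    (∫ t in a..b, ∫ x in c..d, f (t, x)) ≤ ∫ t in a..b, ∫ x in c..d, g (t, x) := by
  refine integral_mono_on hab ((continuous_integral_snd hf c d).intervalIntegrable _ _)
    ((continuous_integral_snd hg c d).intervalIntegrable _ _) fun t ht => ?_
  exact integral_mono_on hcd ((hf.comp (.prodMk_right t)).intervalIntegrable _ _)
    ((hg.comp (.prodMk_right t)).intervalIntegrable _ _) (h t ht)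

lemma flux_le_of_divergence_le (hf : ContDiff ℝ 1 f) (hg : ContDiff ℝ 1 g)
    {a b c d K : ℝ} (hab : a ≤ b) (hcd : c ≤ d)
    (h : ∀ t ∈ Icc a b, ∀ x ∈ Icc c d, tderiv f (t, x) + xderiv g (t, x) ≤ K) :
    (((∫ t in a..b, g (t, d)) - ∫ t in a..b, g (t, c)) + ∫ x in c..d, f (b, x)) -
        (∫ x in c..d, f (a, x)) ≤ K * ((b - a) * (d - c)) := by
  rw [← integral_divergence_rectangle hf hg]
  calc _ ≤ ∫ _ in a..b, ∫ _ in c..d, K :=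
        integral_rectangle_mono ((continuous_tderiv hf).add (continuous_xderiv hg))
          (continuous_const (y := K)) hab hcd h
    _ = K * ((b - a) * (d - c)) := by simp; ring

end PartialDerivatives

/-! ### Viscous solutions -/

lemma J_nonneg {u : ℝ} (hu : u ∈ Icc (0 : ℝ) 1) : 0 ≤ J u :=
  mul_nonneg hu.1 (by linarith [hu.2])

lemma J_le (u : ℝ) : J u ≤ 1 / 4 := by
  unfold J; nlinarith [sq_nonneg (u - 1 / 2)]

lemma contDiff_J {n : WithTop ℕ∞} : ContDiff ℝ n J := by
  unfold J; fun_prop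

lemma hasDerivAt_J (u : ℝ) : HasDerivAt J (1 - 2 * u) u := by
  refine ((hasDerivAt_id u).mul ((hasDerivAt_id u).const_sub 1)).congr_deriv ?_
  simp only [id]; ring

/-- A classical solution with values in `[0, 1]` of the viscous conservation law on
`[0, T] × [0, 1]` with viscosity `ε`, initial datum `v0` and zero-flux boundary conditions. The
equation is required up to the boundary, with the nonlinear term `∂ₓJ(u)` expanded by the chain
rule. -/
structure IsViscousSolution (T p ε : ℝ) (v0 : ℝ → ℝ) (u : ℝ × ℝ → ℝ) : Prop where
  contDiff : ContDiff ℝ 2 u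
  mem : ∀ t ∈ Icc 0 T, ∀ x ∈ Icc (0 : ℝ) 1, u (t, x) ∈ Icc (0 : ℝ) 1
  eqn : ∀ t ∈ Icc 0 T, ∀ x ∈ Icc (0 : ℝ) 1,
    tderiv u (t, x) = ε * xderiv (xderiv u) (t, x) - p * ((1 - 2 * u (t, x)) * xderiv u (t, x))
  initial : ∀ x ∈ Icc (0 : ℝ) 1, u (0, x) = v0 x
  flux_left : ∀ t ∈ Icc 0 T, ε * xderiv u (t, 0) = p * J (u (t, 0))
  flux_right : ∀ t ∈ Icc 0 T, ε * xderiv u (t, 1) = p * J (u (t, 1))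

namespace IsViscousSolution

variable {T p ε : ℝ} {v0 : ℝ → ℝ} {u : ℝ × ℝ → ℝ}

lemma contDiff_one (hu : IsViscousSolution T p ε v0 u) : ContDiff ℝ 1 u :=
  hu.contDiff.of_le one_le_two

lemma contDiff_xderiv (hu : IsViscousSolution T p ε v0 u) : ContDiff ℝ 1 (xderiv u) :=
  _root_.contDiff_xderiv (by simpa [one_add_one_eq_two] using hu.contDiff)

lemma contDiff_tderiv (hu : IsViscousSolution T p ε v0 u) : ContDiff ℝ 1 (tderiv u) :=
  _root_.contDiff_tderiv (by simpa [one_add_one_eq_two] using hu.contDiff)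

lemma hasDerivAt_time (hu : IsViscousSolution T p ε v0 u) (t x : ℝ) :
    HasDerivAt (fun s => u (s, x)) (tderiv u (t, x)) t :=
  hasDerivAt_tderiv (hu.contDiff_one.differentiable one_ne_zero _)

lemma hasDerivAt_space (hu : IsViscousSolution T p ε v0 u) (t x : ℝ) :
    HasDerivAt (fun y => u (t, y)) (xderiv u (t, x)) x :=
  hasDerivAt_xderiv (hu.contDiff_one.differentiable one_ne_zero _)

lemma hasDerivAt_space_xderiv (hu : IsViscousSolution T p ε v0 u) (t x : ℝ) :
    HasDerivAt (fun y => xderiv u (t, y)) (xderiv (xderiv u) (t, x)) x :=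
  hasDerivAt_xderiv (hu.contDiff_xderiv.differentiable one_ne_zero _)

lemma hasDerivAt_J_space (hu : IsViscousSolution T p ε v0 u) (t x : ℝ) :
    HasDerivAt (fun y => J (u (t, y))) ((1 - 2 * u (t, x)) * xderiv u (t, x)) x :=
  (hasDerivAt_J _).comp x (hu.hasDerivAt_space t x)

lemma of_interior (hT : T ≠ 0) (hsm : ContDiff ℝ 2 u)
    (hub : ∀ z ∈ Icc (0 : ℝ) T ×ˢ Icc (0 : ℝ) 1, u z ∈ Icc (0 : ℝ) 1)
    (hpde : ∀ t ∈ Ioo 0 T, ∀ x ∈ Ioo (0 : ℝ) 1,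
      deriv (fun s => u (s, x)) t
        = ε * deriv (deriv (fun y => u (t, y))) x - p * deriv (fun y => J (u (t, y))) x)
    (hinit : ∀ x ∈ Icc (0 : ℝ) 1, u (0, x) = v0 x)
    (hbc0 : ∀ t ∈ Icc (0 : ℝ) T, ε * deriv (fun y => u (t, y)) 0 - p * J (u (t, 0)) = 0)
    (hbc1 : ∀ t ∈ Icc (0 : ℝ) T, ε * deriv (fun y => u (t, y)) 1 - p * J (u (t, 1)) = 0) :
    IsViscousSolution T p ε v0 u := by
  have hd : Differentiable ℝ u := hsm.differentiable two_ne_zero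
  have hux : ContDiff ℝ 1 (xderiv u) := _root_.contDiff_xderiv (by simpa [one_add_one_eq_two])
  have hut : Continuous (tderiv u) := continuous_tderiv (hsm.of_le one_le_two)
  have hspace : ∀ t x, deriv (fun y => u (t, y)) x = xderiv u (t, x) :=
    fun t x => (hasDerivAt_xderiv (hd _)).deriv
  have hopen : ∀ z ∈ Ioo 0 T ×ˢ Ioo (0 : ℝ) 1,
      tderiv u z = ε * xderiv (xderiv u) z - p * ((1 - 2 * u z) * xderiv u z) := by
    rintro ⟨t, x⟩ ⟨ht, hx⟩
    have hJ : HasDerivAt (fun y => J (u (t, y))) ((1 - 2 * u (t, x)) * xderiv u (t, x)) x :=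
      (hasDerivAt_J _).comp x (hasDerivAt_xderiv (hd (t, x)))
    rw [← (hasDerivAt_tderiv (hd (t, x))).deriv, hpde t ht x hx, funext (hspace t),
      (hasDerivAt_xderiv (hux.differentiable one_ne_zero (t, x))).deriv, hJ.deriv]
  have hclosed : IsClosed {z | tderiv u z
      = ε * xderiv (xderiv u) z - p * ((1 - 2 * u z) * xderiv u z)} := by
    have := continuous_xderiv hux
    have := hux.continuous
    have := hsm.continuous
    exact isClosed_eq hut (by fun_prop)
  refine ⟨hsm, fun t ht x hx => hub _ ⟨ht, hx⟩, fun t ht x hx => ?_, hinit,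
    fun t ht => ?_, fun t ht => ?_⟩
  · have hclosure := closure_minimal hopen hclosed
    rw [closure_prod_eq, closure_Ioo hT.symm, closure_Ioo zero_ne_one] at hclosure
    exact hclosure ⟨ht, hx⟩
  · rw [← hspace, ← sub_eq_zero, hbc0 t ht]
  · rw [← hspace, ← sub_eq_zero, hbc1 t ht]

section EntropyField

variable {F Q : ℝ → ℝ} {ψ : ℝ × ℝ → ℝ}

lemma tderiv_mul_entropy (hu : IsViscousSolution T p ε v0 u) (hF : ContDiff ℝ 1 F)
    (hψ : ContDiff ℝ 1 ψ) (t x : ℝ) :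
    tderiv (fun z => ψ z * F (u z)) (t, x) =
      tderiv ψ (t, x) * F (u (t, x)) + ψ (t, x) * (deriv F (u (t, x)) * tderiv u (t, x)) := by
  have hdF := hF.differentiable one_ne_zero
  have hdu := hu.contDiff_one.differentiable one_ne_zero
  have hdψ := hψ.differentiable one_ne_zero
  exact tderiv_eq (by fun_prop) <| (hasDerivAt_tderiv (hdψ (t, x))).mul
    ((hdF (u (t, x))).hasDerivAt.comp t (hu.hasDerivAt_time t x))

lemma xderiv_mul_entropyFlux (hu : IsViscousSolution T p ε v0 u) (hF : ContDiff ℝ 2 F)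
    (hQ : ContDiff ℝ 1 Q) (hψ : ContDiff ℝ 1 ψ) (t x : ℝ) :
    xderiv (fun z => ψ z * (p * Q (u z) - ε * (deriv F (u z) * xderiv u z))) (t, x) =
      xderiv ψ (t, x) * (p * Q (u (t, x)) - ε * (deriv F (u (t, x)) * xderiv u (t, x))) +
        ψ (t, x) * (p * (deriv Q (u (t, x)) * xderiv u (t, x)) -
          ε * (deriv (deriv F) (u (t, x)) * xderiv u (t, x) * xderiv u (t, x) +
            deriv F (u (t, x)) * xderiv (xderiv u) (t, x))) := by
  have hdF := hF.deriv'.differentiable one_ne_zero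
  have hdQ := hQ.differentiable one_ne_zero
  have hdu := hu.contDiff_one.differentiable one_ne_zero
  have hdux := hu.contDiff_xderiv.differentiable one_ne_zero
  have hdψ := hψ.differentiable one_ne_zero
  have hux := hu.hasDerivAt_space t x
  have hFx : HasDerivAt (fun y => deriv F (u (t, y)))
      (deriv (deriv F) (u (t, x)) * xderiv u (t, x)) x :=
    HasDerivAt.comp (h₂ := deriv F) x (hdF (u (t, x))).hasDerivAt hux
  exact xderiv_eq (by fun_prop) <| (hasDerivAt_xderiv (hdψ (t, x))).mul
    ((((hdQ (u (t, x))).hasDerivAt.comp x hux).const_mul p).sub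
      ((hFx.mul (hu.hasDerivAt_space_xderiv t x)).const_mul ε))

lemma divergence_entropy (hu : IsViscousSolution T p ε v0 u) (hFQ : IsLaxPair F Q)
    (hψ : ContDiff ℝ 1 ψ) {t x : ℝ} (ht : t ∈ Icc 0 T) (hx : x ∈ Icc (0 : ℝ) 1) :
    tderiv (fun z => ψ z * F (u z)) (t, x)
      + xderiv (fun z => ψ z * (p * Q (u z) - ε * (deriv F (u z) * xderiv u z))) (t, x)
    = tderiv ψ (t, x) * F (u (t, x)) + xderiv ψ (t, x) * (p * Q (u (t, x))
        - ε * (deriv F (u (t, x)) * xderiv u (t, x)))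
      - ψ (t, x) * (ε * (deriv (deriv F) (u (t, x)) * xderiv u (t, x) ^ 2)) := by
  obtain ⟨hF, hQ, hQF, -⟩ := hFQ
  rw [hu.tderiv_mul_entropy (hF.of_le one_le_two) hψ,
    hu.xderiv_mul_entropyFlux hF (hQ.of_le one_le_two) hψ, hu.eqn t ht x hx,
    hQF _ (hu.mem t ht x hx)]
  ring

lemma divergence_entropy_le (hu : IsViscousSolution T p ε v0 u) (hε : 0 ≤ ε)
    (hFQ : IsLaxPair F Q) (hψ : ContDiff ℝ 1 ψ) {t x : ℝ} (hψ0 : 0 ≤ ψ (t, x)) (ht : t ∈ Icc 0 T)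
    (hx : x ∈ Icc (0 : ℝ) 1) :
    tderiv (fun z => ψ z * F (u z)) (t, x)
      + xderiv (fun z => ψ z * (p * Q (u z) - ε * (deriv F (u z) * xderiv u z))) (t, x)
    ≤ tderiv ψ (t, x) * F (u (t, x)) + xderiv ψ (t, x) * (p * Q (u (t, x))
        - ε * (deriv F (u (t, x)) * xderiv u (t, x))) := by
  rw [hu.divergence_entropy hFQ hψ ht hx, sub_le_self_iff]
  have := hFQ.2.2.2 _ (hu.mem t ht x hx)
  positivity

lemma contDiff_mul_entropy (hu : IsViscousSolution T p ε v0 u) (hF : ContDiff ℝ 1 F)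
    (hψ : ContDiff ℝ 1 ψ) : ContDiff ℝ 1 fun z => ψ z * F (u z) :=
  hψ.mul (hF.comp hu.contDiff_one)

lemma contDiff_mul_entropyFlux (hu : IsViscousSolution T p ε v0 u) (hF : ContDiff ℝ 2 F)
    (hQ : ContDiff ℝ 1 Q) (hψ : ContDiff ℝ 1 ψ) :
    ContDiff ℝ 1 fun z => ψ z * (p * Q (u z) - ε * (deriv F (u z) * xderiv u z)) := by
  have : ContDiff ℝ 1 (deriv F) := hF.deriv'
  have := hu.contDiff_one
  have := hu.contDiff_xderiv
  fun_prop

end EntropyField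

end IsViscousSolution

/-! ### Continuity at the initial time -/

/-- The primitive of the flux `J` vanishing at `0`. It corrects the energy flux of `(u - v0)²` so
that the divergence no longer contains the transport term `J(u) ∂ₓu`. -/
noncomputable def fluxPrimitive (a : ℝ) : ℝ := a ^ 2 / 2 - a ^ 3 / 3

lemma hasDerivAt_fluxPrimitive (a : ℝ) : HasDerivAt fluxPrimitive (J a) a := by
  refine (((hasDerivAt_pow 2 a).div_const 2).sub ((hasDerivAt_pow 3 a).div_const 3)).congr_deriv ?_
  simp only [J]; push_cast; ring

lemma contDiff_fluxPrimitive {n : WithTop ℕ∞} : ContDiff ℝ n fluxPrimitive := by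
  unfold fluxPrimitive; fun_prop

lemma fluxPrimitive_mem_Icc {a : ℝ} (ha : a ∈ Icc (0 : ℝ) 1) :
    fluxPrimitive a ∈ Icc (0 : ℝ) (1 / 2) := by
  have hsq : 0 ≤ a ^ 2 := sq_nonneg a
  have hsq_le : a ^ 2 ≤ 1 := pow_le_one₀ ha.1 ha.2
  have hcube_le : a ^ 3 ≤ a ^ 2 := pow_le_pow_of_le_one ha.1 ha.2 (by norm_num)
  have hcube : 0 ≤ a ^ 3 := pow_nonneg ha.1 3
  constructor <;> unfold fluxPrimitive <;> linarith

/-- The flux balancing the energy density `(u - v0)²` of a viscous solution. -/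
noncomputable def energyFlux (p ε : ℝ) (v0 : ℝ → ℝ) (u : ℝ × ℝ → ℝ) (z : ℝ × ℝ) : ℝ :=
  -2 * ((u z - v0 z.2) * (ε * xderiv u z - p * J (u z))) - 2 * p * fluxPrimitive (u z)

namespace IsViscousSolution

variable {T p ε : ℝ} {v0 : ℝ → ℝ} {u : ℝ × ℝ → ℝ} {B t x : ℝ}

lemma contDiff_sq_sub_init (hu : IsViscousSolution T p ε v0 u) (hv0 : ContDiff ℝ 1 v0) :
    ContDiff ℝ 1 fun z : ℝ × ℝ => (u z - v0 z.2) ^ 2 := by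
  have := hu.contDiff_one
  fun_prop

lemma contDiff_energyFlux (hu : IsViscousSolution T p ε v0 u) (hv0 : ContDiff ℝ 1 v0) :
    ContDiff ℝ 1 (energyFlux p ε v0 u) := by
  have := hu.contDiff_one
  have := hu.contDiff_xderiv
  have : ContDiff ℝ 1 J := contDiff_J
  have : ContDiff ℝ 1 fluxPrimitive := contDiff_fluxPrimitive
  unfold energyFlux
  fun_prop

lemma divergence_energy (hu : IsViscousSolution T p ε v0 u) (hv0 : ContDiff ℝ 1 v0)
    (ht : t ∈ Icc 0 T) (hx : x ∈ Icc (0 : ℝ) 1) :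
    tderiv (fun z => (u z - v0 z.2) ^ 2) (t, x) + xderiv (energyFlux p ε v0 u) (t, x) =
      -2 * ε * (xderiv u (t, x) ^ 2 - deriv v0 x * xderiv u (t, x))
        - 2 * p * (deriv v0 x * J (u (t, x))) := by
  have hdens : tderiv (fun z => (u z - v0 z.2) ^ 2) (t, x)
      = 2 * (u (t, x) - v0 x) * tderiv u (t, x) := by
    refine tderiv_eq ((hu.contDiff_sq_sub_init hv0).differentiable one_ne_zero _) ?_
    exact (((hu.hasDerivAt_time t x).sub_const (v0 x)).pow 2).congr_deriv (by simp)
  have hflux : xderiv (energyFlux p ε v0 u) (t, x) =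
      -2 * ((xderiv u (t, x) - deriv v0 x) * (ε * xderiv u (t, x) - p * J (u (t, x)))
        + (u (t, x) - v0 x)
          * (ε * xderiv (xderiv u) (t, x) - p * ((1 - 2 * u (t, x)) * xderiv u (t, x))))
        - 2 * p * (J (u (t, x)) * xderiv u (t, x)) := by
    have hux := hu.hasDerivAt_space t x
    have hv := (hv0.differentiable one_ne_zero x).hasDerivAt
    refine xderiv_eq ((hu.contDiff_energyFlux hv0).differentiable one_ne_zero _) ?_
    exact (((hux.sub hv).mul (((hu.hasDerivAt_space_xderiv t x).const_mul ε).sub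
      ((hu.hasDerivAt_J_space t x).const_mul p))).const_mul (-2)).sub
        (((hasDerivAt_fluxPrimitive _).comp x hux).const_mul (2 * p))
  rw [hdens, hflux, hu.eqn t ht x hx]
  ring

lemma divergence_energy_le (hu : IsViscousSolution T p ε v0 u) (hε : 0 ≤ ε) (hp : 0 ≤ p)
    (hv0 : ContDiff ℝ 1 v0) (ht : t ∈ Icc 0 T) (hx : x ∈ Icc (0 : ℝ) 1) (hB : |deriv v0 x| ≤ B) :
    tderiv (fun z => (u z - v0 z.2) ^ 2) (t, x) + xderiv (energyFlux p ε v0 u) (t, x)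
      ≤ (ε * B ^ 2 + p * B) / 2 := by
  have hviscous : ε * (-2 * (xderiv u (t, x) ^ 2 - deriv v0 x * xderiv u (t, x)))
      ≤ ε * (B ^ 2 / 2) := by
    have := sq_le_sq.2 (hB.trans (le_abs_self B))
    gcongr
    nlinarith [sq_nonneg (2 * xderiv u (t, x) - deriv v0 x)]
  have htransport : p * (-deriv v0 x * J (u (t, x))) ≤ p * (B * (1 / 4)) := by
    have hJ := J_nonneg (hu.mem t ht x hx)
    have hJ' := J_le (u (t, x))
    have hB0 := (abs_nonneg _).trans hB
    have := (neg_le_abs _).trans hB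
    gcongr
  rw [hu.divergence_energy hv0 ht hx]
  linarith

lemma energyFlux_left_nonpos (hu : IsViscousSolution T p ε v0 u) (hp : 0 ≤ p)
    (ht : t ∈ Icc 0 T) : energyFlux p ε v0 u (t, 0) ≤ 0 := by
  have := mul_nonneg hp (fluxPrimitive_mem_Icc (hu.mem t ht 0 (by simp))).1
  simp only [energyFlux, hu.flux_left t ht]
  linarith

lemma le_energyFlux_right (hu : IsViscousSolution T p ε v0 u) (hp : 0 ≤ p)
    (ht : t ∈ Icc 0 T) : -p ≤ energyFlux p ε v0 u (t, 1) := by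
  have := mul_le_mul_of_nonneg_left (fluxPrimitive_mem_Icc (hu.mem t ht 1 (by simp))).2 hp
  simp only [energyFlux, hu.flux_right t ht]
  linarith

lemma integral_sq_sub_init_le (hu : IsViscousSolution T p ε v0 u) (hε : 0 ≤ ε) (hp : 0 ≤ p)
    (hv0 : ContDiff ℝ 1 v0) (hB : ∀ x ∈ Icc (0 : ℝ) 1, |deriv v0 x| ≤ B) (ht : t ∈ Icc 0 T) :
    ∫ x in (0 : ℝ)..1, (u (t, x) - v0 x) ^ 2 ≤ ((ε * B ^ 2 + p * B) / 2 + p) * t := by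
  have hsub : Icc 0 t ⊆ Icc 0 T := Icc_subset_Icc_right ht.2
  have hg := hu.contDiff_energyFlux hv0
  have hgi (c : ℝ) : IntervalIntegrable (fun s => energyFlux p ε v0 u (s, c)) volume 0 t :=
    (hg.continuous.comp (.prodMk_left c)).intervalIntegrable _ _
  have hbalance := flux_le_of_divergence_le (hu.contDiff_sq_sub_init hv0) hg ht.1 zero_le_one
    fun s hs x hx => hu.divergence_energy_le hε hp hv0 (hsub hs) hx (hB x hx)
  have hinit : ∫ x in (0 : ℝ)..1, (u (0, x) - v0 x) ^ 2 = 0 :=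
    integral_eq_zero_of_eqOn_Icc zero_le_one fun x hx => by simp [hu.initial x hx]
  have hleft := integral_le_mul_of_le ht.1 (hgi 0)
    fun s hs => hu.energyFlux_left_nonpos hp (hsub hs)
  have hright := mul_le_integral_of_le ht.1 (hgi 1)
    fun s hs => hu.le_energyFlux_right hp (hsub hs)
  linarith

end IsViscousSolution

/-! ### The uniform bound on the total variation in space -/

lemma hasDerivAt_comp_negPart {k k' : ℝ → ℝ} (hk : ∀ s, 0 ≤ s → HasDerivAt k (k' s) s)
    (h0 : k' 0 = 0) (z : ℝ) : HasDerivAt (fun y => k y⁻) (-k' z⁻) z := by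
  have hleft {y : ℝ} (hy : y ≤ 0) : HasDerivAt (fun y => k (-y)) (-k' y⁻) y := by
    rw [negPart_eq_neg.2 hy]
    exact ((hk (-y) (neg_nonneg.2 hy)).comp y (hasDerivAt_neg y)).congr_deriv (by ring)
  have hright {y : ℝ} (hy : 0 ≤ y) : HasDerivAt (fun _ => k 0) (-k' y⁻) y := by
    rw [negPart_eq_zero.2 hy, h0, neg_zero]
    exact hasDerivAt_const y (k 0)
  rcases lt_trichotomy z 0 with hz | rfl | hz
  · refine (hleft hz.le).congr_of_eventuallyEq ?_
    filter_upwards [gt_mem_nhds hz] with y hy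
    rw [negPart_eq_neg.2 hy.le]
  · have hl : HasDerivWithinAt (fun y => k y⁻) (-k' 0⁻) (Iic 0) 0 :=
      (hleft le_rfl).hasDerivWithinAt.congr (fun y hy => by rw [negPart_eq_neg.2 hy]) (by simp)
    have hr : HasDerivWithinAt (fun y => k y⁻) (-k' 0⁻) (Ici 0) 0 :=
      (hright le_rfl).hasDerivWithinAt.congr (fun y hy => by rw [negPart_eq_zero.2 hy]) (by simp)
    simpa using hl.union hr
  · refine (hright hz.le).congr_of_eventuallyEq ?_
    filter_upwards [lt_mem_nhds hz] with y hy
    rw [negPart_eq_zero.2 hy.le]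

/-- A convex `C²` approximation of the negative part, accurate up to `2 δ`. The powers are chosen so
that the first two derivatives vanish at `0` and the second one is `O(δ / z²)`. -/
noncomputable def regNegPart (δ z : ℝ) : ℝ := z⁻ ^ 3 / (z⁻ + δ) ^ 2

/-- The derivative of `regNegPart`. -/
noncomputable def regNegPartDeriv (δ z : ℝ) : ℝ := -((z⁻ ^ 3 + 3 * z⁻ ^ 2 * δ) / (z⁻ + δ) ^ 3)

/-- The second derivative of `regNegPart`. -/
noncomputable def regNegPartDeriv₂ (δ z : ℝ) : ℝ := 6 * δ ^ 2 * z⁻ / (z⁻ + δ) ^ 4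

section RegNegPart

variable {δ : ℝ}

lemma hasDerivAt_regNegPart (hδ : 0 < δ) (z : ℝ) :
    HasDerivAt (regNegPart δ) (regNegPartDeriv δ z) z := by
  refine hasDerivAt_comp_negPart (k := fun s => s ^ 3 / (s + δ) ^ 2)
    (k' := fun s => (s ^ 3 + 3 * s ^ 2 * δ) / (s + δ) ^ 3) (fun s hs => ?_) (by simp) z
  have hne : s + δ ≠ 0 := by positivity
  refine ((hasDerivAt_pow 3 s).div (((hasDerivAt_id s).add_const δ).pow 2)
    (pow_ne_zero 2 hne)).congr_deriv ?_
  simp only [id, Pi.pow_apply]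
  field_simp
  ring

lemma hasDerivAt_regNegPartDeriv (hδ : 0 < δ) (z : ℝ) :
    HasDerivAt (regNegPartDeriv δ) (regNegPartDeriv₂ δ z) z := by
  rw [← neg_neg (regNegPartDeriv₂ δ z)]
  refine (hasDerivAt_comp_negPart (k := fun s => (s ^ 3 + 3 * s ^ 2 * δ) / (s + δ) ^ 3)
    (k' := fun s => 6 * δ ^ 2 * s / (s + δ) ^ 4) (fun s hs => ?_) (by simp) z).fun_neg
  have hne : s + δ ≠ 0 := by positivity
  refine (((hasDerivAt_pow 3 s).add (((hasDerivAt_pow 2 s).const_mul 3).mul_const δ)).div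
    (((hasDerivAt_id s).add_const δ).pow 3) (pow_ne_zero 3 hne)).congr_deriv ?_
  simp only [id, Pi.pow_apply, Pi.add_apply]
  field_simp
  ring

lemma continuous_regNegPartDeriv₂ (hδ : 0 < δ) : Continuous (regNegPartDeriv₂ δ) := by
  have : Continuous fun z : ℝ => z⁻ := continuous_neg.sup continuous_const
  refine Continuous.div (by fun_prop) (by fun_prop) fun z => ?_
  have := negPart_nonneg z
  positivity

lemma contDiff_regNegPartDeriv (hδ : 0 < δ) : ContDiff ℝ 1 (regNegPartDeriv δ) :=
  contDiff_one_iff_deriv.2 ⟨fun z => (hasDerivAt_regNegPartDeriv hδ z).differentiableAt, by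
    rw [funext fun z => (hasDerivAt_regNegPartDeriv hδ z).deriv]
    exact continuous_regNegPartDeriv₂ hδ⟩

lemma contDiff_regNegPart (hδ : 0 < δ) : ContDiff ℝ 1 (regNegPart δ) :=
  contDiff_one_iff_deriv.2 ⟨fun z => (hasDerivAt_regNegPart hδ z).differentiableAt, by
    rw [funext fun z => (hasDerivAt_regNegPart hδ z).deriv]
    exact (contDiff_regNegPartDeriv hδ).continuous⟩

lemma regNegPartDeriv_of_nonneg {z : ℝ} (hz : 0 ≤ z) : regNegPartDeriv δ z = 0 := by
  simp [regNegPartDeriv, negPart_eq_zero.2 hz]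

lemma regNegPartDeriv₂_nonneg (δ z : ℝ) : 0 ≤ regNegPartDeriv₂ δ z := by
  have := negPart_nonneg z
  unfold regNegPartDeriv₂
  positivity

lemma regNegPartDeriv₂_mul_sq_le (hδ : 0 < δ) (z : ℝ) : regNegPartDeriv₂ δ z * z ^ 2 ≤ 6 * δ := by
  rcases le_total 0 z with hz | hz
  · simpa [regNegPartDeriv₂, negPart_eq_zero.2 hz] using hδ.le
  obtain ⟨s, rfl⟩ : ∃ s, z = -s := ⟨-z, (neg_neg z).symm⟩
  have hs : 0 ≤ s := neg_nonpos.1 hz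
  rw [regNegPartDeriv₂, negPart_eq_neg.2 hz, neg_neg, div_mul_eq_mul_div,
    div_le_iff₀ (by positivity)]
  calc 6 * δ ^ 2 * s * (-s) ^ 2 = 6 * δ * (δ * s ^ 3) := by ring
    _ ≤ 6 * δ * ((s + δ) * (s + δ) ^ 3) := by gcongr <;> linarith
    _ = 6 * δ * (s + δ) ^ 4 := by ring

lemma regNegPart_le_abs (hδ : 0 < δ) (z : ℝ) : regNegPart δ z ≤ |z| := by
  have := negPart_nonneg z
  have hs_le : z⁻ ≤ |z| := by linarith [posPart_nonneg z, posPart_add_negPart z]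
  refine le_trans ?_ hs_le
  rw [regNegPart, div_le_iff₀ (by positivity), pow_succ']
  gcongr
  linarith

lemma abs_le_add_regNegPart (hδ : 0 < δ) (z : ℝ) : |z| ≤ z + 2 * regNegPart δ z + 4 * δ := by
  have hs := negPart_nonneg z
  have hclose : z⁻ - 2 * δ ≤ regNegPart δ z := by
    rw [regNegPart, le_div_iff₀ (by positivity)]
    nlinarith [mul_nonneg hs hδ.le, pow_pos hδ 3, mul_nonneg hs (sq_nonneg δ)]
  linarith [posPart_add_negPart z, posPart_sub_negPart z]

end RegNegPart

namespace IsViscousSolution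

variable {T p ε δ : ℝ} {v0 : ℝ → ℝ} {u : ℝ × ℝ → ℝ} {B t x : ℝ}

lemma xderiv_init (hu : IsViscousSolution T p ε v0 u) (hv0 : DifferentiableAt ℝ v0 x)
    (hx : x ∈ Icc (0 : ℝ) 1) : xderiv u (0, x) = deriv v0 x :=
  (uniqueDiffOn_Icc zero_lt_one x hx).eq_deriv _ (hu.hasDerivAt_space 0 x).hasDerivWithinAt
    (hv0.hasDerivAt.hasDerivWithinAt.congr hu.initial (hu.initial x hx))

lemma integral_xderiv (hu : IsViscousSolution T p ε v0 u) (t : ℝ) :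
    ∫ x in (0 : ℝ)..1, xderiv u (t, x) = u (t, 1) - u (t, 0) :=
  integral_eq_sub_of_hasDerivAt (fun x _ => hu.hasDerivAt_space t x)
    ((hu.contDiff_xderiv.continuous.comp (.prodMk_right t)).intervalIntegrable _ _)

lemma divergence_regNegPart (hu : IsViscousSolution T p ε v0 u) (hδ : 0 < δ) (t x : ℝ) :
    tderiv (fun z => regNegPart δ (xderiv u z)) (t, x)
        + xderiv (fun z => -(regNegPartDeriv δ (xderiv u z) * tderiv u z)) (t, x) =
      regNegPartDeriv₂ δ (xderiv u (t, x))
        * -(xderiv (xderiv u) (t, x) * tderiv u (t, x)) := by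
  have hdη := (contDiff_regNegPart hδ).differentiable one_ne_zero
  have hdη' := (contDiff_regNegPartDeriv hδ).differentiable one_ne_zero
  have hdux := hu.contDiff_xderiv.differentiable one_ne_zero
  have hdut := hu.contDiff_tderiv.differentiable one_ne_zero
  have htime : tderiv (fun z => regNegPart δ (xderiv u z)) (t, x)
      = regNegPartDeriv δ (xderiv u (t, x)) * tderiv (xderiv u) (t, x) :=
    tderiv_eq (by fun_prop)
      ((hasDerivAt_regNegPart hδ _).comp t (hasDerivAt_tderiv (hdux (t, x))))
  have hspace : xderiv (fun z => -(regNegPartDeriv δ (xderiv u z) * tderiv u z)) (t, x)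
      = -(regNegPartDeriv₂ δ (xderiv u (t, x)) * xderiv (xderiv u) (t, x) * tderiv u (t, x)
        + regNegPartDeriv δ (xderiv u (t, x)) * xderiv (tderiv u) (t, x)) := by
    have hη'x : HasDerivAt (fun y => regNegPartDeriv δ (xderiv u (t, y)))
        (regNegPartDeriv₂ δ (xderiv u (t, x)) * xderiv (xderiv u) (t, x)) x :=
      (hasDerivAt_regNegPartDeriv hδ _).comp x (hu.hasDerivAt_space_xderiv t x)
    exact xderiv_eq (by fun_prop) (hη'x.mul (hasDerivAt_xderiv (hdut (t, x)))).fun_neg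
  rw [htime, hspace, tderiv_xderiv_comm hu.contDiff]
  ring

lemma neg_xderiv_xderiv_mul_tderiv_le (hu : IsViscousSolution T p ε v0 u) (hε : 0 < ε)
    (ht : t ∈ Icc 0 T) (hx : x ∈ Icc (0 : ℝ) 1) :
    -(xderiv (xderiv u) (t, x) * tderiv u (t, x)) ≤ p ^ 2 / (4 * ε) * xderiv u (t, x) ^ 2 := by
  have hmem := hu.mem t ht x hx
  have hspeed : (1 - 2 * u (t, x)) ^ 2 ≤ 1 := by nlinarith [hmem.1, hmem.2]
  have hbound : p ^ 2 * xderiv u (t, x) ^ 2 * (1 - 2 * u (t, x)) ^ 2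
      ≤ p ^ 2 * xderiv u (t, x) ^ 2 * 1 := by gcongr
  rw [hu.eqn t ht x hx, div_mul_eq_mul_div, le_div_iff₀ (by positivity)]
  nlinarith [sq_nonneg (2 * ε * xderiv (xderiv u) (t, x)
    - p * (1 - 2 * u (t, x)) * xderiv u (t, x))]

lemma divergence_regNegPart_le (hu : IsViscousSolution T p ε v0 u) (hε : 0 < ε) (hδ : 0 < δ)
    (ht : t ∈ Icc 0 T) (hx : x ∈ Icc (0 : ℝ) 1) :
    tderiv (fun z => regNegPart δ (xderiv u z)) (t, x)
        + xderiv (fun z => -(regNegPartDeriv δ (xderiv u z) * tderiv u z)) (t, x)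
      ≤ δ * (3 / 2 * p ^ 2 / ε) :=
  calc
    _ ≤ regNegPartDeriv₂ δ (xderiv u (t, x)) * (p ^ 2 / (4 * ε) * xderiv u (t, x) ^ 2) := by
        rw [hu.divergence_regNegPart hδ]
        exact mul_le_mul_of_nonneg_left (hu.neg_xderiv_xderiv_mul_tderiv_le hε ht hx)
          (regNegPartDeriv₂_nonneg δ _)
    _ = p ^ 2 / (4 * ε) * (regNegPartDeriv₂ δ (xderiv u (t, x)) * xderiv u (t, x) ^ 2) := by ring
    _ ≤ p ^ 2 / (4 * ε) * (6 * δ) :=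
        mul_le_mul_of_nonneg_left (regNegPartDeriv₂_mul_sq_le hδ _) (by positivity)
    _ = δ * (3 / 2 * p ^ 2 / ε) := by field_simp; ring

lemma xderiv_boundary_nonneg (hu : IsViscousSolution T p ε v0 u) (hε : 0 < ε) (hp : 0 ≤ p)
    (ht : t ∈ Icc 0 T) : 0 ≤ xderiv u (t, 0) ∧ 0 ≤ xderiv u (t, 1) :=
  ⟨nonneg_of_mul_nonneg_right (hu.flux_left t ht ▸ mul_nonneg hp
      (J_nonneg (hu.mem t ht 0 (by simp)))) hε,
    nonneg_of_mul_nonneg_right (hu.flux_right t ht ▸ mul_nonneg hp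
      (J_nonneg (hu.mem t ht 1 (by simp)))) hε⟩

lemma integral_regNegPart_xderiv_le (hu : IsViscousSolution T p ε v0 u) (hε : 0 < ε) (hp : 0 ≤ p)
    (hδ : 0 < δ) (hv0 : Differentiable ℝ v0) (hB : ∀ x ∈ Icc (0 : ℝ) 1, |deriv v0 x| ≤ B)
    (ht : t ∈ Icc 0 T) :
    ∫ x in (0 : ℝ)..1, regNegPart δ (xderiv u (t, x)) ≤ B + δ * (3 / 2 * p ^ 2 / ε) * t := by
  have hsub : Icc 0 t ⊆ Icc 0 T := Icc_subset_Icc_right ht.2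
  have hf : ContDiff ℝ 1 fun z => regNegPart δ (xderiv u z) :=
    (contDiff_regNegPart hδ).comp hu.contDiff_xderiv
  have hg : ContDiff ℝ 1 fun z => -(regNegPartDeriv δ (xderiv u z) * tderiv u z) :=
    (((contDiff_regNegPartDeriv hδ).comp hu.contDiff_xderiv).mul hu.contDiff_tderiv).neg
  have hbalance := flux_le_of_divergence_le hf hg ht.1 zero_le_one
    fun s hs x hx => hu.divergence_regNegPart_le hε hδ (hsub hs) hx
  have hleft : ∫ s in 0..t, -(regNegPartDeriv δ (xderiv u (s, 0)) * tderiv u (s, 0)) = 0 :=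
    integral_eq_zero_of_eqOn_Icc ht.1 fun s hs => by
      simp [regNegPartDeriv_of_nonneg (hu.xderiv_boundary_nonneg hε hp (hsub hs)).1]
  have hright : ∫ s in 0..t, -(regNegPartDeriv δ (xderiv u (s, 1)) * tderiv u (s, 1)) = 0 :=
    integral_eq_zero_of_eqOn_Icc ht.1 fun s hs => by
      simp [regNegPartDeriv_of_nonneg (hu.xderiv_boundary_nonneg hε hp (hsub hs)).2]
  have hinit : ∫ x in (0 : ℝ)..1, regNegPart δ (xderiv u (0, x)) ≤ B * (1 - 0) :=
    integral_le_mul_of_le zero_le_one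
      ((hf.continuous.comp (.prodMk_right 0)).intervalIntegrable _ _) fun x hx => by
        rw [hu.xderiv_init (hv0 x) hx]
        exact (regNegPart_le_abs hδ _).trans (hB x hx)
  linarith

lemma integral_abs_xderiv_le_add (hu : IsViscousSolution T p ε v0 u) (hε : 0 < ε) (hp : 0 ≤ p)
    (hδ : 0 < δ) (hv0 : Differentiable ℝ v0) (hB : ∀ x ∈ Icc (0 : ℝ) 1, |deriv v0 x| ≤ B)
    (ht : t ∈ Icc 0 T) :
    ∫ x in (0 : ℝ)..1, |xderiv u (t, x)| ≤ 1 + 2 * B + δ * (3 * p ^ 2 / ε * t + 4) := by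
  have hux : Continuous fun x => xderiv u (t, x) :=
    hu.contDiff_xderiv.continuous.comp (.prodMk_right t)
  have hη : Continuous fun x => regNegPart δ (xderiv u (t, x)) :=
    (contDiff_regNegPart hδ).continuous.comp hux
  have hsum : Continuous fun x => xderiv u (t, x) + 2 * regNegPart δ (xderiv u (t, x)) :=
    hux.add (hη.const_mul 2)
  have hη_le := hu.integral_regNegPart_xderiv_le hε hp hδ hv0 hB ht
  have hle : u (t, 1) - u (t, 0) ≤ 1 := by
    linarith [(hu.mem t ht 1 (by simp)).2, (hu.mem t ht 0 (by simp)).1]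
  calc ∫ x in (0 : ℝ)..1, |xderiv u (t, x)|
      ≤ ∫ x in (0 : ℝ)..1, (xderiv u (t, x) + 2 * regNegPart δ (xderiv u (t, x)) + 4 * δ) :=
        integral_mono zero_le_one (hux.abs.intervalIntegrable _ _)
          ((hsum.add continuous_const).intervalIntegrable _ _)
          fun x => abs_le_add_regNegPart hδ _
    _ = u (t, 1) - u (t, 0) + 2 * (∫ x in (0 : ℝ)..1, regNegPart δ (xderiv u (t, x))) + 4 * δ := by
        rw [intervalIntegral.integral_add (hsum.intervalIntegrable _ _) intervalIntegrable_const,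
          intervalIntegral.integral_add (hux.intervalIntegrable _ _)
            ((hη.const_mul 2).intervalIntegrable _ _),
          hu.integral_xderiv, intervalIntegral.integral_const_mul]
        simp
    _ ≤ 1 + 2 * (B + δ * (3 / 2 * p ^ 2 / ε) * t) + 4 * δ := by gcongr
    _ = 1 + 2 * B + δ * (3 * p ^ 2 / ε * t + 4) := by ring

lemma integral_abs_xderiv_le (hu : IsViscousSolution T p ε v0 u) (hε : 0 < ε) (hp : 0 ≤ p)
    (hv0 : Differentiable ℝ v0) (hB : ∀ x ∈ Icc (0 : ℝ) 1, |deriv v0 x| ≤ B) (ht : t ∈ Icc 0 T) :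
    ∫ x in (0 : ℝ)..1, |xderiv u (t, x)| ≤ 1 + 2 * B := by
  have hlim : Tendsto (fun δ => 1 + 2 * B + δ * (3 * p ^ 2 / ε * t + 4)) (𝓝[>] 0)
      (𝓝 (1 + 2 * B + 0 * (3 * p ^ 2 / ε * t + 4))) :=
    (Continuous.tendsto (by fun_prop) 0).mono_left nhdsWithin_le_nhds
  rw [zero_mul, add_zero] at hlim
  exact ge_of_tendsto hlim <| eventually_nhdsWithin_of_forall fun δ hδ =>
    hu.integral_abs_xderiv_le_add hε hp hδ hv0 hB ht

end IsViscousSolution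

/-! ### Comparison of the primitives of two viscous solutions -/

lemma nonpos_of_isLocalMax_of_hasDerivAt {f f' : ℝ → ℝ} {x₀ c : ℝ} (h : IsLocalMax f x₀)
    (hf : ∀ x, HasDerivAt f (f' x) x) (hf' : HasDerivAt f' c x₀) : c ≤ 0 := by
  obtain rfl : deriv f = f' := funext fun x => (hf x).deriv
  by_contra! hc
  have hmin : IsLocalMin f x₀ := isLocalMin_of_deriv_deriv_pos (hf'.deriv.symm ▸ hc)
    h.deriv_eq_zero (hf x₀).continuousAt
  have hconst : f =ᶠ[𝓝 x₀] fun _ => f x₀ := by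
    filter_upwards [h, hmin] with x hle hge using le_antisymm hle hge
  have hderiv : deriv f =ᶠ[𝓝 x₀] fun _ => 0 := by simpa using hconst.deriv
  exact hc.ne' (hf'.unique ((hasDerivAt_const x₀ (0 : ℝ)).congr_of_eventuallyEq hderiv))

lemma deriv_of_isLocalMax_sub_sq {f f' : ℝ → ℝ} {α c f'' x₀ : ℝ} (hα : α ≠ 0)
    (h : IsLocalMax (fun x => f x - (x - c) ^ 2 / (2 * α)) x₀)
    (hf : ∀ x, HasDerivAt f (f' x) x) (hf' : HasDerivAt f' f'' x₀) :
    f' x₀ = (x₀ - c) / α ∧ f'' ≤ 1 / α := by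
  have hsq (x : ℝ) : HasDerivAt (fun x => (x - c) ^ 2 / (2 * α)) ((x - c) / α) x := by
    refine ((((hasDerivAt_id x).sub_const c).pow 2).div_const (2 * α)).congr_deriv ?_
    simp only [id]
    field_simp
    simp [mul_comm]
  have hlin : HasDerivAt (fun x => (x - c) / α) (1 / α) x₀ :=
    ((hasDerivAt_id x₀).sub_const c).div_const α
  exact ⟨sub_eq_zero.1 (h.hasDerivAt_eq_zero ((hf x₀).sub (hsq x₀))),
    sub_nonpos.1 (nonpos_of_isLocalMax_of_hasDerivAt h (fun x => (hf x).sub (hsq x))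
      (hf'.sub hlin))⟩

lemma nonneg_of_hasDerivWithinAt_of_isMaxOn_Icc {f : ℝ → ℝ} {a b c t : ℝ} (ht : t ∈ Ioc a b)
    (hf : HasDerivWithinAt f c (Icc a b) t) (h : IsMaxOn f (Icc a b) t) : 0 ≤ c := by
  have hseg : segment ℝ t a ⊆ Icc a b :=
    (convex_Icc a b).segment_subset (Ioc_subset_Icc_self ht)
      (left_mem_Icc.2 (ht.1.le.trans ht.2))
  have hdir := h.localize.hasFDerivWithinAt_nonpos hf.hasFDerivWithinAt
    (sub_mem_posTangentConeAt_of_segment_subset hseg)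
  simp only [ContinuousLinearMap.toSpanSingleton_apply, smul_eq_mul] at hdir
  exact nonneg_of_mul_nonpos_right hdir (sub_neg.2 ht.1)

lemma abs_sub_sq_div_le {α : ℝ} (hα : 0 < α) (d : ℝ) : |d| - d ^ 2 / (2 * α) ≤ α / 2 := by
  rw [← sq_abs, sub_le_iff_le_add, ← sub_le_iff_le_add', le_div_iff₀ (by positivity)]
  nlinarith [sq_nonneg (|d| - α)]

lemma integral_sq_deriv_le {f f' f'' : ℝ → ℝ} {a b C : ℝ} (hab : a ≤ b)
    (hf : ∀ x, HasDerivAt f (f' x) x) (hf' : ∀ x, HasDerivAt f' (f'' x) x)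
    (hf'' : Continuous f'') (ha : f a = 0) (hb : f b = 0) (hC : ∀ x ∈ Icc a b, |f x| ≤ C) :
    ∫ x in a..b, f' x ^ 2 ≤ C * ∫ x in a..b, |f'' x| := by
  have hcf : Continuous f := continuous_iff_continuousAt.2 fun x => (hf x).continuousAt
  have hcf' : Continuous f' := continuous_iff_continuousAt.2 fun x => (hf' x).continuousAt
  have hparts := integral_mul_deriv_eq_deriv_mul (a := a) (b := b) (fun x _ => hf' x)
    (fun x _ => hf x) (hf''.intervalIntegrable _ _) (hcf'.intervalIntegrable _ _)
  calc ∫ x in a..b, f' x ^ 2 = ∫ x in a..b, -(f'' x * f x) := by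
        simp only [sq, hparts, ha, hb, intervalIntegral.integral_neg]
        ring
    _ ≤ ∫ x in a..b, C * |f'' x| := by
        refine integral_mono_on hab ((hf''.mul hcf).neg.intervalIntegrable _ _)
          ((hf''.abs.const_mul C).intervalIntegrable _ _) fun x hx => ?_
        calc -(f'' x * f x) ≤ |f x| * |f'' x| := by
              rw [mul_comm, ← abs_mul]
              exact neg_le_abs _
          _ ≤ C * |f'' x| := by gcongr; exact hC x hx
    _ = C * ∫ x in a..b, |f'' x| := intervalIntegral.integral_const_mul _ _

/-- The primitive in space, vanishing at `x = 0`. It turns the conservation law into an equation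
obeying the maximum principle. -/
noncomputable def spacePrimitive (u : ℝ × ℝ → ℝ) (z : ℝ × ℝ) : ℝ := ∫ y in (0 : ℝ)..z.2, u (z.1, y)

lemma spacePrimitive_zero (u : ℝ × ℝ → ℝ) (t : ℝ) : spacePrimitive u (t, 0) = 0 :=
  integral_same

/-- The penalised gap `U(t,x) - V(t,y) - (x - y)² / (2α) - K t` of the primitives of `u` and `v`,
used for comparing them by doubling the space variable. -/
noncomputable def doubledGap (u v : ℝ × ℝ → ℝ) (α K : ℝ) (q : ℝ × ℝ × ℝ) : ℝ :=
  spacePrimitive u (q.1, q.2.1) - spacePrimitive v (q.1, q.2.2) - (q.2.1 - q.2.2) ^ 2 / (2 * α)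
    - K * q.1

namespace IsViscousSolution

variable {T p ε δ : ℝ} {v0 : ℝ → ℝ} {u v : ℝ × ℝ → ℝ} {α B K t x y : ℝ}

lemma continuous_space (hu : IsViscousSolution T p ε v0 u) (t : ℝ) : Continuous fun x => u (t, x) :=
  hu.contDiff.continuous.comp (.prodMk_right t)

lemma continuous_spacePrimitive (hu : IsViscousSolution T p ε v0 u) :
    Continuous (spacePrimitive u) :=
  continuous_parametric_primitive_of_continuous (f := fun t x => u (t, x)) hu.contDiff.continuous

lemma hasDerivAt_spacePrimitive (hu : IsViscousSolution T p ε v0 u) (t x : ℝ) :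
    HasDerivAt (fun y => spacePrimitive u (t, y)) (u (t, x)) x :=
  ((hu.continuous_space t).integral_hasStrictDerivAt 0 x).hasDerivAt

lemma spacePrimitive_sub_mem_Icc (hu : IsViscousSolution T p ε v0 u) (ht : t ∈ Icc 0 T)
    (hx : 0 ≤ x) (hxy : x ≤ y) (hy : y ≤ 1) :
    spacePrimitive u (t, y) - spacePrimitive u (t, x) ∈ Icc 0 (y - x) := by
  have hi (a b : ℝ) : IntervalIntegrable (fun x => u (t, x)) volume a b :=
    (hu.continuous_space t).intervalIntegrable a b
  have hmem : ∀ s ∈ Icc x y, u (t, s) ∈ Icc (0 : ℝ) 1 :=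
    fun s hs => hu.mem t ht s ⟨hx.trans hs.1, hs.2.trans hy⟩
  have heq : spacePrimitive u (t, y) - spacePrimitive u (t, x) = ∫ s in x..y, u (t, s) :=
    integral_interval_sub_left (hi _ _) (hi _ _)
  rw [heq]
  refine ⟨intervalIntegral.integral_nonneg hxy fun s hs => (hmem s hs).1, ?_⟩
  simpa using integral_le_mul_of_le hxy (hi _ _) fun s hs => (hmem s hs).2

lemma spacePrimitive_sub_le_abs (hu : IsViscousSolution T p ε v0 u) (ht : t ∈ Icc 0 T)
    (hx : x ∈ Icc (0 : ℝ) 1) (hy : y ∈ Icc (0 : ℝ) 1) :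
    spacePrimitive u (t, x) - spacePrimitive u (t, y) ≤ |x - y| := by
  rcases le_total x y with h | h
  · linarith [(hu.spacePrimitive_sub_mem_Icc ht hx.1 h hy.2).1, abs_nonneg (x - y)]
  · linarith [(hu.spacePrimitive_sub_mem_Icc ht hy.1 h hx.2).2, le_abs_self (x - y)]

lemma divergence_mass (hu : IsViscousSolution T p ε v0 u) (ht : t ∈ Icc 0 T)
    (hx : x ∈ Icc (0 : ℝ) 1) :
    tderiv u (t, x) + xderiv (fun z => -(ε * xderiv u z - p * J (u z))) (t, x) = 0 := by
  have hdu := hu.contDiff_one.differentiable one_ne_zero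
  have hdux := hu.contDiff_xderiv.differentiable one_ne_zero
  have hdJ : Differentiable ℝ J := contDiff_J.differentiable one_ne_zero
  rw [xderiv_eq (by fun_prop) (((hu.hasDerivAt_space_xderiv t x).const_mul ε).sub
    ((hu.hasDerivAt_J_space t x).const_mul p)).fun_neg, hu.eqn t ht x hx]
  ring

lemma spacePrimitive_sub_init (hu : IsViscousSolution T p ε v0 u) (ht : t ∈ Icc 0 T)
    (hx : x ∈ Icc (0 : ℝ) 1) : spacePrimitive u (t, x) - spacePrimitive u (0, x)
      = ∫ s in (0 : ℝ)..t, (ε * xderiv u (s, x) - p * J (u (s, x))) := by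
  have hg : ContDiff ℝ 1 fun z => -(ε * xderiv u z - p * J (u z)) :=
    ((contDiff_const.mul hu.contDiff_xderiv).sub
      (contDiff_const.mul (contDiff_J.comp hu.contDiff_one))).neg
  have hbalance := integral_divergence_rectangle hu.contDiff_one hg 0 t 0 x
  have hdiv : ∫ s in (0 : ℝ)..t, ∫ y in (0 : ℝ)..x,
      (tderiv u (s, y) + xderiv (fun z => -(ε * xderiv u z - p * J (u z))) (s, y)) = 0 :=
    integral_eq_zero_of_eqOn_Icc ht.1 fun s hs => integral_eq_zero_of_eqOn_Icc hx.1 fun y hy =>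
      hu.divergence_mass ⟨hs.1, hs.2.trans ht.2⟩ ⟨hy.1, hy.2.trans hx.2⟩
  have hleft : ∫ s in (0 : ℝ)..t, -(ε * xderiv u (s, 0) - p * J (u (s, 0))) = 0 :=
    integral_eq_zero_of_eqOn_Icc ht.1 fun s hs => by
      simp [hu.flux_left s ⟨hs.1, hs.2.trans ht.2⟩]
  rw [hdiv, hleft, intervalIntegral.integral_neg] at hbalance
  simp only [spacePrimitive]
  linarith

lemma spacePrimitive_init (hu : IsViscousSolution T p ε v0 u) (hx : x ∈ Icc (0 : ℝ) 1) :
    spacePrimitive u (0, x) = ∫ y in (0 : ℝ)..x, v0 y :=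
  integral_congr fun y hy =>
    hu.initial y (Icc_subset_Icc_right hx.2 (uIcc_of_le hx.1 ▸ hy))

lemma spacePrimitive_one (hu : IsViscousSolution T p ε v0 u) (ht : t ∈ Icc 0 T) :
    spacePrimitive u (t, 1) = ∫ y in (0 : ℝ)..1, v0 y := by
  rw [← hu.spacePrimitive_init (by simp), ← sub_eq_zero, hu.spacePrimitive_sub_init ht (by simp)]
  exact integral_eq_zero_of_eqOn_Icc ht.1 fun s hs => by
    simp [hu.flux_right s ⟨hs.1, hs.2.trans ht.2⟩]

lemma hasDerivWithinAt_spacePrimitive_time (hu : IsViscousSolution T p ε v0 u) (ht : t ∈ Icc 0 T)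
    (hx : x ∈ Icc (0 : ℝ) 1) :
    HasDerivWithinAt (fun s => spacePrimitive u (s, x))
      (ε * xderiv u (t, x) - p * J (u (t, x))) (Icc 0 T) t := by
  have hflux : Continuous fun s => ε * xderiv u (s, x) - p * J (u (s, x)) := by
    have := hu.contDiff_xderiv.continuous
    have := hu.contDiff.continuous
    have : Continuous J := (contDiff_J (n := 0)).continuous
    fun_prop
  have hint := (hflux.integral_hasStrictDerivAt 0 t).hasDerivAt.const_add (spacePrimitive u (0, x))
  refine hint.hasDerivWithinAt.congr (fun s hs => ?_) ?_ <;>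
    linarith [hu.spacePrimitive_sub_init ht hx, hu.spacePrimitive_sub_init ‹_› hx]

lemma spacePrimitive_eq_of_notMem_Ioo (hu : IsViscousSolution T p ε v0 u)
    (hv : IsViscousSolution T p δ v0 v) (ht : t ∈ Icc 0 T) (hx : x ∈ Icc (0 : ℝ) 1)
    (hx' : x ∉ Ioo (0 : ℝ) 1) : spacePrimitive u (t, x) = spacePrimitive v (t, x) := by
  rcases eq_endpoints_or_mem_Ioo_of_mem_Icc hx with rfl | rfl | h
  · simp only [spacePrimitive_zero]
  · rw [hu.spacePrimitive_one ht, hv.spacePrimitive_one ht]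
  · exact absurd h hx'

lemma spacePrimitive_sub_le_abs_of_boundary (hu : IsViscousSolution T p ε v0 u)
    (hv : IsViscousSolution T p δ v0 v) (ht : t ∈ Icc 0 T) (hx : x ∈ Icc (0 : ℝ) 1)
    (hy : y ∈ Icc (0 : ℝ) 1) (hbdry : t = 0 ∨ x ∉ Ioo (0 : ℝ) 1 ∨ y ∉ Ioo (0 : ℝ) 1) :
    spacePrimitive u (t, x) - spacePrimitive v (t, y) ≤ |x - y| := by
  rcases hbdry with rfl | hx' | hy'
  · rw [hu.spacePrimitive_init hx, ← hv.spacePrimitive_init hx]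
    exact hv.spacePrimitive_sub_le_abs ht hx hy
  · rw [hu.spacePrimitive_eq_of_notMem_Ioo hv ht hx hx']
    exact hv.spacePrimitive_sub_le_abs ht hx hy
  · rw [← hu.spacePrimitive_eq_of_notMem_Ioo hv ht hy hy']
    exact hu.spacePrimitive_sub_le_abs ht hx hy

lemma le_of_isMaxOn_doubledGap (hu : IsViscousSolution T p ε v0 u)
    (hv : IsViscousSolution T p δ v0 v) (hε : 0 ≤ ε) (hδ : 0 ≤ δ) (hα : α ≠ 0)
    (ht : t ∈ Ioc 0 T) (hx : x ∈ Ioo (0 : ℝ) 1) (hy : y ∈ Ioo (0 : ℝ) 1)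
    (hmax : IsMaxOn (doubledGap u v α K) (Icc 0 T ×ˢ Icc 0 1 ×ˢ Icc 0 1) (t, x, y)) :
    K ≤ (ε + δ) / α := by
  have htI := Ioc_subset_Icc_self ht
  have hxI := Ioo_subset_Icc_self hx
  have hyI := Ioo_subset_Icc_self hy
  have hle {s a b : ℝ} (hs : s ∈ Icc 0 T) (ha : a ∈ Icc (0 : ℝ) 1) (hb : b ∈ Icc (0 : ℝ) 1) :
      doubledGap u v α K (s, a, b) ≤ doubledGap u v α K (t, x, y) := hmax ⟨hs, ha, hb⟩
  simp only [doubledGap] at hle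
  obtain ⟨hux, huxx⟩ := deriv_of_isLocalMax_sub_sq (f := fun a => spacePrimitive u (t, a))
    (c := y) (x₀ := x) hα
    (by filter_upwards [Icc_mem_nhds hx.1 hx.2] with a ha; linarith [hle htI ha hyI])
    (hu.hasDerivAt_spacePrimitive t) (hu.hasDerivAt_space t x)
  obtain ⟨hvy, hvyy⟩ := deriv_of_isLocalMax_sub_sq (f := fun b => -spacePrimitive v (t, b))
    (c := x) (x₀ := y) hα
    (by
      filter_upwards [Icc_mem_nhds hy.1 hy.2] with b hb
      rw [sub_sq_comm b, sub_sq_comm y]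
      linarith [hle htI hxI hb])
    (fun b => (hv.hasDerivAt_spacePrimitive t b).fun_neg) (hv.hasDerivAt_space t y).fun_neg
  have htime := nonneg_of_hasDerivWithinAt_of_isMaxOn_Icc ht
    (((hu.hasDerivWithinAt_spacePrimitive_time htI hxI).fun_sub
      (hv.hasDerivWithinAt_spacePrimitive_time htI hyI)).fun_sub
        ((hasDerivWithinAt_id t (Icc 0 T)).const_mul K))
    (fun s hs => by simp only [mem_ofPred_eq, id]; linarith [hle hs hxI hyI])
  have huv : u (t, x) = v (t, y) := by
    rw [hux, ← neg_neg (v (t, y)), hvy]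
    ring
  have hu_le := mul_le_mul_of_nonneg_left huxx hε
  have hv_le := mul_le_mul_of_nonneg_left hvyy hδ
  rw [huv] at htime
  rw [add_div, div_eq_mul_one_div ε, div_eq_mul_one_div δ]
  linarith

lemma spacePrimitive_sub_le (hu : IsViscousSolution T p ε v0 u)
    (hv : IsViscousSolution T p δ v0 v) (hε : 0 ≤ ε) (hδ : 0 ≤ δ) (hα : 0 < α)
    (hK : (ε + δ) / α < K) (ht : t ∈ Icc 0 T) (hx : x ∈ Icc (0 : ℝ) 1) :
    spacePrimitive u (t, x) - spacePrimitive v (t, x) ≤ α / 2 + K * t := by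
  have hK0 : 0 ≤ K := (by positivity : 0 ≤ (ε + δ) / α).trans hK.le
  have hcont : Continuous (doubledGap u v α K) := by
    have := hu.continuous_spacePrimitive
    have := hv.continuous_spacePrimitive
    unfold doubledGap
    fun_prop
  obtain ⟨⟨t₀, x₀, y₀⟩, ⟨ht₀, hx₀, hy₀⟩, hmax⟩ :=
    (isCompact_Icc.prod (isCompact_Icc.prod isCompact_Icc)).exists_isMaxOn
      ⟨(t, x, x), ht, hx, hx⟩ hcont.continuousOn
  have hbdry : t₀ = 0 ∨ x₀ ∉ Ioo (0 : ℝ) 1 ∨ y₀ ∉ Ioo (0 : ℝ) 1 := by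
    by_contra! hint
    exact hK.not_ge (hu.le_of_isMaxOn_doubledGap hv hε hδ hα.ne'
      ⟨ht₀.1.lt_of_ne' hint.1, ht₀.2⟩ hint.2.1 hint.2.2 hmax)
  calc spacePrimitive u (t, x) - spacePrimitive v (t, x)
      = doubledGap u v α K (t, x, x) + K * t := by simp [doubledGap]
    _ ≤ doubledGap u v α K (t₀, x₀, y₀) + K * t := by gcongr; exact hmax ⟨ht, hx, hx⟩
    _ ≤ |x₀ - y₀| - (x₀ - y₀) ^ 2 / (2 * α) - 0 + K * t := by
        unfold doubledGap
        gcongr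
        · exact hu.spacePrimitive_sub_le_abs_of_boundary hv ht₀ hx₀ hy₀ hbdry
        · exact mul_nonneg hK0 ht₀.1
    _ ≤ α / 2 + K * t := by
        rw [sub_zero]
        gcongr
        exact abs_sub_sq_div_le hα _

lemma abs_spacePrimitive_sub_le (hu : IsViscousSolution T p ε v0 u)
    (hv : IsViscousSolution T p δ v0 v) (hε : 0 < ε) (hδ : 0 < δ) (ht : t ∈ Icc 0 T)
    (hx : x ∈ Icc (0 : ℝ) 1) :
    |spacePrimitive u (t, x) - spacePrimitive v (t, x)| ≤ (1 + 2 * T) * √(ε + δ) := by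
  have hα : 0 < √(ε + δ) := Real.sqrt_pos.2 (by linarith)
  have hK : (ε + δ) / √(ε + δ) < 2 * √(ε + δ) := by rw [Real.div_sqrt]; linarith
  have hle := hu.spacePrimitive_sub_le hv hε.le hδ.le hα hK ht hx
  have hge := hv.spacePrimitive_sub_le hu hδ.le hε.le hα (by rwa [add_comm δ ε]) ht hx
  have htT := mul_le_mul_of_nonneg_right ht.2 hα.le
  rw [abs_le]
  constructor <;> linarith

lemma integral_sq_sub_le (hu : IsViscousSolution T p ε v0 u) (hv : IsViscousSolution T p δ v0 v)
    (hε : 0 < ε) (hδ : 0 < δ) (hp : 0 ≤ p) (hv0 : Differentiable ℝ v0)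
    (hB : ∀ x ∈ Icc (0 : ℝ) 1, |deriv v0 x| ≤ B) (ht : t ∈ Icc 0 T) :
    ∫ x in (0 : ℝ)..1, (u (t, x) - v (t, x)) ^ 2
      ≤ 2 * (1 + 2 * T) * (1 + 2 * B) * √(ε + δ) := by
  have hux : Continuous fun x => xderiv u (t, x) :=
    hu.contDiff_xderiv.continuous.comp (.prodMk_right t)
  have hvx : Continuous fun x => xderiv v (t, x) :=
    hv.contDiff_xderiv.continuous.comp (.prodMk_right t)
  have hT : 0 ≤ T := ht.1.trans ht.2
  calc ∫ x in (0 : ℝ)..1, (u (t, x) - v (t, x)) ^ 2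
      ≤ (1 + 2 * T) * √(ε + δ) * ∫ x in (0 : ℝ)..1, |xderiv u (t, x) - xderiv v (t, x)| :=
        integral_sq_deriv_le zero_le_one
          (f := fun x => spacePrimitive u (t, x) - spacePrimitive v (t, x))
          (fun x => (hu.hasDerivAt_spacePrimitive t x).sub (hv.hasDerivAt_spacePrimitive t x))
          (fun x => (hu.hasDerivAt_space t x).sub (hv.hasDerivAt_space t x)) (hux.sub hvx)
          (by simp [spacePrimitive_zero])
          (by rw [hu.spacePrimitive_one ht, hv.spacePrimitive_one ht, sub_self])
          (fun x hx => hu.abs_spacePrimitive_sub_le hv hε hδ ht hx)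
    _ ≤ (1 + 2 * T) * √(ε + δ) * ((∫ x in (0 : ℝ)..1, |xderiv u (t, x)|)
          + ∫ x in (0 : ℝ)..1, |xderiv v (t, x)|) := by
        gcongr
        rw [← intervalIntegral.integral_add (hux.abs.intervalIntegrable _ _)
          (hvx.abs.intervalIntegrable _ _)]
        exact integral_mono zero_le_one ((hux.sub hvx).abs.intervalIntegrable _ _)
          ((hux.abs.add hvx.abs).intervalIntegrable _ _) fun x => abs_sub _ _
    _ ≤ (1 + 2 * T) * √(ε + δ) * ((1 + 2 * B) + (1 + 2 * B)) := by
        gcongr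
        · exact hu.integral_abs_xderiv_le hε hp hv0 hB ht
        · exact hv.integral_abs_xderiv_le hδ hp hv0 hB ht
    _ = 2 * (1 + 2 * T) * (1 + 2 * B) * √(ε + δ) := by ring

end IsViscousSolution

/-! ### Convergence in measure -/

section ConvergenceInMeasure

variable {ι α : Type*} {mα : MeasurableSpace α} {μ : Measure α} {l : Filter ι} {f : ι → α → ℝ}
  {g w : α → ℝ}

lemma exists_tendstoInMeasure_of_cauchy_integral [l.NeBot] (hf : ∀ᶠ i in l, Integrable (f i) μ)
    (h : Tendsto (fun ij : ι × ι => ∫ z, |f ij.1 z - f ij.2 z| ∂μ) (l ×ˢ l) (𝓝 0)) :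
    ∃ w : α → ℝ, Measurable w ∧ TendstoInMeasure μ f l w := by
  classical
  let F : ι → Lp ℝ 1 μ := fun i => if hi : Integrable (f i) μ then hi.toL1 (f i) else 0
  have hF : ∀ i, Integrable (f i) μ → F i =ᵐ[μ] f i := fun i hi => by
    simp only [F, dif_pos hi]
    exact hi.coeFn_toL1
  have hdist : ∀ᶠ ij : ι × ι in l ×ˢ l,
      ∫ z, |f ij.1 z - f ij.2 z| ∂μ = dist (F ij.1) (F ij.2) := by
    filter_upwards [hf.prod_mk hf] with ij hij
    rw [L1.dist_eq_integral_dist]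
    refine integral_congr_ae ?_
    filter_upwards [hF _ hij.1, hF _ hij.2] with z h1 h2
    rw [h1, h2, Real.dist_eq]
  have hcauchy : Cauchy (map F l) :=
    cauchy_map_iff'.2 (tendsto_uniformity_iff_dist_tendsto_zero.2 (h.congr' hdist))
  obtain ⟨w, hw⟩ := cauchy_map_iff_exists_tendsto.1 hcauchy
  exact ⟨w, (Lp.stronglyMeasurable w).measurable,
    (tendstoInMeasure_of_tendsto_Lp hw).congr' (hf.mono hF) EventuallyEq.rfl⟩

lemma ae_mem_of_tendstoInMeasure [l.NeBot] [l.IsCountablyGenerated] {S : Set ℝ} (hS : IsClosed S)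
    (hf : ∀ᶠ i in l, ∀ᵐ z ∂μ, f i z ∈ S) (hw : TendstoInMeasure μ f l w) :
    ∀ᵐ z ∂μ, w z ∈ S := by
  obtain ⟨ns, hns, hae⟩ := hw.exists_seq_tendsto_ae'
  obtain ⟨N, hN⟩ := eventually_atTop.1 (hns.eventually hf)
  have hmem : ∀ᵐ z ∂μ, ∀ n ≥ N, f (ns n) z ∈ S :=
    ae_all_iff.2 fun n => eventually_imp_distrib_left.2 (hN n)
  filter_upwards [hae, hmem] with z hz hzS
    using hS.mem_of_tendsto hz (eventually_atTop.2 ⟨N, hzS⟩)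

lemma tendsto_integral_mul_of_tendstoInMeasure [l.IsCountablyGenerated] {C : ℝ}
    (hg : Integrable g μ) (hfm : ∀ᶠ i in l, AEStronglyMeasurable (f i) μ)
    (hf : ∀ᶠ i in l, ∀ᵐ z ∂μ, |f i z| ≤ C) (hw : TendstoInMeasure μ f l w) :
    Tendsto (fun i => ∫ z, f i z * g z ∂μ) l (𝓝 (∫ z, w z * g z ∂μ)) := by
  refine tendsto_of_subseq_tendsto fun ns hns => ?_
  obtain ⟨ms, hms, hae⟩ := (hw.comp hns).exists_seq_tendsto_ae
  have hnm : Tendsto (fun n => ns (ms n)) atTop l := hns.comp hms.tendsto_atTop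
  refine ⟨ms, tendsto_integral_filter_of_dominated_convergence (fun z => C * |g z|) ?_ ?_
    (hg.abs.const_mul C) ?_⟩
  · filter_upwards [hnm.eventually hfm] with n hn using hn.mul hg.1
  · filter_upwards [hnm.eventually hf] with n hn
    filter_upwards [hn] with z hz
    rw [norm_mul, Real.norm_eq_abs, Real.norm_eq_abs]
    gcongr
  · filter_upwards [hae] with z hz using hz.mul_const _

lemma tendstoInMeasure_zero_of_tendsto_integral (hf : ∀ i, Integrable (f i) μ)
    (h0 : ∀ i z, 0 ≤ f i z) (h : Tendsto (fun i => ∫ z, f i z ∂μ) l (𝓝 0)) :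
    TendstoInMeasure μ f l fun _ => 0 := by
  refine tendstoInMeasure_of_tendsto_eLpNorm one_ne_zero (fun i => (hf i).1)
    aestronglyMeasurable_const ?_
  have hnorm : ∀ i, eLpNorm (f i - fun _ => (0 : ℝ)) 1 μ = ENNReal.ofReal (∫ z, f i z ∂μ) := by
    intro i
    have hsub : (f i - fun _ => (0 : ℝ)) = f i := sub_zero (f i)
    rw [hsub, eLpNorm_one_eq_lintegral_enorm, ← ofReal_integral_norm_eq_lintegral_enorm (hf i)]
    simp only [Real.norm_of_nonneg (h0 i _)]
  simpa only [hnorm, ENNReal.ofReal_zero] using ENNReal.tendsto_ofReal h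

lemma integral_abs_le_sqrt_integral_sq [IsProbabilityMeasure μ] (hg : MemLp g 2 μ) :
    ∫ z, |g z| ∂μ ≤ √(∫ z, g z ^ 2 ∂μ) := by
  refine Real.le_sqrt_of_sq_le ?_
  have hint : Integrable (fun z => |g z| ^ 2) μ := by simpa only [sq_abs] using hg.integrable_sq
  simpa only [sq_abs] using even_two.convexOn_pow.map_integral_le (μ := μ) (f := fun z => |g z|)
    (by fun_prop) isClosed_univ (by simp) (hg.integrable one_le_two).abs hint

lemma intervalIntegral_abs_le_sqrt {g : ℝ → ℝ} (hg : MemLp g 2 (volume.restrict (Ioc 0 1))) :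
    ∫ x in (0 : ℝ)..1, |g x| ≤ √(∫ x in (0 : ℝ)..1, g x ^ 2) := by
  have : IsProbabilityMeasure (volume.restrict (Ioc (0 : ℝ) 1)) := ⟨by simp⟩
  simpa only [integral_of_le zero_le_one] using integral_abs_le_sqrt_integral_sq hg

end ConvergenceInMeasure

section Rectangle

variable {f : ℝ × ℝ → ℝ}

lemma setIntegral_rectangle {a b c d : ℝ} (hab : a ≤ b) (hcd : c ≤ d)
    (hf : IntegrableOn f (Icc a b ×ˢ Icc c d)) :
    ∫ z in Icc a b ×ˢ Icc c d, f z = ∫ t in a..b, ∫ x in c..d, f (t, x) := by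
  rw [Measure.volume_eq_prod] at hf ⊢
  rw [setIntegral_prod f hf, integral_of_le hab, integral_Icc_eq_integral_Ioc]
  simp only [integral_of_le hcd, integral_Icc_eq_integral_Ioc]

lemma integrableOn_rectangle (hf : Continuous f) (a b c d : ℝ) :
    IntegrableOn f (Icc a b ×ˢ Icc c d) :=
  hf.continuousOn.integrableOn_compact (isCompact_Icc.prod isCompact_Icc)

lemma integral_rectangle_swap (hf : Continuous f) {a b c d : ℝ} (hab : a ≤ b) (hcd : c ≤ d) :
    ∫ x in c..d, ∫ t in a..b, f (t, x) = ∫ t in a..b, ∫ x in c..d, f (t, x) := by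
  simp only [integral_of_le hab, integral_of_le hcd]
  refine integral_integral_swap (f := fun x t => f (t, x)) ?_
  rw [Measure.prod_restrict, ← Measure.volume_eq_prod]
  exact (integrableOn_rectangle (hf.comp continuous_swap) c d a b).mono_set
    (prod_mono Ioc_subset_Icc_self Ioc_subset_Icc_self)

lemma continuous_integral_fst (hf : Continuous f) (a b : ℝ) :
    Continuous fun x => ∫ t in a..b, f (t, x) :=
  continuous_integral_snd (f := fun z => f z.swap) (hf.comp continuous_swap) a b

end Rectangle

/-! ### The vanishing viscosity limit -/

namespace IsViscousSolution

variable {T p ε δ B : ℝ} {v0 : ℝ → ℝ} {u v : ℝ × ℝ → ℝ}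

lemma integral_abs_sub_le (hu : IsViscousSolution T p ε v0 u) (hv : IsViscousSolution T p δ v0 v)
    (hT : 0 ≤ T) (hε : 0 < ε) (hδ : 0 < δ) (hp : 0 ≤ p) (hv0 : Differentiable ℝ v0)
    (hB : ∀ x ∈ Icc (0 : ℝ) 1, |deriv v0 x| ≤ B) :
    ∫ z in Icc 0 T ×ˢ Icc (0 : ℝ) 1, |u z - v z| ≤
      √(2 * (1 + 2 * T) * (1 + 2 * B) * √(ε + δ)) * T := by
  have hc : Continuous fun z => |u z - v z| :=
    (hu.contDiff.continuous.sub hv.contDiff.continuous).abs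
  rw [setIntegral_rectangle hT zero_le_one (integrableOn_rectangle hc _ _ _ _)]
  refine (integral_le_mul_of_le hT ((continuous_integral_snd hc 0 1).intervalIntegrable _ _)
    fun t ht => ?_).trans_eq (by rw [sub_zero])
  have hmem : MemLp (fun x => u (t, x) - v (t, x)) 2 (volume.restrict (Ioc 0 1)) := by
    refine MemLp.of_bound ((hu.continuous_space t).sub (hv.continuous_space t)).aestronglyMeasurable
      1 ?_
    filter_upwards [ae_restrict_mem measurableSet_Ioc] with x hx
    have h1 := hu.mem t ht x (Ioc_subset_Icc_self hx)
    have h2 := hv.mem t ht x (Ioc_subset_Icc_self hx)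
    exact abs_le.2 ⟨by linarith [h1.1, h2.2], by linarith [h1.2, h2.1]⟩
  exact (intervalIntegral_abs_le_sqrt hmem).trans
    (Real.sqrt_le_sqrt (hu.integral_sq_sub_le hv hε hδ hp hv0 hB ht))

lemma integral_abs_xderiv_rectangle_le (hu : IsViscousSolution T p ε v0 u) (hT : 0 ≤ T)
    (hε : 0 < ε) (hp : 0 ≤ p) (hv0 : Differentiable ℝ v0)
    (hB : ∀ x ∈ Icc (0 : ℝ) 1, |deriv v0 x| ≤ B) :
    ∫ t in (0 : ℝ)..T, ∫ x in (0 : ℝ)..1, |xderiv u (t, x)| ≤ (1 + 2 * B) * T := by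
  have hux : Continuous fun z => |xderiv u z| := (continuous_xderiv hu.contDiff_one).abs
  simpa using integral_le_mul_of_le hT ((continuous_integral_snd hux 0 1).intervalIntegrable _ _)
    fun t ht => hu.integral_abs_xderiv_le hε hp hv0 hB ht

lemma integral_viscous_gradient_le (hu : IsViscousSolution T p ε v0 u) (hT : 0 ≤ T) (hε : 0 < ε)
    (hp : 0 ≤ p) (hv0 : Differentiable ℝ v0) (hB : ∀ x ∈ Icc (0 : ℝ) 1, |deriv v0 x| ≤ B) :
    ∫ x in (0 : ℝ)..1, ε * ∫ t in (0 : ℝ)..T, |xderiv u (t, x)| ≤ ε * ((1 + 2 * B) * T) := by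
  have hux : Continuous fun z => |xderiv u z| := (continuous_xderiv hu.contDiff_one).abs
  rw [intervalIntegral.integral_const_mul, integral_rectangle_swap hux hT zero_le_one]
  gcongr
  exact hu.integral_abs_xderiv_rectangle_le hT hε hp hv0 hB

end IsViscousSolution

section ViscousFamily

variable {T p B : ℝ} {v0 : ℝ → ℝ}

lemma exists_tendstoInMeasure_viscous (hT : 0 ≤ T) (hp : 0 ≤ p) (hv0 : Differentiable ℝ v0)
    (hB : ∀ x ∈ Icc (0 : ℝ) 1, |deriv v0 x| ≤ B) {u : ℝ → ℝ × ℝ → ℝ}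
    (hu : ∀ ε > 0, IsViscousSolution T p ε v0 (u ε)) :
    ∃ w : ℝ × ℝ → ℝ, Measurable w ∧ (∀ z, w z ∈ Icc (0 : ℝ) 1) ∧
      TendstoInMeasure (volume.restrict (Icc (0 : ℝ) T ×ˢ Icc (0 : ℝ) 1)) u (𝓝[>] 0) w := by
  have hpos : ∀ᶠ ε : ℝ in 𝓝[>] 0, 0 < ε := self_mem_nhdsWithin
  have hbound : Tendsto
      (fun εδ : ℝ × ℝ => √(2 * (1 + 2 * T) * (1 + 2 * B) * √(εδ.1 + εδ.2)) * T)
      (𝓝[>] 0 ×ˢ 𝓝[>] 0) (𝓝 0) := by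
    refine (Continuous.tendsto' (by fun_prop) (0, 0) 0 (by simp)).mono_left ?_
    rw [nhds_prod_eq]
    exact prod_mono nhdsWithin_le_nhds nhdsWithin_le_nhds
  obtain ⟨w, hwm, hw⟩ := exists_tendstoInMeasure_of_cauchy_integral
    (hpos.mono fun ε hε => integrableOn_rectangle (hu ε hε).contDiff.continuous 0 T 0 1)
    (squeeze_zero' (Eventually.of_forall fun _ => integral_nonneg fun _ => abs_nonneg _)
      ((hpos.prod_mk hpos).mono fun εδ h =>
        (hu _ h.1).integral_abs_sub_le (hu _ h.2) hT h.1 h.2 hp hv0 hB) hbound)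
  have hmem := ae_mem_of_tendstoInMeasure (isClosed_Icc (a := (0 : ℝ)) (b := 1))
    (hpos.mono fun ε hε => by
      filter_upwards [ae_restrict_mem (measurableSet_Icc.prod measurableSet_Icc)] with z hz
        using (hu ε hε).mem _ hz.1 _ hz.2) hw
  refine ⟨fun z => projIcc 0 1 zero_le_one (w z), by fun_prop, fun z => Subtype.prop _,
    hw.congr_right ?_⟩
  filter_upwards [hmem] with z hz
  rw [projIcc_of_mem _ hz]

lemma exists_seq_tendsto_viscous_gradient (hT : 0 ≤ T) (hp : 0 ≤ p) (hv0 : Differentiable ℝ v0)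
    (hB : ∀ x ∈ Icc (0 : ℝ) 1, |deriv v0 x| ≤ B) {e : ℕ → ℝ} {u : ℕ → ℝ × ℝ → ℝ}
    (hu : ∀ n, IsViscousSolution T p (e n) v0 (u n)) (he : ∀ n, 0 < e n)
    (hlim : Tendsto e atTop (𝓝 0)) :
    ∃ ns : ℕ → ℕ, StrictMono ns ∧ ∀ᵐ x ∂(volume.restrict (Icc (0 : ℝ) 1)),
      Tendsto (fun n => e (ns n) * ∫ t in (0 : ℝ)..T, |xderiv (u (ns n)) (t, x)|) atTop (𝓝 0) := by
  have hcont : ∀ n, Continuous fun x => e n * ∫ t in (0 : ℝ)..T, |xderiv (u n) (t, x)| := fun n =>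
    (continuous_integral_fst (continuous_xderiv (hu n).contDiff_one).abs 0 T).const_mul _
  have hnonneg : ∀ n x, 0 ≤ e n * ∫ t in (0 : ℝ)..T, |xderiv (u n) (t, x)| := fun n x =>
    mul_nonneg (he n).le (intervalIntegral.integral_nonneg hT fun t _ => abs_nonneg _)
  refine (tendstoInMeasure_zero_of_tendsto_integral
    (fun n => (hcont n).continuousOn.integrableOn_Icc) hnonneg ?_).exists_seq_tendsto_ae
  refine squeeze_zero (fun n => integral_nonneg (hnonneg n)) (fun n => ?_)
    (by simpa using hlim.mul_const ((1 + 2 * B) * T))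
  rw [integral_Icc_eq_integral_Ioc, ← integral_of_le zero_le_one]
  exact (hu n).integral_viscous_gradient_le hT (he n) hp hv0 hB

end ViscousFamily

/-- A measurable function to which a sequence of viscous solutions with vanishing viscosity
converges almost everywhere. For almost every `x` the viscous part of the flux through `x` is also
required to vanish in the limit, so that entropy fluxes can be evaluated on the line at `x`. -/
structure IsViscousLimit (T p : ℝ) (v0 : ℝ → ℝ) (e : ℕ → ℝ) (u : ℕ → ℝ × ℝ → ℝ)
    (w : ℝ × ℝ → ℝ) : Prop where
  sol : ∀ n, IsViscousSolution T p (e n) v0 (u n)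
  pos : ∀ n, 0 < e n
  tendsto_zero : Tendsto e atTop (𝓝 0)
  measurable : Measurable w
  mem : ∀ z, w z ∈ Icc (0 : ℝ) 1
  tendsto_ae : ∀ᵐ z ∂(volume.restrict (Icc (0 : ℝ) T ×ˢ Icc (0 : ℝ) 1)),
    Tendsto (fun n => u n z) atTop (𝓝 (w z))
  tendsto_gradient : ∀ᵐ x ∂(volume.restrict (Icc (0 : ℝ) 1)),
    Tendsto (fun n => e n * ∫ t in (0 : ℝ)..T, |xderiv (u n) (t, x)|) atTop (𝓝 0)

lemma exists_isViscousLimit {T p B : ℝ} {v0 : ℝ → ℝ} (hT : 0 ≤ T) (hp : 0 ≤ p)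
    (hv0 : Differentiable ℝ v0) (hB : ∀ x ∈ Icc (0 : ℝ) 1, |deriv v0 x| ≤ B)
    {u : ℝ → ℝ × ℝ → ℝ} (hu : ∀ ε > 0, IsViscousSolution T p ε v0 (u ε)) {w : ℝ × ℝ → ℝ}
    (hwm : Measurable w) (hwb : ∀ z, w z ∈ Icc (0 : ℝ) 1)
    (hw : TendstoInMeasure (volume.restrict (Icc (0 : ℝ) T ×ˢ Icc (0 : ℝ) 1)) u (𝓝[>] 0) w) :
    ∃ e : ℕ → ℝ, IsViscousLimit T p v0 e (fun n => u (e n)) w := by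
  obtain ⟨r, -, hr0, hr⟩ := exists_seq_strictAnti_tendsto (0 : ℝ)
  obtain ⟨ms, hms, hae⟩ := (hw.comp
    (tendsto_nhdsWithin_iff.2 ⟨hr, Eventually.of_forall hr0⟩)).exists_seq_tendsto_ae
  have hrm : Tendsto (fun n => r (ms n)) atTop (𝓝 0) := hr.comp hms.tendsto_atTop
  obtain ⟨ks, hks, hgrad⟩ := exists_seq_tendsto_viscous_gradient hT hp hv0 hB
    (fun n => hu _ (hr0 (ms n))) (fun n => hr0 (ms n)) hrm
  exact ⟨fun n => r (ms (ks n)), fun n => hu _ (hr0 _), fun n => hr0 _,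
    hrm.comp hks.tendsto_atTop, hwm, hwb, hae.mono fun z hz => hz.comp hks.tendsto_atTop, hgrad⟩

/-! ### The entropy inequality and the initial condition -/

section Composition

variable {ι α : Type*} {mα : MeasurableSpace α} {μ : Measure α} {G : ℝ → ℝ} {g w : α → ℝ}
  {a b : ℝ}

lemma integrable_comp_mul (hG : Continuous G) (hg : Integrable g μ)
    (hwm : AEStronglyMeasurable w μ) (hw : ∀ᵐ z ∂μ, w z ∈ Icc a b) :
    Integrable (fun z => G (w z) * g z) μ := by
  obtain ⟨C, -, hC⟩ := exists_abs_le_of_continuousOn_Icc (hG.continuousOn (s := Icc a b))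
  exact hg.bdd_mul (hG.comp_aestronglyMeasurable hwm) (hw.mono fun z hz => hC _ hz)

lemma tendsto_integral_comp_mul {l : Filter ι} [l.IsCountablyGenerated] {f : ι → α → ℝ}
    (hG : Continuous G) (hg : Integrable g μ) (hfm : ∀ i, AEStronglyMeasurable (f i) μ)
    (hf : ∀ i, ∀ᵐ z ∂μ, f i z ∈ Icc a b)
    (hlim : ∀ᵐ z ∂μ, Tendsto (fun i => f i z) l (𝓝 (w z))) :
    Tendsto (fun i => ∫ z, G (f i z) * g z ∂μ) l (𝓝 (∫ z, G (w z) * g z ∂μ)) := by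
  obtain ⟨C, -, hC⟩ := exists_abs_le_of_continuousOn_Icc (hG.continuousOn (s := Icc a b))
  refine tendsto_integral_filter_of_dominated_convergence (fun z => C * |g z|)
    (Eventually.of_forall fun i => (hG.comp_aestronglyMeasurable (hfm i)).mul hg.1)
    (Eventually.of_forall fun i => ?_) (hg.abs.const_mul C) ?_
  · filter_upwards [hf i] with z hz
    rw [norm_mul, Real.norm_eq_abs, Real.norm_eq_abs]
    gcongr
    exact hC _ hz
  · filter_upwards [hlim] with z hz using ((hG.tendsto _).comp hz).mul_const _

lemma integral_comp_mul_add {H : ℝ → ℝ} {h : α → ℝ} (hG : Continuous G) (hH : Continuous H)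
    (hg : Integrable g μ) (hh : Integrable h μ) (hwm : AEStronglyMeasurable w μ)
    (hw : ∀ᵐ z ∂μ, w z ∈ Icc a b) :
    ∫ z, (G (w z) * g z + H (w z) * h z) ∂μ = ∫ z, G (w z) * g z ∂μ + ∫ z, H (w z) * h z ∂μ :=
  MeasureTheory.integral_add (integrable_comp_mul hG hg hwm hw) (integrable_comp_mul hH hh hwm hw)

end Composition

lemma neg_mul_mul_mul_le_of_abs_le {ε c d g C D : ℝ} (hε : 0 ≤ ε) (hc : |c| ≤ C) (hd : |d| ≤ D) :
    -(ε * (d * c * g)) ≤ ε * (D * C) * |g| := by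
  calc -(ε * (d * c * g)) ≤ |ε * (d * c * g)| := neg_le_abs _
    _ = ε * (|d| * |c|) * |g| := by rw [abs_mul, abs_mul, abs_mul, abs_of_nonneg hε]; ring
    _ ≤ ε * (D * C) * |g| := by
      have := (abs_nonneg d).trans hd
      gcongr

namespace IsViscousSolution

variable {T p ε B C D : ℝ} {v0 : ℝ → ℝ} {u : ℝ × ℝ → ℝ} {F Q : ℝ → ℝ} {ψ : ℝ × ℝ → ℝ}

lemma init_mem (hu : IsViscousSolution T p ε v0 u) (hT : 0 ≤ T) {x : ℝ} (hx : x ∈ Icc (0 : ℝ) 1) :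
    v0 x ∈ Icc (0 : ℝ) 1 :=
  hu.initial x hx ▸ hu.mem 0 ⟨le_rfl, hT⟩ x hx

lemma integral_entropy_nonneg (hu : IsViscousSolution T p ε v0 u) (hT : 0 ≤ T) (hε : 0 ≤ ε)
    (hFQ : IsLaxPair F Q) (hψ : ContDiff ℝ 1 ψ) (hψ0 : ∀ z, 0 ≤ ψ z)
    (hsupp : tsupport ψ ⊆ Ioo 0 T ×ˢ Ioo (0 : ℝ) 1) :
    0 ≤ ∫ t in (0 : ℝ)..T, ∫ x in (0 : ℝ)..1, (tderiv ψ (t, x) * F (u (t, x)) +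
      xderiv ψ (t, x) * (p * Q (u (t, x)) - ε * (deriv F (u (t, x)) * xderiv u (t, x)))) := by
  have hzero : ∀ z ∉ Ioo 0 T ×ˢ Ioo (0 : ℝ) 1, ψ z = 0 := fun z hz =>
    image_eq_zero_of_notMem_tsupport fun h => hz (hsupp h)
  have hE := hu.contDiff_mul_entropy (hFQ.1.of_le one_le_two) hψ
  have hH := hu.contDiff_mul_entropyFlux hFQ.1 (hFQ.2.1.of_le one_le_two) hψ
  have hdiv := integral_divergence_rectangle_eq_zero (a := 0) (b := T) (c := 0) (d := 1) hE hH
    (fun z hz => by simp [hzero z hz]) fun z hz => by simp [hzero z hz]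
  have := hu.contDiff.continuous
  have := continuous_xderiv hu.contDiff_one
  have := continuous_tderiv hψ
  have := continuous_xderiv hψ
  have := hFQ.1.continuous
  have := hFQ.1.continuous_deriv one_le_two
  have := hFQ.2.1.continuous
  exact hdiv.ge.trans <| integral_rectangle_mono (g := fun z => tderiv ψ z * F (u z) +
      xderiv ψ z * (p * Q (u z) - ε * (deriv F (u z) * xderiv u z)))
    ((continuous_tderiv hE).add (continuous_xderiv hH)) (by fun_prop) hT zero_le_one
    fun t ht x hx => hu.divergence_entropy_le hε hFQ hψ (hψ0 _) ht hx

lemma neg_le_integral_entropy (hu : IsViscousSolution T p ε v0 u) (hT : 0 ≤ T) (hε : 0 < ε)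
    (hp : 0 ≤ p) (hv0 : Differentiable ℝ v0) (hB : ∀ x ∈ Icc (0 : ℝ) 1, |deriv v0 x| ≤ B)
    (hFQ : IsLaxPair F Q) (hψ : ContDiff ℝ 1 ψ) (hψ0 : ∀ z, 0 ≤ ψ z)
    (hsupp : tsupport ψ ⊆ Ioo 0 T ×ˢ Ioo (0 : ℝ) 1) (hC : ∀ a ∈ Icc (0 : ℝ) 1, |deriv F a| ≤ C)
    (hD : ∀ z ∈ Icc 0 T ×ˢ Icc (0 : ℝ) 1, |xderiv ψ z| ≤ D) :
    -(ε * (D * C) * ((1 + 2 * B) * T)) ≤ ∫ z in Icc 0 T ×ˢ Icc (0 : ℝ) 1,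
      (F (u z) * tderiv ψ z + p * Q (u z) * xderiv ψ z) := by
  have hC0 : 0 ≤ C := (abs_nonneg _).trans (hC 0 (by simp))
  have hD0 : 0 ≤ D := (abs_nonneg _).trans (hD (0, 0) (by simpa))
  have hux : Continuous fun z => ε * (D * C) * |xderiv u z| :=
    (continuous_xderiv hu.contDiff_one).abs.const_mul _
  have := hu.contDiff.continuous
  have := continuous_xderiv hu.contDiff_one
  have := continuous_tderiv hψ
  have := continuous_xderiv hψ
  have := hFQ.1.continuous
  have := hFQ.1.continuous_deriv one_le_two
  have := hFQ.2.1.continuous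
  have hg : Continuous fun z => F (u z) * tderiv ψ z + p * Q (u z) * xderiv ψ z := by fun_prop
  have hbound : ∀ t ∈ Icc 0 T, ∀ x ∈ Icc (0 : ℝ) 1, tderiv ψ (t, x) * F (u (t, x)) +
      xderiv ψ (t, x) * (p * Q (u (t, x)) - ε * (deriv F (u (t, x)) * xderiv u (t, x))) ≤
      (F (u (t, x)) * tderiv ψ (t, x) + p * Q (u (t, x)) * xderiv ψ (t, x)) +
        ε * (D * C) * |xderiv u (t, x)| := by
    intro t ht x hx
    linarith [neg_mul_mul_mul_le_of_abs_le (g := xderiv u (t, x)) hε.le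
      (hC _ (hu.mem t ht x hx)) (hD (t, x) ⟨ht, hx⟩)]
  have hmono := (hu.integral_entropy_nonneg hT hε.le hFQ hψ hψ0 hsupp).trans <|
    integral_rectangle_mono (f := fun z => tderiv ψ z * F (u z) +
      xderiv ψ z * (p * Q (u z) - ε * (deriv F (u z) * xderiv u z)))
      (by fun_prop) (hg.add hux) hT zero_le_one hbound
  have hgi := integrableOn_rectangle hg 0 T 0 1
  have huxi := integrableOn_rectangle hux 0 T 0 1
  rw [← setIntegral_rectangle hT zero_le_one (hgi.add huxi), integral_add' hgi huxi,
    setIntegral_rectangle hT zero_le_one huxi] at hmono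
  simp only [intervalIntegral.integral_const_mul] at hmono
  have hTV := mul_le_mul_of_nonneg_left (hu.integral_abs_xderiv_rectangle_le hT hε hp hv0 hB)
    (by positivity : 0 ≤ ε * (D * C))
  linarith

end IsViscousSolution

namespace IsViscousLimit

variable {T p B : ℝ} {v0 : ℝ → ℝ} {e : ℕ → ℝ} {u : ℕ → ℝ × ℝ → ℝ} {w : ℝ × ℝ → ℝ}

lemma tendsto_ae_prod (h : IsViscousLimit T p v0 e u w) :
    ∀ᵐ z ∂((volume.restrict (Icc 0 T)).prod (volume.restrict (Icc (0 : ℝ) 1))),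
      Tendsto (fun n => u n z) atTop (𝓝 (w z)) := by
  rw [Measure.prod_restrict, ← Measure.volume_eq_prod]
  exact h.tendsto_ae

lemma tendsto_ae_time (h : IsViscousLimit T p v0 e u w) :
    ∀ᵐ t ∂(volume.restrict (Icc 0 T)), ∀ᵐ x ∂(volume.restrict (Icc (0 : ℝ) 1)),
      Tendsto (fun n => u n (t, x)) atTop (𝓝 (w (t, x))) :=
  Measure.ae_ae_of_ae_prod h.tendsto_ae_prod

lemma tendsto_ae_space (h : IsViscousLimit T p v0 e u w) :
    ∀ᵐ x ∂(volume.restrict (Icc (0 : ℝ) 1)), ∀ᵐ t ∂(volume.restrict (Icc 0 T)),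
      Tendsto (fun n => u n (t, x)) atTop (𝓝 (w (t, x))) :=
  Measure.ae_ae_of_ae_prod (p := fun z => Tendsto (fun n => u n z.swap) atTop (𝓝 (w z.swap)))
    (Measure.measurePreserving_swap.quasiMeasurePreserving.ae h.tendsto_ae_prod)

lemma tendsto_setIntegral_comp_mul_add (h : IsViscousLimit T p v0 e u w) {G H : ℝ → ℝ}
    (hG : Continuous G) (hH : Continuous H) {g g' : ℝ × ℝ → ℝ}
    (hg : IntegrableOn g (Icc 0 T ×ˢ Icc (0 : ℝ) 1))
    (hg' : IntegrableOn g' (Icc 0 T ×ˢ Icc (0 : ℝ) 1)) :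
    Tendsto (fun n => ∫ z in Icc 0 T ×ˢ Icc (0 : ℝ) 1, (G (u n z) * g z + H (u n z) * g' z)) atTop
      (𝓝 (∫ z in Icc 0 T ×ˢ Icc (0 : ℝ) 1, (G (w z) * g z + H (w z) * g' z))) := by
  have hum : ∀ n, AEStronglyMeasurable (u n) (volume.restrict (Icc 0 T ×ˢ Icc (0 : ℝ) 1)) :=
    fun n => (h.sol n).contDiff.continuous.aestronglyMeasurable
  have hu : ∀ n, ∀ᵐ z ∂volume.restrict (Icc 0 T ×ˢ Icc (0 : ℝ) 1), u n z ∈ Icc (0 : ℝ) 1 := by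
    intro n
    filter_upwards [ae_restrict_mem (measurableSet_Icc.prod measurableSet_Icc)] with z hz
      using (h.sol n).mem _ hz.1 _ hz.2
  rw [integral_comp_mul_add hG hH hg hg' h.measurable.aestronglyMeasurable
    (Eventually.of_forall h.mem)]
  refine ((tendsto_integral_comp_mul hG hg hum hu h.tendsto_ae).add
    (tendsto_integral_comp_mul hH hg' hum hu h.tendsto_ae)).congr fun n => ?_
  exact (integral_comp_mul_add hG hH hg hg' (hum n) (hu n)).symm

lemma entropy_inequality (h : IsViscousLimit T p v0 e u w) (hT : 0 ≤ T) (hp : 0 ≤ p)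
    (hv0 : Differentiable ℝ v0) (hB : ∀ x ∈ Icc (0 : ℝ) 1, |deriv v0 x| ≤ B) {F Q : ℝ → ℝ}
    (hFQ : IsLaxPair F Q) {ψ : ℝ × ℝ → ℝ} (hψ : ContDiff ℝ 1 ψ) (hψ0 : ∀ z, 0 ≤ ψ z)
    (hsupp : tsupport ψ ⊆ Ioo 0 T ×ˢ Ioo (0 : ℝ) 1) :
    0 ≤ ∫ z in Ioo 0 T ×ˢ Ioo (0 : ℝ) 1, (F (w z) * tderiv ψ z + p * Q (w z) * xderiv ψ z) := by
  have hset : (Ioo 0 T ×ˢ Ioo (0 : ℝ) 1 : Set (ℝ × ℝ)) =ᵐ[volume] Icc 0 T ×ˢ Icc (0 : ℝ) 1 :=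
    Measure.set_prod_ae_eq Ioo_ae_eq_Icc Ioo_ae_eq_Icc
  obtain ⟨C, -, hC⟩ := exists_abs_le_of_continuousOn_Icc (a := 0) (b := 1)
    (hFQ.1.continuous_deriv one_le_two).continuousOn
  obtain ⟨D, hD⟩ := (isCompact_Icc.prod isCompact_Icc).exists_bound_of_continuousOn
    (s := Icc 0 T ×ˢ Icc (0 : ℝ) 1) (continuous_xderiv hψ).continuousOn
  have hlim := h.tendsto_setIntegral_comp_mul_add hFQ.1.continuous
    (hFQ.2.1.continuous.const_mul p) (integrableOn_rectangle (continuous_tderiv hψ) 0 T 0 1)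
    (integrableOn_rectangle (continuous_xderiv hψ) 0 T 0 1)
  have herr : Tendsto (fun n => -(e n * (D * C) * ((1 + 2 * B) * T))) atTop (𝓝 0) := by
    simpa using ((h.tendsto_zero.mul_const (D * C)).mul_const ((1 + 2 * B) * T)).neg
  rw [setIntegral_congr_set hset]
  exact le_of_tendsto_of_tendsto' herr hlim fun n =>
    (h.sol n).neg_le_integral_entropy hT (h.pos n) hp hv0 hB hFQ hψ hψ0 hsupp hC hD

lemma integral_sq_sub_init_le (h : IsViscousLimit T p v0 e u w) (hp : 0 ≤ p)
    (hv0 : ContDiff ℝ 1 v0) (hB : ∀ x ∈ Icc (0 : ℝ) 1, |deriv v0 x| ≤ B) {t : ℝ}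
    (ht : t ∈ Icc 0 T) (hlim : ∀ᵐ x ∂(volume.restrict (Icc (0 : ℝ) 1)),
      Tendsto (fun n => u n (t, x)) atTop (𝓝 (w (t, x)))) :
    ∫ x in (0 : ℝ)..1, (w (t, x) - v0 x) ^ 2 ≤ (p * B / 2 + p) * t := by
  have hconv : Tendsto (fun n => ∫ x in (0 : ℝ)..1, (u n (t, x) - v0 x) ^ 2) atTop
      (𝓝 (∫ x in (0 : ℝ)..1, (w (t, x) - v0 x) ^ 2)) := by
    rw [Measure.restrict_congr_set Ioc_ae_eq_Icc.symm] at hlim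
    simp only [integral_of_le zero_le_one]
    refine tendsto_integral_of_dominated_convergence (fun _ => 1)
      (fun n => (((h.sol n).continuous_space t).sub hv0.continuous |>.pow 2).aestronglyMeasurable)
      (integrable_const _) (fun n => ?_) (hlim.mono fun x hx => (hx.sub_const _).pow 2)
    filter_upwards [ae_restrict_mem measurableSet_Ioc] with x hx
    have hx := Ioc_subset_Icc_self hx
    rw [norm_pow]
    exact pow_le_one₀ (norm_nonneg _) (Real.dist_le_of_mem_Icc_01 ((h.sol n).mem t ht x hx)
      ((h.sol n).init_mem (ht.1.trans ht.2) hx))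
  have hbound : Tendsto (fun n => ((e n * B ^ 2 + p * B) / 2 + p) * t) atTop
      (𝓝 ((p * B / 2 + p) * t)) := by
    simpa using ((((h.tendsto_zero.mul_const (B ^ 2)).add_const (p * B)).div_const 2).add_const
      p).mul_const t
  exact le_of_tendsto_of_tendsto' hconv hbound fun n =>
    (h.sol n).integral_sq_sub_init_le (h.pos n).le hp hv0 hB ht

lemma ae_integral_abs_sub_init_le (h : IsViscousLimit T p v0 e u w) (hp : 0 ≤ p)
    (hv0 : ContDiff ℝ 1 v0) (hB : ∀ x ∈ Icc (0 : ℝ) 1, |deriv v0 x| ≤ B) :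
    ∀ᵐ t ∂(volume.restrict (Icc 0 T)),
      ∫ x in (0 : ℝ)..1, |w (t, x) - v0 x| ≤ √((p * B / 2 + p) * t) := by
  filter_upwards [h.tendsto_ae_time, ae_restrict_mem measurableSet_Icc] with t hlim ht
  have hmem : MemLp (fun x => w (t, x) - v0 x) 2 (volume.restrict (Ioc 0 1)) := by
    refine .of_bound ((h.measurable.comp measurable_prodMk_left).sub
      hv0.continuous.measurable).aestronglyMeasurable 1 ?_
    filter_upwards [ae_restrict_mem measurableSet_Ioc] with x hx
    exact Real.dist_le_of_mem_Icc_01 (h.mem (t, x))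
      ((h.sol 0).init_mem (ht.1.trans ht.2) (Ioc_subset_Icc_self hx))
  exact (intervalIntegral_abs_le_sqrt hmem).trans
    (Real.sqrt_le_sqrt (h.integral_sq_sub_init_le hp hv0 hB ht hlim))

lemma tendsto_initial (h : IsViscousLimit T p v0 e u w) (hT : 0 < T) (hp : 0 ≤ p)
    (hv0 : ContDiff ℝ 1 v0) (hB : ∀ x ∈ Icc (0 : ℝ) 1, |deriv v0 x| ≤ B) :
    Tendsto (fun t => ∫ x in (0 : ℝ)..1, |w (t, x) - v0 x|) (𝓝[>] 0 ⊓ ae volume) (𝓝 0) := by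
  have hsqrt : Tendsto (fun t => √((p * B / 2 + p) * t)) (𝓝[>] 0 ⊓ ae volume) (𝓝 0) := by
    have hc : Continuous fun t => √((p * B / 2 + p) * t) := by fun_prop
    simpa using (hc.tendsto 0).mono_left (inf_le_left.trans nhdsWithin_le_nhds)
  refine squeeze_zero' (Eventually.of_forall fun t =>
    intervalIntegral.integral_nonneg zero_le_one fun x _ => abs_nonneg _) ?_ hsqrt
  filter_upwards [mem_inf_of_left (Ioo_mem_nhdsGT hT), mem_inf_of_right
    ((ae_restrict_iff' measurableSet_Icc).1 (h.ae_integral_abs_sub_init_le hp hv0 hB))]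
    with t ht hle using hle (Ioo_subset_Icc_self ht)

end IsViscousLimit

/-! ### Essential limits -/

lemma exists_mem_tendsto_of_uniform_approx {ι E : Type*} [PseudoMetricSpace E] [CompleteSpace E]
    {l : Filter ι} {S : Set E} (hS : IsClosed S) {f : ι → E}
    (h : ∀ η > 0, ∃ g : ι → E, ∃ L ∈ S, Tendsto g l (𝓝 L) ∧ ∀ᶠ i in l, dist (f i) (g i) ≤ η) :
    ∃ L ∈ S, Tendsto f l (𝓝 L) := by
  rcases l.eq_or_neBot with rfl | hl
  · obtain ⟨-, L, hL, -⟩ := h 1 one_pos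
    exact ⟨L, hL, tendsto_bot⟩
  have hnear : ∀ η > 0, ∃ L ∈ S, ∀ᶠ i in l, dist (f i) L < η := by
    intro η hη
    obtain ⟨g, L, hL, hg, hfg⟩ := h (η / 2) (half_pos hη)
    refine ⟨L, hL, ?_⟩
    filter_upwards [hfg, Metric.tendsto_nhds.1 hg (η / 2) (half_pos hη)] with i h1 h2
    linarith [dist_triangle (f i) (g i) L]
  have hcauchy : Cauchy (map f l) := by
    refine Metric.cauchy_iff.2 ⟨inferInstance, fun η hη => ?_⟩
    obtain ⟨L, -, hL⟩ := hnear (η / 2) (half_pos hη)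
    refine ⟨_, image_mem_map hL, ?_⟩
    rintro _ ⟨i, hi, rfl⟩ _ ⟨j, hj, rfl⟩
    exact (dist_triangle_right _ _ L).trans_lt ((add_lt_add hi hj).trans_eq (add_halves η))
  obtain ⟨L, hL⟩ := cauchy_map_iff_exists_tendsto.1 hcauchy
  refine ⟨L, hS.closure_eq ▸ Metric.mem_closure_iff.2 fun η hη => ?_, hL⟩
  obtain ⟨L', hL', hfL'⟩ := hnear (η / 2) (half_pos hη)
  exact ⟨L', hL', (le_of_tendsto (hL.dist tendsto_const_nhds)
    (hfL'.mono fun _ => le_of_lt)).trans_lt (half_lt_self hη)⟩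

section EssentialLimit

variable {g : ℝ → ℝ} {a b C M : ℝ}

lemma exists_tendsto_nhdsGT_ae_of_antitoneOn {S : Set ℝ} (hab : a < b) (hSab : S ⊆ Ioo a b)
    (hS : ∀ᵐ x, x ∈ Ioo a b → x ∈ S) (hg : AntitoneOn g S) (hM : ∀ x ∈ S, g x ≤ M) :
    ∃ L ≤ M, Tendsto g (𝓝[>] a ⊓ ae volume) (𝓝 L) := by
  have hle : ∀ y ∈ g '' S, y ≤ M := forall_mem_image.2 hM
  have hne : (g '' S).Nonempty := by
    have : NeBot (ae (volume.restrict (Ioo a b))) :=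
      ae_neBot.2 (by simpa [Measure.restrict_eq_zero] using hab)
    exact image_nonempty.2 ((ae_restrict_iff' measurableSet_Ioo).2 hS).exists
  refine ⟨sSup (g '' S), csSup_le hne hle, tendsto_order.2 ⟨fun y hy => ?_, fun y hy => ?_⟩⟩
  · obtain ⟨_, ⟨x₀, hx₀, rfl⟩, hlt⟩ := exists_lt_of_lt_csSup hne hy
    filter_upwards [mem_inf_of_right hS, mem_inf_of_left (Ioo_mem_nhdsGT (hSab hx₀).1)]
      with x hxS hx
    exact hlt.trans_le (hg (hxS ⟨hx.1, hx.2.trans (hSab hx₀).2⟩) hx₀ hx.2.le)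
  · filter_upwards [mem_inf_of_right hS, mem_inf_of_left (Ioo_mem_nhdsGT hab)] with x hxS hx
    exact (le_csSup ⟨M, hle⟩ (mem_image_of_mem g (hxS hx))).trans_lt hy

variable {f : ℕ → ℝ → ℝ}

lemma exists_tendsto_nhdsGT_ae_of_sub_le (hab : a < b)
    (hf : ∀ n, ∀ x ∈ Icc a b, ∀ y ∈ Icc a b, x ≤ y → f n y - f n x ≤ C * (y - x))
    (hfa : ∀ n, f n a ≤ 0)
    (hlim : ∀ᵐ x, x ∈ Icc a b → Tendsto (fun n => f n x) atTop (𝓝 (g x))) :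
    ∃ L ≤ 0, Tendsto g (𝓝[>] a ⊓ ae volume) (𝓝 L) := by
  let S := {x | x ∈ Ioo a b ∧ Tendsto (fun n => f n x) atTop (𝓝 (g x))}
  have hanti : AntitoneOn (fun x => g x - C * (x - a)) S := fun x hx y hy hxy => by
    have hsub := le_of_tendsto' (hy.2.sub hx.2) fun n =>
      hf n x (Ioo_subset_Icc_self hx.1) y (Ioo_subset_Icc_self hy.1) hxy
    linarith
  have hnonpos : ∀ x ∈ S, g x - C * (x - a) ≤ 0 := fun x hx => by
    have hsub := le_of_tendsto' hx.2 fun n => (sub_le_iff_le_add.1 <|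
      hf n a (left_mem_Icc.2 hab.le) x (Ioo_subset_Icc_self hx.1) hx.1.1.le).trans
        (add_le_add_right (hfa n) _)
    linarith
  obtain ⟨L, hL, hgL⟩ := exists_tendsto_nhdsGT_ae_of_antitoneOn (S := S) hab (fun x hx => hx.1)
    (hlim.mono fun x hx hx' => ⟨hx', hx (Ioo_subset_Icc_self hx')⟩) hanti hnonpos
  have hlin : Tendsto (fun x => C * (x - a)) (𝓝[>] a ⊓ ae volume) (𝓝 0) := by
    have hc : Continuous fun x => C * (x - a) := by fun_prop
    simpa using (hc.tendsto a).mono_left (inf_le_left.trans nhdsWithin_le_nhds)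
  exact ⟨L, hL, by simpa using hgL.add hlin⟩

lemma exists_tendsto_nhdsLT_ae_of_sub_le (hab : a < b)
    (hf : ∀ n, ∀ x ∈ Icc a b, ∀ y ∈ Icc a b, x ≤ y → f n y - f n x ≤ C * (y - x))
    (hfb : ∀ n, 0 ≤ f n b)
    (hlim : ∀ᵐ x, x ∈ Icc a b → Tendsto (fun n => f n x) atTop (𝓝 (g x))) :
    ∃ L, 0 ≤ L ∧ Tendsto g (𝓝[<] b ⊓ ae volume) (𝓝 L) := by
  have hneg := (Measure.measurePreserving_neg (volume : Measure ℝ)).quasiMeasurePreserving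
  have hmem : ∀ x ∈ Icc (-b) (-a), -x ∈ Icc a b := fun x hx => ⟨le_neg.1 hx.2, neg_le.1 hx.1⟩
  obtain ⟨L, hL, hgL⟩ := exists_tendsto_nhdsGT_ae_of_sub_le (f := fun n x => -f n (-x))
    (g := fun x => -g (-x)) (C := C) (neg_lt_neg hab)
    (fun n x hx y hy hxy => by linarith [hf n _ (hmem y hy) _ (hmem x hx) (neg_le_neg hxy)])
    (fun n => by simpa using hfb n)
    ((hneg.ae hlim).mono fun x hx hx' => (hx (hmem x hx')).neg)
  refine ⟨-L, neg_nonneg.2 hL, ?_⟩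
  simpa using (hgL.comp (tendsto_neg_nhdsLT.inf hneg.tendsto_ae)).neg

end EssentialLimit

/-! ### The boundary condition -/

lemma IsLaxPair.antitoneOn_sub {F Q : ℝ → ℝ} (h : IsLaxPair F Q) :
    AntitoneOn (fun a => Q a - deriv F a * J a) (Icc 0 1) := by
  have hF1 : ContDiff ℝ 1 (deriv F) := h.1.deriv'
  have hd : ∀ a, HasDerivAt (fun a => Q a - deriv F a * J a)
      (deriv Q a - (deriv (deriv F) a * J a + deriv F a * (1 - 2 * a))) a := fun a =>
    (h.2.1.differentiable two_ne_zero a).hasDerivAt.sub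
      ((hF1.differentiable one_ne_zero a).hasDerivAt.mul (hasDerivAt_J a))
  refine antitoneOn_of_deriv_nonpos (convex_Icc 0 1)
    (fun a _ => (hd a).continuousAt.continuousWithinAt)
    (fun a _ => (hd a).differentiableAt.differentiableWithinAt) fun a ha => ?_
  have ha' := interior_subset ha
  rw [(hd a).deriv, h.2.2.1 a ha']
  linarith [mul_nonneg (h.2.2.2 a ha') (J_nonneg ha')]

/-- The entropy flux of the viscous equation through the line at `x`, averaged over time with the
weight `φ`. -/
noncomputable def viscousFlux (T p ε : ℝ) (F Q φ : ℝ → ℝ) (u : ℝ × ℝ → ℝ) (x : ℝ) : ℝ :=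
  ∫ t in (0 : ℝ)..T, φ t * (p * Q (u (t, x)) - ε * (deriv F (u (t, x)) * xderiv u (t, x)))

/-- The entropy flux of the inviscid equation through the line at `x`, averaged over time with the
weight `φ` and without the factor `p`; its essential limits at the end points appear in the
boundary condition. -/
noncomputable def weightedFlux (T : ℝ) (Q φ : ℝ → ℝ) (w : ℝ × ℝ → ℝ) (x : ℝ) : ℝ :=
  ∫ t in (0 : ℝ)..T, φ t * Q (w (t, x))

namespace IsViscousSolution

variable {T p ε : ℝ} {v0 : ℝ → ℝ} {u : ℝ × ℝ → ℝ} {F Q φ : ℝ → ℝ}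

lemma viscousFlux_zero_nonpos (hu : IsViscousSolution T p ε v0 u) (hT : 0 ≤ T) (hp : 0 ≤ p)
    (hFQ : IsLaxPair F Q) (hQ : Q 0 = 0) (hφ0 : ∀ t ∈ Icc 0 T, 0 ≤ φ t) :
    viscousFlux T p ε F Q φ u 0 ≤ 0 := by
  have hpoint : ∀ t ∈ Icc 0 T,
      φ t * (p * Q (u (t, 0)) - ε * (deriv F (u (t, 0)) * xderiv u (t, 0))) ≤ 0 := by
    intro t ht
    have hm := hu.mem t ht 0 (by simp)
    have hanti : Q (u (t, 0)) - deriv F (u (t, 0)) * J (u (t, 0)) ≤ 0 := by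
      simpa [J, hQ] using hFQ.antitoneOn_sub (left_mem_Icc.2 zero_le_one) hm hm.1
    have hflux : p * Q (u (t, 0)) - ε * (deriv F (u (t, 0)) * xderiv u (t, 0)) =
        p * (Q (u (t, 0)) - deriv F (u (t, 0)) * J (u (t, 0))) := by
      linear_combination -deriv F (u (t, 0)) * hu.flux_left t ht
    rw [hflux]
    exact mul_nonpos_of_nonneg_of_nonpos (hφ0 t ht) (mul_nonpos_of_nonneg_of_nonpos hp hanti)
  rw [viscousFlux, ← neg_nonneg, ← intervalIntegral.integral_neg]
  exact intervalIntegral.integral_nonneg hT fun t ht => neg_nonneg.2 (hpoint t ht)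

lemma viscousFlux_one_nonneg (hu : IsViscousSolution T p ε v0 u) (hT : 0 ≤ T) (hp : 0 ≤ p)
    (hFQ : IsLaxPair F Q) (hQ : Q 1 = 0) (hφ0 : ∀ t ∈ Icc 0 T, 0 ≤ φ t) :
    0 ≤ viscousFlux T p ε F Q φ u 1 := by
  refine intervalIntegral.integral_nonneg hT fun t ht => mul_nonneg (hφ0 t ht) ?_
  have hm := hu.mem t ht 1 (by simp)
  have hanti : 0 ≤ Q (u (t, 1)) - deriv F (u (t, 1)) * J (u (t, 1)) := by
    simpa [J, hQ] using hFQ.antitoneOn_sub hm (right_mem_Icc.2 zero_le_one) hm.2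
  have hflux : p * Q (u (t, 1)) - ε * (deriv F (u (t, 1)) * xderiv u (t, 1)) =
      p * (Q (u (t, 1)) - deriv F (u (t, 1)) * J (u (t, 1))) := by
    linear_combination -deriv F (u (t, 1)) * hu.flux_right t ht
  exact hflux ▸ mul_nonneg hp hanti

lemma abs_integral_mul_entropy_le (hu : IsViscousSolution T p ε v0 u) {K : ℝ} {t x y : ℝ}
    (ht : t ∈ Icc 0 T) (hx : 0 ≤ x) (hxy : x ≤ y) (hy : y ≤ 1)
    (hK : ∀ a ∈ Icc (0 : ℝ) 1, |φ t * F a| ≤ K) :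
    |∫ s in x..y, φ t * F (u (t, s))| ≤ K * (y - x) := by
  have hbound : ∀ s ∈ uIoc x y, ‖φ t * F (u (t, s))‖ ≤ K := fun s hs => by
    rw [uIoc_of_le hxy] at hs
    exact hK _ (hu.mem t ht s ⟨hx.trans hs.1.le, hs.2.trans hy⟩)
  simpa [abs_of_nonneg (sub_nonneg.2 hxy)] using
    intervalIntegral.norm_integral_le_of_norm_le_const hbound

lemma viscousFlux_sub_le (hu : IsViscousSolution T p ε v0 u) (hT : 0 ≤ T) (hε : 0 ≤ ε)
    (hFQ : IsLaxPair F Q) (hφ : ContDiff ℝ 1 φ) (hφ0 : ∀ t ∈ Icc 0 T, 0 ≤ φ t) {K₁ K₂ : ℝ}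
    (hK₁ : ∀ t ∈ Icc 0 T, ∀ a ∈ Icc (0 : ℝ) 1, |deriv φ t * F a| ≤ K₁)
    (hK₂ : ∀ t ∈ Icc 0 T, ∀ a ∈ Icc (0 : ℝ) 1, |φ t * F a| ≤ K₂) {x y : ℝ} (hx : 0 ≤ x)
    (hxy : x ≤ y) (hy : y ≤ 1) :
    viscousFlux T p ε F Q φ u y - viscousFlux T p ε F Q φ u x ≤
      (K₁ * T + 2 * K₂) * (y - x) := by
  have hψ : ContDiff ℝ 1 fun z : ℝ × ℝ => φ z.1 := hφ.comp contDiff_fst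
  have hψt : ∀ t x, tderiv (fun z : ℝ × ℝ => φ z.1) (t, x) = deriv φ t := fun t x =>
    tderiv_eq (hψ.differentiable one_ne_zero _) (hφ.differentiable one_ne_zero t).hasDerivAt
  have hψx : ∀ t x, xderiv (fun z : ℝ × ℝ => φ z.1) (t, x) = 0 := fun t x =>
    xderiv_eq (hψ.differentiable one_ne_zero _) (hasDerivAt_const x (φ t))
  have hdiv := flux_le_of_divergence_le
    (hu.contDiff_mul_entropy (hFQ.1.of_le one_le_two) hψ)
    (hu.contDiff_mul_entropyFlux hFQ.1 (hFQ.2.1.of_le one_le_two) hψ) hT hxy (K := K₁)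
    fun t ht s hs => by
      have hs' : s ∈ Icc (0 : ℝ) 1 := ⟨hx.trans hs.1, hs.2.trans hy⟩
      have hle := hu.divergence_entropy_le hε hFQ hψ (hφ0 t ht) ht hs'
      rw [hψt, hψx, zero_mul, add_zero] at hle
      exact hle.trans ((le_abs_self _).trans (hK₁ t ht _ (hu.mem t ht s hs')))
  have hinit := hu.abs_integral_mul_entropy_le (left_mem_Icc.2 hT) hx hxy hy
    (hK₂ 0 (left_mem_Icc.2 hT))
  have hend := hu.abs_integral_mul_entropy_le (right_mem_Icc.2 hT) hx hxy hy
    (hK₂ T (right_mem_Icc.2 hT))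
  simp only [viscousFlux]
  linarith [le_of_abs_le hinit, neg_le_of_abs_le hend]

lemma abs_viscousFlux_sub_weightedFlux_le (hu : IsViscousSolution T p ε v0 u) (hT : 0 ≤ T)
    (hε : 0 ≤ ε) (hF : ContDiff ℝ 1 F) (hQ : Continuous Q) (hφ : Continuous φ) {K x : ℝ}
    (hx : x ∈ Icc (0 : ℝ) 1) (hK : ∀ t ∈ Icc 0 T, ∀ a ∈ Icc (0 : ℝ) 1, |φ t * deriv F a| ≤ K) :
    |viscousFlux T p ε F Q φ u x - p * weightedFlux T Q φ u x| ≤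
      K * (ε * ∫ t in (0 : ℝ)..T, |xderiv u (t, x)|) := by
  have := hu.contDiff.continuous
  have := continuous_xderiv hu.contDiff_one
  have := hF.continuous_deriv le_rfl
  have hdiff : viscousFlux T p ε F Q φ u x - p * weightedFlux T Q φ u x =
      ∫ t in (0 : ℝ)..T, -(φ t * deriv F (u (t, x)) * (ε * xderiv u (t, x))) := by
    rw [viscousFlux, weightedFlux, ← intervalIntegral.integral_const_mul,
      ← intervalIntegral.integral_sub (Continuous.intervalIntegrable (by fun_prop) _ _)
        (Continuous.intervalIntegrable (by fun_prop) _ _)]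
    exact integral_congr fun t _ => by ring
  rw [hdiff, ← intervalIntegral.integral_const_mul, ← intervalIntegral.integral_const_mul]
  refine (abs_integral_le_integral_abs hT).trans <| integral_mono_on hT
    (Continuous.intervalIntegrable (by fun_prop) _ _)
    (Continuous.intervalIntegrable (by fun_prop) _ _) fun t ht => ?_
  rw [abs_neg, abs_mul, abs_mul ε, abs_of_nonneg hε]
  gcongr
  exact hK t ht _ (hu.mem t ht x hx)

end IsViscousSolution

section WeightApproximation

variable {T : ℝ} {Q φ : ℝ → ℝ} {w : ℝ × ℝ → ℝ}

lemma exists_contDiff_nonneg_near (hφ : ContinuousOn φ (Icc 0 T)) (hφ0 : ∀ t ∈ Icc 0 T, 0 ≤ φ t)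
    {η : ℝ} (hη : 0 < η) :
    ∃ χ : ℝ → ℝ, ContDiff ℝ 1 χ ∧ (∀ t ∈ Icc 0 T, 0 ≤ χ t) ∧ ∀ t ∈ Icc 0 T, |φ t - χ t| ≤ η := by
  obtain ⟨q, hq⟩ := exists_polynomial_near_of_continuousOn 0 T φ hφ (η / 2) (half_pos hη)
  refine ⟨fun t => q.eval t + η / 2, ?_, fun t ht => ?_, fun t ht => abs_le.2 ?_⟩
  · simpa using (q.contDiff_aeval (𝕜 := ℝ) 1).add contDiff_const
  · linarith [(abs_lt.1 (hq t ht)).1, hφ0 t ht]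
  · constructor <;> linarith [(abs_lt.1 (hq t ht)).1, (abs_lt.1 (hq t ht)).2]

lemma intervalIntegrable_mul_comp (hT : 0 ≤ T) (hQ : Continuous Q) (hwm : Measurable w)
    (hw : ∀ z, w z ∈ Icc (0 : ℝ) 1) (hφ : ContinuousOn φ (Icc 0 T)) (x : ℝ) :
    IntervalIntegrable (fun t => φ t * Q (w (t, x))) volume 0 T := by
  rw [intervalIntegrable_iff_integrableOn_Ioc_of_le hT]
  simp only [mul_comm (φ _)]
  exact integrable_comp_mul hQ (hφ.integrableOn_Icc.mono_set Ioc_subset_Icc_self)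
    (hwm.comp measurable_prodMk_right).aestronglyMeasurable (Eventually.of_forall fun _ => hw _)

lemma exists_contDiff_weightedFlux_near (hT : 0 < T) (hQ : Continuous Q) (hwm : Measurable w)
    (hw : ∀ z, w z ∈ Icc (0 : ℝ) 1) (hφ : ContinuousOn φ (Icc 0 T))
    (hφ0 : ∀ t ∈ Icc 0 T, 0 ≤ φ t) {η : ℝ} (hη : 0 < η) :
    ∃ χ : ℝ → ℝ, ContDiff ℝ 1 χ ∧ (∀ t ∈ Icc 0 T, 0 ≤ χ t) ∧
      ∀ x, dist (weightedFlux T Q φ w x) (weightedFlux T Q χ w x) ≤ η := by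
  obtain ⟨A, hA0, hA⟩ := exists_abs_le_of_continuousOn_Icc (hQ.continuousOn (s := Icc 0 1))
  obtain ⟨χ, hχ, hχ0, hnear⟩ :=
    exists_contDiff_nonneg_near hφ hφ0 (η := η / ((A + 1) * T)) (by positivity)
  refine ⟨χ, hχ, hχ0, fun x => ?_⟩
  have hbound : ∀ t ∈ uIoc 0 T, ‖φ t * Q (w (t, x)) - χ t * Q (w (t, x))‖ ≤
      η / ((A + 1) * T) * (A + 1) := by
    intro t ht
    rw [uIoc_of_le hT.le] at ht
    rw [← sub_mul, norm_mul]
    gcongr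
    · exact hnear t (Ioc_subset_Icc_self ht)
    · exact (hA _ (hw _)).trans (by linarith)
  rw [dist_eq_norm, weightedFlux, weightedFlux, ← intervalIntegral.integral_sub
    (intervalIntegrable_mul_comp hT.le hQ hwm hw hφ x)
    (intervalIntegrable_mul_comp hT.le hQ hwm hw hχ.continuous.continuousOn x)]
  calc _ ≤ η / ((A + 1) * T) * (A + 1) * |T - 0| :=
        intervalIntegral.norm_integral_le_of_norm_le_const hbound
    _ = η := by
      rw [sub_zero, abs_of_pos hT]
      field_simp

end WeightApproximation

namespace IsViscousLimit

variable {T p : ℝ} {v0 : ℝ → ℝ} {e : ℕ → ℝ} {u : ℕ → ℝ × ℝ → ℝ} {w : ℝ × ℝ → ℝ}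
  {F Q φ : ℝ → ℝ}

lemma tendsto_weightedFlux (h : IsViscousLimit T p v0 e u w) (hT : 0 ≤ T) (hQ : Continuous Q)
    (hφ : Continuous φ) {x : ℝ} (hx : x ∈ Icc (0 : ℝ) 1)
    (hlim : ∀ᵐ t ∂(volume.restrict (Icc 0 T)), Tendsto (fun n => u n (t, x)) atTop (𝓝 (w (t, x)))) :
    Tendsto (fun n => weightedFlux T Q φ (u n) x) atTop (𝓝 (weightedFlux T Q φ w x)) := by
  simp only [weightedFlux, integral_of_le hT, ← integral_Icc_eq_integral_Ioc, mul_comm (φ _)]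
  refine tendsto_integral_comp_mul (a := 0) (b := 1) hQ hφ.continuousOn.integrableOn_Icc
    (fun n => ((h.sol n).contDiff.continuous.comp (.prodMk_left x)).aestronglyMeasurable)
    (fun n => ?_) hlim
  filter_upwards [ae_restrict_mem measurableSet_Icc] with t ht using (h.sol n).mem t ht x hx

lemma ae_tendsto_viscousFlux (h : IsViscousLimit T p v0 e u w) (hT : 0 ≤ T)
    (hFQ : IsLaxPair F Q) (hφ : Continuous φ) :
    ∀ᵐ x, x ∈ Icc (0 : ℝ) 1 → Tendsto (fun n => viscousFlux T p (e n) F Q φ (u n) x) atTop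
      (𝓝 (p * weightedFlux T Q φ w x)) := by
  have hF := hFQ.1.of_le one_le_two
  obtain ⟨K, hK⟩ := exists_abs_mul_le_of_continuousOn_Icc (a := 0) (b := T) (c := 0) (d := 1)
    hφ.continuousOn (hF.continuous_deriv le_rfl).continuousOn
  rw [← ae_restrict_iff' measurableSet_Icc]
  filter_upwards [h.tendsto_ae_space, h.tendsto_gradient, ae_restrict_mem measurableSet_Icc]
    with x hlim hgrad hx
  have hviscous : Tendsto (fun n => viscousFlux T p (e n) F Q φ (u n) x -
      p * weightedFlux T Q φ (u n) x) atTop (𝓝 0) :=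
    squeeze_zero_norm (fun n => (h.sol n).abs_viscousFlux_sub_weightedFlux_le hT (h.pos n).le hF
      hFQ.2.1.continuous hφ hx hK) (by simpa using hgrad.const_mul K)
  simpa using hviscous.add
    ((h.tendsto_weightedFlux hT hFQ.2.1.continuous hφ hx hlim).const_mul p)

lemma exists_viscousFlux_sub_le (h : IsViscousLimit T p v0 e u w) (hT : 0 ≤ T)
    (hFQ : IsLaxPair F Q) (hφ : ContDiff ℝ 1 φ) (hφ0 : ∀ t ∈ Icc 0 T, 0 ≤ φ t) :
    ∃ C, ∀ n, ∀ x ∈ Icc (0 : ℝ) 1, ∀ y ∈ Icc (0 : ℝ) 1, x ≤ y →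
      viscousFlux T p (e n) F Q φ (u n) y - viscousFlux T p (e n) F Q φ (u n) x ≤ C * (y - x) := by
  have hF := hFQ.1.continuous.continuousOn (s := Icc 0 1)
  obtain ⟨K₁, hK₁⟩ := exists_abs_mul_le_of_continuousOn_Icc (a := 0) (b := T)
    (hφ.continuous_deriv le_rfl).continuousOn hF
  obtain ⟨K₂, hK₂⟩ := exists_abs_mul_le_of_continuousOn_Icc (a := 0) (b := T)
    hφ.continuous.continuousOn hF
  exact ⟨K₁ * T + 2 * K₂, fun n x hx y hy hxy =>
    (h.sol n).viscousFlux_sub_le hT (h.pos n).le hFQ hφ hφ0 hK₁ hK₂ hx.1 hxy hy.2⟩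

lemma exists_tendsto_weightedFlux_zero (h : IsViscousLimit T p v0 e u w) (hT : 0 < T) (hp : 0 < p)
    (hFQ : IsLaxPair F Q) (hQ : Q 0 = 0) (hφ : ContinuousOn φ (Icc 0 T))
    (hφ0 : ∀ t ∈ Icc 0 T, 0 ≤ φ t) :
    ∃ L ≤ 0, Tendsto (weightedFlux T Q φ w) (𝓝[>] 0 ⊓ ae volume) (𝓝 L) := by
  refine exists_mem_tendsto_of_uniform_approx isClosed_Iic fun η hη => ?_
  obtain ⟨χ, hχ, hχ0, hnear⟩ := exists_contDiff_weightedFlux_near hT hFQ.2.1.continuous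
    h.measurable h.mem hφ hφ0 hη
  obtain ⟨C, hC⟩ := h.exists_viscousFlux_sub_le hT.le hFQ hχ hχ0
  obtain ⟨L, hL, hlim⟩ := exists_tendsto_nhdsGT_ae_of_sub_le zero_lt_one hC
    (fun n => (h.sol n).viscousFlux_zero_nonpos hT.le hp.le hFQ hQ hχ0)
    (h.ae_tendsto_viscousFlux hT.le hFQ hχ.continuous)
  refine ⟨weightedFlux T Q χ w, L / p, div_nonpos_of_nonpos_of_nonneg hL hp.le, ?_,
    Eventually.of_forall hnear⟩
  simpa [hp.ne'] using hlim.div_const p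

lemma exists_tendsto_weightedFlux_one (h : IsViscousLimit T p v0 e u w) (hT : 0 < T) (hp : 0 < p)
    (hFQ : IsLaxPair F Q) (hQ : Q 1 = 0) (hφ : ContinuousOn φ (Icc 0 T))
    (hφ0 : ∀ t ∈ Icc 0 T, 0 ≤ φ t) :
    ∃ L, 0 ≤ L ∧ Tendsto (weightedFlux T Q φ w) (𝓝[<] 1 ⊓ ae volume) (𝓝 L) := by
  refine exists_mem_tendsto_of_uniform_approx isClosed_Ici fun η hη => ?_
  obtain ⟨χ, hχ, hχ0, hnear⟩ := exists_contDiff_weightedFlux_near hT hFQ.2.1.continuous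
    h.measurable h.mem hφ hφ0 hη
  obtain ⟨C, hC⟩ := h.exists_viscousFlux_sub_le hT.le hFQ hχ hχ0
  obtain ⟨L, hL, hlim⟩ := exists_tendsto_nhdsLT_ae_of_sub_le zero_lt_one hC
    (fun n => (h.sol n).viscousFlux_one_nonneg hT.le hp.le hFQ hQ hχ0)
    (h.ae_tendsto_viscousFlux hT.le hFQ hχ.continuous)
  refine ⟨weightedFlux T Q χ w, L / p, div_nonneg hL hp.le, ?_, Eventually.of_forall hnear⟩
  simpa [hp.ne'] using hlim.div_const p

end IsViscousLimit

/-! ### Entropy solutions -/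

/-- An entropy solution of `∂_t w + p ∂_x J(w) = 0` on `[0, T] × [0, 1]` with initial datum `v0` and
boundary data `0` at the left and `1` at the right end point. Essential limits are limits along the
infimum of a punctured neighbourhood filter with `ae volume`. -/
structure IsEntropySolution (T p : ℝ) (v0 : ℝ → ℝ) (w : ℝ × ℝ → ℝ) : Prop where
  measurable : Measurable w
  mem : ∀ z, w z ∈ Icc (0 : ℝ) 1
  entropy_inequality : ∀ F Q, IsLaxPair F Q → ∀ ψ : ℝ × ℝ → ℝ, ContDiff ℝ 1 ψ →
    tsupport ψ ⊆ Ioo 0 T ×ˢ Ioo (0 : ℝ) 1 → (∀ z, 0 ≤ ψ z) →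
    0 ≤ ∫ z in Ioo 0 T ×ˢ Ioo (0 : ℝ) 1, (F (w z) * tderiv ψ z + p * Q (w z) * xderiv ψ z)
  initial : Tendsto (fun t => ∫ x in (0 : ℝ)..1, |w (t, x) - v0 x|) (𝓝[>] 0 ⊓ ae volume) (𝓝 0)
  boundary_left : ∀ F Q, IsBoundaryPair F Q → ∀ φ, ContinuousOn φ (Icc 0 T) →
    (∀ t ∈ Icc 0 T, 0 ≤ φ t) → ∃ L ≤ (0 : ℝ),
    Tendsto (weightedFlux T (fun a => Q a 0) φ w) (𝓝[>] 0 ⊓ ae volume) (𝓝 L)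
  boundary_right : ∀ F Q, IsBoundaryPair F Q → ∀ φ, ContinuousOn φ (Icc 0 T) →
    (∀ t ∈ Icc 0 T, 0 ≤ φ t) → ∃ L, (0 : ℝ) ≤ L ∧
    Tendsto (weightedFlux T (fun a => Q a 1) φ w) (𝓝[<] 1 ⊓ ae volume) (𝓝 L)

lemma IsViscousLimit.isEntropySolution {T p B : ℝ} {v0 : ℝ → ℝ} {e : ℕ → ℝ} {u : ℕ → ℝ × ℝ → ℝ}
    {w : ℝ × ℝ → ℝ} (h : IsViscousLimit T p v0 e u w) (hT : 0 < T) (hp : 0 < p)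
    (hv0 : ContDiff ℝ 1 v0) (hB : ∀ x ∈ Icc (0 : ℝ) 1, |deriv v0 x| ≤ B) :
    IsEntropySolution T p v0 w where
  measurable := h.measurable
  mem := h.mem
  entropy_inequality _ _ hFQ _ hψ hsupp hψ0 :=
    h.entropy_inequality hT.le hp.le (hv0.differentiable one_ne_zero) hB hFQ hψ hψ0 hsupp
  initial := h.tendsto_initial hT hp.le hv0 hB
  boundary_left _ _ hFQ _ hφ hφ0 :=
    have ⟨hlax, _, _, hQ⟩ := hFQ 0 (left_mem_Icc.2 zero_le_one)
    h.exists_tendsto_weightedFlux_zero hT hp hlax hQ hφ hφ0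
  boundary_right _ _ hFQ _ hφ hφ0 :=
    have ⟨hlax, _, _, hQ⟩ := hFQ 1 (right_mem_Icc.2 zero_le_one)
    h.exists_tendsto_weightedFlux_one hT hp hlax hQ hφ hφ0

theorem stmt5_general {T p : ℝ} (hT : 0 < T) (hp : 0 < p) {v0 : ℝ → ℝ} (hv0 : ContDiff ℝ 1 v0)
    {u : ℝ → ℝ × ℝ → ℝ} (hu : ∀ ε > 0, IsViscousSolution T p ε v0 (u ε)) :
    ∃ w, IsEntropySolution T p v0 w ∧
      ∀ g : ℝ × ℝ → ℝ, IntegrableOn g (Icc 0 T ×ˢ Icc (0 : ℝ) 1) →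
        Tendsto (fun ε => ∫ z in Icc 0 T ×ˢ Icc (0 : ℝ) 1, u ε z * g z) (𝓝[>] 0)
          (𝓝 (∫ z in Icc 0 T ×ˢ Icc (0 : ℝ) 1, w z * g z)) := by
  obtain ⟨B, -, hB⟩ := exists_abs_le_of_continuousOn_Icc (a := 0) (b := 1)
    (hv0.continuous_deriv le_rfl).continuousOn
  have hdiff := hv0.differentiable one_ne_zero
  obtain ⟨w, hwm, hwb, hw⟩ := exists_tendstoInMeasure_viscous hT.le hp.le hdiff hB hu
  obtain ⟨e, he⟩ := exists_isViscousLimit hT.le hp.le hdiff hB hu hwm hwb hw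
  refine ⟨w, he.isEntropySolution hT hp hv0 hB, fun g hg => ?_⟩
  refine tendsto_integral_mul_of_tendstoInMeasure (C := 1) hg ?_ ?_ hw
  · filter_upwards [self_mem_nhdsWithin] with ε hε
    exact (hu ε hε).contDiff.continuous.aestronglyMeasurable
  · filter_upwards [self_mem_nhdsWithin] with ε hε
    filter_upwards [ae_restrict_mem (measurableSet_Icc.prod measurableSet_Icc)] with z hz
    have hmem := (hu ε hε).mem _ hz.1 _ hz.2
    exact (abs_of_nonneg hmem.1).trans_le hmem.2

/-- Theorem 2.8, zero-flux boundary case: vanishing viscosity limit of the viscous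
conservation law with zero-flux boundary conditions converges (weak-⋆ in `L^∞`) to the
entropy solution with boundary data `v₋ = 0`, `v₊ = 1`. -/
theorem stmt5 (T p : ℝ) (hT : 0 < T) (hp : 0 < p)
    (v0 : ℝ → ℝ) (hv0sm : ContDiff ℝ (⊤ : ℕ∞) v0)
    (hv0b : ∀ x ∈ Set.Icc (0:ℝ) 1, v0 x ∈ Set.Icc (0:ℝ) 1)
    (u : ℝ → ℝ × ℝ → ℝ)
    (hsm : ∀ ε > (0:ℝ), ContDiff ℝ (⊤ : ℕ∞) (u ε))
    (hub : ∀ ε > (0:ℝ), ∀ z ∈ Set.Icc (0:ℝ) T ×ˢ Set.Icc (0:ℝ) 1, u ε z ∈ Set.Icc (0:ℝ) 1)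
    (hpde : ∀ ε > (0:ℝ), ∀ t ∈ Set.Ioo 0 T, ∀ x ∈ Set.Ioo (0:ℝ) 1,
      deriv (fun s => u ε (s, x)) t
        = ε * deriv (deriv (fun y => u ε (t, y))) x
          - p * deriv (fun y => J (u ε (t, y))) x)
    (hinit : ∀ ε > (0:ℝ), ∀ x ∈ Set.Icc (0:ℝ) 1, u ε (0, x) = v0 x)
    (hbc0 : ∀ ε > (0:ℝ), ∀ t ∈ Set.Icc (0:ℝ) T,
      ε * deriv (fun y => u ε (t, y)) 0 - p * J (u ε (t, 0)) = 0)
    (hbc1 : ∀ ε > (0:ℝ), ∀ t ∈ Set.Icc (0:ℝ) T,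
      ε * deriv (fun y => u ε (t, y)) 1 - p * J (u ε (t, 1)) = 0) :
    ∃ w : ℝ × ℝ → ℝ, Measurable w ∧
      (∀ᵐ z ∂(volume.restrict (Set.Icc (0:ℝ) T ×ˢ Set.Icc (0:ℝ) 1)), w z ∈ Set.Icc (0:ℝ) 1) ∧
      -- weak-⋆ convergence in L^∞([0,T]×[0,1]) as ε → 0⁺
      (∀ g : ℝ × ℝ → ℝ, IntegrableOn g (Set.Icc (0:ℝ) T ×ˢ Set.Icc (0:ℝ) 1) →
        Tendsto (fun ε => ∫ z in Set.Icc (0:ℝ) T ×ˢ Set.Icc (0:ℝ) 1, u ε z * g z)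
          (nhdsWithin 0 (Set.Ioi 0))
          (nhds (∫ z in Set.Icc (0:ℝ) T ×ˢ Set.Icc (0:ℝ) 1, w z * g z))) ∧
      -- (i) the entropy inequality
      (∀ F Q : ℝ → ℝ, IsLaxPair F Q → ∀ ψ : ℝ × ℝ → ℝ,
        ContDiff ℝ (⊤ : ℕ∞) ψ → HasCompactSupport ψ →
        tsupport ψ ⊆ Set.Ioo 0 T ×ˢ Set.Ioo (0:ℝ) 1 → (∀ z, 0 ≤ ψ z) →
        0 ≤ ∫ z in Set.Ioo (0:ℝ) T ×ˢ Set.Ioo (0:ℝ) 1,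
              (F (w z) * fderiv ℝ ψ z (1, 0) + p * Q (w z) * fderiv ℝ ψ z (0, 1))) ∧
      -- (ii) the initial condition, as an essential limit t → 0+
      Tendsto (fun t => ∫ x in (0:ℝ)..1, |w (t, x) - v0 x|)
        (nhdsWithin 0 (Set.Ioi 0) ⊓ ae volume) (nhds 0) ∧
      -- (iii) the Otto boundary conditions with data v₋ = 0, v₊ = 1
      (∀ F Q : ℝ → ℝ → ℝ, IsBoundaryPair F Q →
        ∀ φ : ℝ → ℝ, ContinuousOn φ (Set.Icc 0 T) → (∀ t ∈ Set.Icc (0:ℝ) T, 0 ≤ φ t) →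
        (∃ Lm ≤ (0:ℝ), Tendsto (fun x => ∫ t in (0:ℝ)..T, φ t * Q (w (t, x)) 0)
            (nhdsWithin 0 (Set.Ioi 0) ⊓ ae volume) (nhds Lm)) ∧
        (∃ Lp, 0 ≤ Lp ∧ Tendsto (fun x => ∫ t in (0:ℝ)..T, φ t * Q (w (t, x)) 1)
            (nhdsWithin 1 (Set.Iio 1) ⊓ ae volume) (nhds Lp))) := by
  obtain ⟨w, hw, hweak⟩ := stmt5_general hT hp (hv0sm.of_le (by simp)) fun ε hε =>
    IsViscousSolution.of_interior hT.ne' (contDiff_infty.1 (hsm ε hε) 2) (hub ε hε) (hpde ε hε)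
      (hinit ε hε) (hbc0 ε hε) (hbc1 ε hε)
  exact ⟨w, hw.measurable, Eventually.of_forall hw.mem, hweak,
    fun F Q hFQ ψ hψ _ => hw.entropy_inequality F Q hFQ ψ (hψ.of_le (by simp)), hw.initial,
    fun F Q hFQ φ hφ hφ0 => ⟨hw.boundary_left F Q hFQ φ hφ hφ0,
      hw.boundary_right F Q hFQ φ hφ hφ0⟩⟩
end

section
/- Let p > 0, α, γ ≥ 0, set v₋ = (p+α+γ−√((p−α+γ)²+4αγ))/(2p) and 𝔧(u) = p u(1−u) + (α+γ)u − α. Then for every boundary entropy flux pair (ℱ,𝒬) and every u ∈ [0,1], ∂_u ℱ(u, v₋) · 𝔧(u) − p 𝒬(u, v₋) ≥ 0. (Claim (eq. v2) in the proof of Theorem 2.8.) -/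
open Set

/-!
Let `j` be the boundary flux, `v` its zero in `[0, 1]` and `G = F' j - p Q`. Since
`j' = p J' + (α + γ)` and `Q' = J' F'`, the terms with `J'` cancel and
`G' = F'' j + (α + γ) F'`. Since `F` is convex with `F' v = 0`, both `j` and `F'` change sign from
nonpositive to nonnegative at `v`; hence so does `G'`, and the minimum of `G` on `[0, 1]` is
`G v = 0`.
-/

section SignChange

variable {s : Set ℝ} {v u : ℝ}

lemma le_of_sub_mul_deriv_nonneg {f f' : ℝ → ℝ} (hs : Convex ℝ s)
    (hf : ∀ x ∈ s, HasDerivWithinAt f (f' x) s x) (hf' : ∀ x ∈ s, 0 ≤ (x - v) * f' x)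
    (hv : v ∈ s) (hu : u ∈ s) : f v ≤ f u := by
  have hcont : ContinuousOn f s := fun x hx => (hf x hx).continuousWithinAt
  have hderiv {t : Set ℝ} {x : ℝ} (hx : x ∈ interior (s ∩ t)) :
      HasDerivWithinAt f (f' x) (interior (s ∩ t)) x :=
    (hf x (interior_subset hx).1).mono (interior_subset.trans inter_subset_left)
  rcases le_total v u with hvu | huv
  · have hmono : MonotoneOn f (s ∩ Ici v) := by
      refine monotoneOn_of_hasDerivWithinAt_nonneg (hs.inter (convex_Ici v))
        (hcont.mono inter_subset_left) (fun x hx => hderiv hx) fun x hx => ?_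
      have hvx : v < x := by
        rw [interior_inter, interior_Ici] at hx
        exact hx.2
      exact nonneg_of_mul_nonneg_right (hf' x (interior_subset hx).1) (sub_pos.2 hvx)
    exact hmono ⟨hv, self_mem_Ici⟩ ⟨hu, hvu⟩ hvu
  · have hanti : AntitoneOn f (s ∩ Iic v) := by
      refine antitoneOn_of_hasDerivWithinAt_nonpos (hs.inter (convex_Iic v))
        (hcont.mono inter_subset_left) (fun x hx => hderiv hx) fun x hx => ?_
      have hxv : x < v := by
        rw [interior_inter, interior_Iic] at hx
        exact hx.2
      exact nonpos_of_mul_nonneg_right (hf' x (interior_subset hx).1) (sub_neg.2 hxv)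
    exact hanti ⟨hu, huv⟩ ⟨hv, self_mem_Iic⟩ huv

lemma sub_mul_nonneg_of_monotoneOn {f : ℝ → ℝ} (hf : MonotoneOn f s) (hv : v ∈ s) (hfv : f v = 0)
    (hu : u ∈ s) : 0 ≤ (u - v) * f u := by
  simpa [hfv] using
    monovaryOn_iff_forall_mul_nonneg.1 (monotoneOn_id.monovaryOn hf) hv hu

lemma deriv_entropy_mul_flux_sub_nonneg {F' F'' Q J' j : ℝ → ℝ} {p c : ℝ} (hs : Convex ℝ s)
    (hF' : ∀ x ∈ s, HasDerivWithinAt F' (F'' x) s x)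
    (hQ : ∀ x ∈ s, HasDerivWithinAt Q (J' x * F' x) s x)
    (hj : ∀ x ∈ s, HasDerivWithinAt j (p * J' x + c) s x)
    (hF'' : ∀ x ∈ s, 0 ≤ F'' x) (hc : 0 ≤ c) (hjv : ∀ x ∈ s, 0 ≤ (x - v) * j x)
    (hv : v ∈ s) (hF'v : F' v = 0) (hQv : Q v = 0) (hu : u ∈ s) :
    0 ≤ F' u * j u - p * Q u := by
  have hmono : MonotoneOn F' s :=
    monotoneOn_of_hasDerivWithinAt_nonneg hs (fun x hx => (hF' x hx).continuousWithinAt)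
      (fun x hx => (hF' x (interior_subset hx)).mono interior_subset)
      (fun x hx => hF'' x (interior_subset hx))
  have hderiv : ∀ x ∈ s, HasDerivWithinAt (fun y => F' y * j y - p * Q y)
      (F'' x * j x + c * F' x) s x := fun x hx =>
    (((hF' x hx).mul (hj x hx)).sub ((hQ x hx).const_mul p)).congr_deriv (by ring)
  have hsign : ∀ x ∈ s, 0 ≤ (x - v) * (F'' x * j x + c * F' x) := fun x hx =>
    calc
      0 ≤ F'' x * ((x - v) * j x) + c * ((x - v) * F' x) :=
        add_nonneg (mul_nonneg (hF'' x hx) (hjv x hx))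
          (mul_nonneg hc (sub_mul_nonneg_of_monotoneOn hmono hv hF'v hx))
      _ = (x - v) * (F'' x * j x + c * F' x) := by ring
  simpa only [hF'v, hQv, zero_mul, mul_zero, sub_zero] using
    le_of_sub_mul_deriv_nonneg hs hderiv hsign hv hu

end SignChange

/-- The stationary boundary flux `𝔧(u) = p J(u) + (α + γ) u - α` with `J(u) = u (1 - u)`. -/
def boundaryFlux (p α γ u : ℝ) : ℝ := p * (u * (1 - u)) + (α + γ) * u - α

/-- The zero `v₋` of `boundaryFlux p α γ` in `[0, 1]`, for `p ≠ 0` and `0 ≤ α, γ`. -/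
noncomputable def boundaryFluxRoot (p α γ : ℝ) : ℝ :=
  (p + α + γ - Real.sqrt ((p - α + γ) ^ 2 + 4 * α * γ)) / (2 * p)

section BoundaryFlux

variable {p α γ : ℝ}

lemma hasDerivAt_boundaryFlux (u : ℝ) :
    HasDerivAt (boundaryFlux p α γ) (p * (1 - 2 * u) + (α + γ)) u := by
  have hJ : HasDerivAt (fun x : ℝ => x * (1 - x)) (1 - 2 * u) u :=
    ((hasDerivAt_id' u).mul ((hasDerivAt_id' u).const_sub 1)).congr_deriv (by ring)
  exact (((hJ.const_mul p).add ((hasDerivAt_id' u).const_mul (α + γ))).sub_const α).congr_deriv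
    (by ring)

lemma boundaryFlux_eq_sub_root_mul (hp : p ≠ 0)
    (hdisc : 0 ≤ (p - α + γ) ^ 2 + 4 * α * γ) (u : ℝ) :
    boundaryFlux p α γ u = (u - boundaryFluxRoot p α γ) *
      ((p + α + γ + Real.sqrt ((p - α + γ) ^ 2 + 4 * α * γ)) / 2 - p * u) := by
  have hsq := Real.sq_sqrt hdisc
  unfold boundaryFlux boundaryFluxRoot
  set s := Real.sqrt ((p - α + γ) ^ 2 + 4 * α * γ)
  field_simp
  linear_combination (-1) * hsq

lemma boundaryFluxRoot_nonneg (hα : 0 ≤ α) (hγ : 0 ≤ γ) : 0 ≤ boundaryFluxRoot p α γ := by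
  unfold boundaryFluxRoot
  rcases le_total 0 p with hp | hp
  · have hs : Real.sqrt ((p - α + γ) ^ 2 + 4 * α * γ) ≤ p + α + γ :=
      Real.sqrt_le_iff.2 ⟨by positivity, by nlinarith [mul_nonneg hp hα]⟩
    exact div_nonneg (sub_nonneg.2 hs) (by positivity)
  · have hs : p + α + γ ≤ Real.sqrt ((p - α + γ) ^ 2 + 4 * α * γ) :=
      Real.le_sqrt_of_sq_le (by nlinarith [mul_nonneg (neg_nonneg.2 hp) hα])
    exact div_nonneg_of_nonpos (sub_nonpos.2 hs) (by linarith)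

-- The reflection `u ↦ 1 - u` turns `boundaryFlux p α γ` into `-boundaryFlux (-p) γ α`.
lemma one_sub_boundaryFluxRoot (hp : p ≠ 0) :
    1 - boundaryFluxRoot p α γ = boundaryFluxRoot (-p) γ α := by
  have hdisc : (-p - γ + α) ^ 2 + 4 * γ * α = (p - α + γ) ^ 2 + 4 * α * γ := by ring
  unfold boundaryFluxRoot
  rw [hdisc]
  field_simp
  ring

lemma boundaryFluxRoot_mem_Icc (hp : p ≠ 0) (hα : 0 ≤ α) (hγ : 0 ≤ γ) :
    boundaryFluxRoot p α γ ∈ Icc (0 : ℝ) 1 := by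
  refine ⟨boundaryFluxRoot_nonneg hα hγ, sub_nonneg.1 ?_⟩
  rw [one_sub_boundaryFluxRoot hp]
  exact boundaryFluxRoot_nonneg hγ hα

lemma sub_root_mul_boundaryFlux_nonneg (hp : p ≠ 0) (hα : 0 ≤ α) (hγ : 0 ≤ γ) {u : ℝ}
    (hu : u ∈ Icc (0 : ℝ) 1) : 0 ≤ (u - boundaryFluxRoot p α γ) * boundaryFlux p α γ u := by
  have hsq_le : (p - α + γ) ^ 2 ≤ (p - α + γ) ^ 2 + 4 * α * γ :=
    le_add_of_nonneg_right (by positivity)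
  obtain ⟨hneg, hpos⟩ := abs_le.1 (Real.abs_le_sqrt hsq_le)
  rw [boundaryFlux_eq_sub_root_mul hp (by positivity), ← mul_assoc]
  set s := Real.sqrt ((p - α + γ) ^ 2 + 4 * α * γ)
  -- The cofactor is affine in `u`, at least `α` at `u = 0` and at least `γ` at `u = 1`.
  have hcofactor : 0 ≤ (p + α + γ + s) / 2 - p * u :=
    calc
      0 ≤ (1 - u) * α + u * γ :=
        add_nonneg (mul_nonneg (sub_nonneg.2 hu.2) hα) (mul_nonneg hu.1 hγ)
      _ ≤ (1 - u) * ((p + α + γ + s) / 2) + u * ((p + α + γ + s) / 2 - p) :=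
        add_le_add (mul_le_mul_of_nonneg_left (by linarith) (sub_nonneg.2 hu.2))
          (mul_le_mul_of_nonneg_left (by linarith) hu.1)
      _ = (p + α + γ + s) / 2 - p * u := by ring
  exact mul_nonneg (mul_self_nonneg _) hcofactor

end BoundaryFlux

namespace IsLaxPair

variable {F Q : ℝ → ℝ}

lemma hasDerivAt_deriv (h : IsLaxPair F Q) (u : ℝ) :
    HasDerivAt (deriv F) (deriv (deriv F) u) u :=
  (h.1.differentiable_deriv_two u).hasDerivAt

lemma hasDerivAt_flux (h : IsLaxPair F Q) {u : ℝ} (hu : u ∈ Icc (0 : ℝ) 1) :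
    HasDerivAt Q ((1 - 2 * u) * deriv F u) u :=
  h.2.2.1 u hu ▸ (h.2.1.differentiable two_ne_zero u).hasDerivAt

end IsLaxPair

theorem stmt7_general {p α γ : ℝ} (hp : p ≠ 0) (hα : 0 ≤ α) (hγ : 0 ≤ γ) {F Q : ℝ → ℝ}
    (hFQ : IsLaxPair F Q) (hF : deriv F (boundaryFluxRoot p α γ) = 0)
    (hQ : Q (boundaryFluxRoot p α γ) = 0) {u : ℝ} (hu : u ∈ Icc (0 : ℝ) 1) :
    0 ≤ deriv F u * boundaryFlux p α γ u - p * Q u :=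
  deriv_entropy_mul_flux_sub_nonneg (convex_Icc 0 1)
    (fun x _ => (hFQ.hasDerivAt_deriv x).hasDerivWithinAt)
    (fun _ hx => (hFQ.hasDerivAt_flux hx).hasDerivWithinAt)
    (fun x _ => (hasDerivAt_boundaryFlux x).hasDerivWithinAt)
    hFQ.2.2.2 (add_nonneg hα hγ) (fun _ => sub_root_mul_boundaryFlux_nonneg hp hα hγ)
    (boundaryFluxRoot_mem_Icc hp hα hγ) hF hQ hu

/-- Claim (eq. v2) in the proof of Theorem 2.8:
`∂_u ℱ(u, v₋) · 𝔧(u) − p 𝒬(u, v₋) ≥ 0` for every boundary entropy flux pair,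
where `𝔧(u) = pJ(u) + (α+γ)u − α` is the stationary boundary flux at `x = 0`. -/
theorem stmt7 (p α γ : ℝ) (hp : 0 < p) (hα : 0 ≤ α) (hγ : 0 ≤ γ)
    (vm : ℝ) (hvm : vm = (p + α + γ - Real.sqrt ((p - α + γ)^2 + 4*α*γ)) / (2*p)) :
    ∀ F Q : ℝ → ℝ → ℝ, IsBoundaryPair F Q →
      ∀ u ∈ Set.Icc (0:ℝ) 1,
        0 ≤ deriv (fun w => F w vm) u * (p * (u * (1 - u)) + (α + γ) * u - α)
              - p * Q u vm := by
  intro F Q hFQ u hu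
  subst hvm
  obtain ⟨hLax, -, hF, hQ⟩ := hFQ _ (boundaryFluxRoot_mem_Icc hp.ne' hα hγ)
  exact stmt7_general hp.ne' hα hγ hLax hF hQ hu
end

section
/- Fix p > 0, T > 0 and y ∈ [0,1], and define ū_y : [0,1] → ℝ by ū_y(x) = 1 if x > y and ū_y(x) = 0 otherwise. Then the time-independent function u(t,x) = ū_y(x) satisfies the three conditions defining an entropy solution of ∂_t u + p∂_x[J(u)] = 0 on [0,T]×[0,1] with boundary data v₋ = 0, v₊ = 1 and initial datum v₀ = ū_y: (i) for every Lax entropy flux pair (F,Q) and every nonnegative ψ ∈ C_c^∞((0,T)×(0,1)), ∫₀ᵀ∫₀¹ [F(ū_y(x)) ∂_t ψ + p Q(ū_y(x)) ∂_x ψ] dx dt ≥ 0; (ii) ∫₀¹ |u(t,x) − ū_y(x)| dx = 0 for all t; (iii) for every boundary entropy flux pair (ℱ,𝒬) and every nonnegative φ ∈ C([0,T]), lim_{x→0+} ∫₀ᵀ φ(t) 𝒬(ū_y(x), 0) dt ≤ 0 and lim_{x→1−} ∫₀ᵀ φ(t) 𝒬(ū_y(x), 1) dt ≥ 0. (The single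 upward-shock profiles ū_y are stationary entropy solutions, Section 2.5.) -/
open Set MeasureTheory intervalIntegral Filter

/-- The single upward-shock profile `ū_y`. -/
noncomputable def ubar (y x : ℝ) : ℝ := if y < x then 1 else 0

/-!
The profile `ū_y` jumps between the two zeros `0` and `1` of `J`. Being independent of time, it
produces entropy only at the jump, so that the integral in the entropy inequality equals
`p (Q 0 - Q 1) ∫ ψ(t, y) dt`. Integrating `Q' = J' F'` by parts gives
`Q 1 - Q 0 = -∫ u in 0..1, J u * F'' u ≤ 0`. The same inequality `Q 1 ≤ Q 0` yields the boundary
conditions, because `ū_y` is `0` or `1` near each end point and `𝒬(v, v) = 0`.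
-/

theorem antitoneOn_sub_mul_of_hasDerivWithinAt {s : Set ℝ} (hs : Convex ℝ s)
    {J J' η η' Q : ℝ → ℝ} (hJ : ∀ u ∈ s, HasDerivWithinAt J (J' u) s u)
    (hη : ∀ u ∈ s, HasDerivWithinAt η (η' u) s u)
    (hQ : ∀ u ∈ s, HasDerivWithinAt Q (J' u * η u) s u)
    (hJ_nonneg : ∀ u ∈ s, 0 ≤ J u) (hη'_nonneg : ∀ u ∈ s, 0 ≤ η' u) :
    AntitoneOn (fun u => Q u - J u * η u) s := by
  have hderiv : ∀ u ∈ s, HasDerivWithinAt (fun u => Q u - J u * η u) (-(J u * η' u)) s u :=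
    fun u hu => ((hQ u hu).sub ((hJ u hu).mul (hη u hu))).congr_deriv (by ring)
  refine antitoneOn_of_hasDerivWithinAt_nonpos hs
    (fun u hu => (hderiv u hu).continuousWithinAt)
    (fun u hu => (hderiv u (interior_subset hu)).mono interior_subset) fun u hu => ?_
  have hu' : u ∈ s := interior_subset hu
  exact neg_nonpos.2 (mul_nonneg (hJ_nonneg u hu') (hη'_nonneg u hu'))

theorem IsLaxPair.flux_one_le_flux_zero {F Q : ℝ → ℝ} (h : IsLaxPair F Q) : Q 1 ≤ Q 0 := by
  obtain ⟨hF, hQ, hQ_deriv, hF_convex⟩ := h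
  have hJ_deriv : ∀ u : ℝ, HasDerivAt (fun u => u * (1 - u)) (1 - 2 * u) u := fun u =>
    ((hasDerivAt_id' u).mul ((hasDerivAt_id' u).const_sub 1)).congr_deriv (by ring)
  have hF'_deriv : ∀ u, HasDerivAt (deriv F) (deriv (deriv F) u) u := fun u =>
    ((hF.iterate_deriv' 1 1).differentiable one_ne_zero u).hasDerivAt
  have hanti : AntitoneOn (fun u => Q u - u * (1 - u) * deriv F u) (Icc 0 1) :=
    antitoneOn_sub_mul_of_hasDerivWithinAt (convex_Icc 0 1)
      (fun u _ => (hJ_deriv u).hasDerivWithinAt) (fun u _ => (hF'_deriv u).hasDerivWithinAt)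
      (fun u hu => hQ_deriv u hu ▸ (hQ.differentiable two_ne_zero u).hasDerivAt.hasDerivWithinAt)
      (fun u hu => mul_nonneg hu.1 (sub_nonneg.2 hu.2)) hF_convex
  simpa using hanti (left_mem_Icc.2 zero_le_one) (right_mem_Icc.2 zero_le_one) zero_le_one

theorem IsBoundaryPair.flux_zero_nonpos {F Q : ℝ → ℝ → ℝ} (h : IsBoundaryPair F Q) {u : ℝ}
    (hu : u = 0 ∨ u = 1) : Q u 0 ≤ 0 := by
  obtain ⟨hlax, -, -, hQ⟩ := h 0 (left_mem_Icc.2 zero_le_one)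
  rcases hu with rfl | rfl
  · exact hQ.le
  · exact hlax.flux_one_le_flux_zero.trans_eq hQ

theorem IsBoundaryPair.flux_one_nonneg {F Q : ℝ → ℝ → ℝ} (h : IsBoundaryPair F Q) {u : ℝ}
    (hu : u = 0 ∨ u = 1) : 0 ≤ Q u 1 := by
  obtain ⟨hlax, -, -, hQ⟩ := h 1 (right_mem_Icc.2 zero_le_one)
  rcases hu with rfl | rfl
  · exact hQ.symm.trans_le hlax.flux_one_le_flux_zero
  · exact hQ.ge

theorem comp_ubar (f : ℝ → ℝ) (y x : ℝ) : f (ubar y x) = if y < x then f 1 else f 0 :=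
  apply_ite f (y < x) 1 0

theorem locallyIntegrable_comp_ubar {X : Type*} [TopologicalSpace X] [MeasurableSpace X]
    {μ : Measure X} [IsLocallyFiniteMeasure μ] {g : X → ℝ} (hg : Measurable g)
    (f : ℝ → ℝ) (y : ℝ) : LocallyIntegrable (fun z => f (ubar y (g z))) μ := by
  have hmeas : Measurable fun z => f (ubar y (g z)) := by
    simp only [comp_ubar f]
    exact Measurable.ite (measurableSet_lt measurable_const hg) measurable_const measurable_const
  refine (locallyIntegrable_const (max |f 1| |f 0|)).mono hmeas.aestronglyMeasurable
    (Eventually.of_forall fun z => ?_)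
  rw [comp_ubar f]
  split_ifs <;> simp [le_abs]

section TestFunction

variable {E G : Type*} [NormedAddCommGroup E] [NormedSpace ℝ E] [MeasurableSpace E]
  [NormedAddCommGroup G] [NormedSpace ℝ G]

theorem integrable_smul_fderiv_apply [OpensMeasurableSpace E] {μ : Measure E} {w : E → ℝ}
    {ψ : E → G} (hw : LocallyIntegrable w μ) (hψ : ContDiff ℝ 1 ψ) (hc : HasCompactSupport ψ)
    (v : E) : Integrable (fun z => w z • fderiv ℝ ψ z v) μ :=
  hw.integrable_smul_right_of_hasCompactSupport
    ((hψ.continuous_fderiv one_ne_zero).clm_apply continuous_const) (hc.fderiv_apply ℝ v)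

theorem integral_smul_fderiv_apply_eq_zero_of_invariant [BorelSpace E] [FiniteDimensional ℝ E]
    {μ : Measure E} [μ.IsAddHaarMeasure] {w : E → ℝ} {ψ : E → G} {v : E}
    (hw : LocallyIntegrable w μ) (hinv : ∀ z (t : ℝ), w (z + t • v) = w z)
    (hψ : ContDiff ℝ 1 ψ) (hc : HasCompactSupport ψ) :
    ∫ z, w z • fderiv ℝ ψ z v ∂μ = 0 := by
  have hw_deriv : ∀ z, HasLineDerivAt ℝ w 0 z v := fun z => by
    simpa only [HasLineDerivAt, hinv] using hasDerivAt_const (0 : ℝ) (w z)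
  have hψ_deriv : ∀ z, HasLineDerivAt ℝ ψ (fderiv ℝ ψ z v) z v := fun z =>
    (hψ.differentiable one_ne_zero z).hasFDerivAt.hasLineDerivAt v
  simpa using integral_bilinear_hasLineDerivAt_right_eq_neg_left_of_integrable
    (B := ContinuousLinearMap.lsmul ℝ ℝ) (μ := μ) (f' := fun _ => 0) (by simp)
    (integrable_smul_fderiv_apply hw hψ hc v)
    (hw.integrable_smul_right_of_hasCompactSupport hψ.continuous hc)
    (fun z _ => hw_deriv z) (fun z _ => hψ_deriv z)

theorem integral_ite_lt_smul_deriv [CompleteSpace G] {g : ℝ → G} (hg : ContDiff ℝ 1 g)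
    (hc : HasCompactSupport g) (y a b : ℝ) :
    ∫ x, (if y < x then a else b) • deriv g x = (b - a) • g y := by
  have hint : Integrable (deriv g) :=
    (hg.continuous_deriv le_rfl).integrable_of_hasCompactSupport hc.deriv
  calc ∫ x, (if y < x then a else b) • deriv g x
    _ = ∫ x, (Ioi y).piecewise (a • deriv g) (b • deriv g) x := by
      simp only [piecewise, mem_Ioi, ite_smul, Pi.smul_apply]
    _ = (∫ x in Ioi y, a • deriv g x) + ∫ x in Iic y, b • deriv g x := by
      rw [integral_piecewise measurableSet_Ioi (hint.smul a).integrableOn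
        (hint.smul b).integrableOn, compl_Ioi]
      rfl
    _ = a • -g y + b • g y := by
      rw [MeasureTheory.integral_smul, MeasureTheory.integral_smul,
        hc.integral_Ioi_deriv_eq hg, hc.integral_Iic_deriv_eq hg]
    _ = (b - a) • g y := by module

theorem integral_comp_ubar_smul_fderiv_inr [CompleteSpace G] [BorelSpace E]
    [SecondCountableTopology E] {μ : Measure E} [IsLocallyFiniteMeasure μ]
    {ψ : E × ℝ → G} (hψ : ContDiff ℝ 1 ψ) (hc : HasCompactSupport ψ) (f : ℝ → ℝ) (y : ℝ) :
    ∫ z, f (ubar y z.2) • fderiv ℝ ψ z (0, 1) ∂(μ.prod volume) =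
      (f 0 - f 1) • ∫ t, ψ (t, y) ∂μ := by
  have hint : Integrable (fun z => f (ubar y z.2) • fderiv ℝ ψ z (0, 1)) (μ.prod volume) :=
    integrable_smul_fderiv_apply (locallyIntegrable_comp_ubar measurable_snd f y) hψ hc _
  rw [integral_prod _ hint, ← MeasureTheory.integral_smul]
  refine integral_congr_ae (Eventually.of_forall fun t => ?_)
  have hslice : Topology.IsClosedEmbedding (Prod.mk t : ℝ → E × ℝ) :=
    Function.LeftInverse.isClosedEmbedding (f := Prod.snd) (fun _ => rfl) continuous_snd
      (by fun_prop)
  have hderiv : ∀ x, deriv (fun x => ψ (t, x)) x = fderiv ℝ ψ (t, x) (0, 1) := fun x =>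
    ((hψ.differentiable one_ne_zero (t, x)).hasFDerivAt.comp_hasDerivAt x
      ((hasDerivAt_const x t).prodMk (hasDerivAt_id' x))).deriv
  simpa only [hderiv, comp_ubar f] using integral_ite_lt_smul_deriv (g := fun x => ψ (t, x))
    (hψ.comp (by fun_prop)) (hc.comp_isClosedEmbedding hslice) y (f 1) (f 0)

theorem integral_comp_ubar_mul_fderiv_add {ψ : ℝ × ℝ → ℝ} (hψ : ContDiff ℝ 1 ψ)
    (hc : HasCompactSupport ψ) (f g : ℝ → ℝ) (y : ℝ) :
    ∫ z : ℝ × ℝ, (f (ubar y z.2) * fderiv ℝ ψ z (1, 0) + g (ubar y z.2) * fderiv ℝ ψ z (0, 1)) =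
      (g 0 - g 1) * ∫ t, ψ (t, y) := by
  have hint : ∀ (h : ℝ → ℝ) (v : ℝ × ℝ),
      Integrable fun z : ℝ × ℝ => h (ubar y z.2) * fderiv ℝ ψ z v := fun h v =>
    integrable_smul_fderiv_apply (locallyIntegrable_comp_ubar measurable_snd h y) hψ hc v
  have htime : ∫ z : ℝ × ℝ, f (ubar y z.2) * fderiv ℝ ψ z (1, 0) = 0 :=
    integral_smul_fderiv_apply_eq_zero_of_invariant (locallyIntegrable_comp_ubar measurable_snd f y)
      (fun z t => by simp) hψ hc
  have hspace : ∫ z : ℝ × ℝ, g (ubar y z.2) * fderiv ℝ ψ z (0, 1) =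
      (g 0 - g 1) * ∫ t, ψ (t, y) :=
    integral_comp_ubar_smul_fderiv_inr hψ hc g y
  rw [integral_add (hint f _) (hint g _), htime, hspace, zero_add]

theorem setIntegral_ubar_entropy_nonneg {p y : ℝ} (hp : 0 ≤ p) {F Q : ℝ → ℝ}
    (hFQ : IsLaxPair F Q) {ψ : ℝ × ℝ → ℝ} (hψ : ContDiff ℝ 1 ψ) (hc : HasCompactSupport ψ)
    {s : Set (ℝ × ℝ)} (hs : tsupport ψ ⊆ s) (hψ_nonneg : ∀ z, 0 ≤ ψ z) :
    0 ≤ ∫ z in s, (F (ubar y z.2) * fderiv ℝ ψ z (1, 0)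
      + p * Q (ubar y z.2) * fderiv ℝ ψ z (0, 1)) := by
  rw [setIntegral_eq_integral_of_forall_compl_eq_zero fun z hz => by
      simp [fderiv_of_notMem_tsupport ℝ fun h => hz (hs h)],
    integral_comp_ubar_mul_fderiv_add hψ hc F (fun u => p * Q u), ← mul_sub]
  exact mul_nonneg (mul_nonneg hp (sub_nonneg.2 hFQ.flux_one_le_flux_zero))
    (integral_nonneg fun t => hψ_nonneg (t, y))

end TestFunction

theorem ubar_eq_zero_or_one (y x : ℝ) : ubar y x = 0 ∨ ubar y x = 1 :=
  (ite_eq_or_eq (y < x) 1 0).symm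

theorem ubar_eventuallyEq_nhdsLT (y x₀ : ℝ) :
    ubar y =ᶠ[nhdsWithin x₀ (Iio x₀)] fun _ => ubar y x₀ := by
  rcases lt_or_ge y x₀ with h | h
  · filter_upwards [nhdsWithin_le_nhds (Ioi_mem_nhds h)] with x hx
    simp [ubar, h, mem_Ioi.1 hx]
  · filter_upwards [self_mem_nhdsWithin] with x hx
    simp [ubar, h.not_gt, ((mem_Iio.1 hx).trans_le h).not_gt]

theorem exists_ubar_eventuallyEq_nhdsGT (y x₀ : ℝ) :
    ∃ c, (c = 0 ∨ c = 1) ∧ ubar y =ᶠ[nhdsWithin x₀ (Ioi x₀)] fun _ => c := by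
  rcases le_or_gt y x₀ with h | h
  · refine ⟨1, .inr rfl, ?_⟩
    filter_upwards [self_mem_nhdsWithin] with x hx
    exact if_pos (h.trans_lt hx)
  · refine ⟨0, .inl rfl, ?_⟩
    filter_upwards [nhdsWithin_le_nhds (Iio_mem_nhds h)] with x hx
    exact if_neg (mem_Iio.1 hx).not_gt

theorem tendsto_intervalIntegral_mul_comp_of_eventuallyEq {α β : Type*} {l : Filter α}
    {u : α → β} {c : β} (hu : u =ᶠ[l] fun _ => c) (φ : ℝ → ℝ) (q : β → ℝ) (a b : ℝ) :
    Tendsto (fun x => ∫ t in a..b, φ t * q (u x)) l (nhds ((∫ t in a..b, φ t) * q c)) := by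
  simp only [intervalIntegral.integral_mul_const]
  exact tendsto_const_nhds.congr' (hu.symm.fun_comp fun v => (∫ t in a..b, φ t) * q v)

theorem stmt9_general (p T y : ℝ) (hp : 0 ≤ p) (hT : 0 ≤ T) :
    (∀ F Q : ℝ → ℝ, IsLaxPair F Q → ∀ ψ : ℝ × ℝ → ℝ,
      ContDiff ℝ 1 ψ → HasCompactSupport ψ →
      tsupport ψ ⊆ Ioo (0 : ℝ) T ×ˢ Ioo (0 : ℝ) 1 → (∀ z, 0 ≤ ψ z) →
      0 ≤ ∫ z in Ioo (0 : ℝ) T ×ˢ Ioo (0 : ℝ) 1,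
            (F (ubar y z.2) * fderiv ℝ ψ z (1, 0)
              + p * Q (ubar y z.2) * fderiv ℝ ψ z (0, 1))) ∧
    (∀ _t : ℝ, (∫ x in (0 : ℝ)..1, |ubar y x - ubar y x|) = 0) ∧
    (∀ F Q : ℝ → ℝ → ℝ, IsBoundaryPair F Q →
      ∀ φ : ℝ → ℝ, IntervalIntegrable φ volume 0 T → (∀ t ∈ Icc (0 : ℝ) T, 0 ≤ φ t) →
      (∃ Lm ≤ (0 : ℝ), Tendsto (fun x => ∫ t in (0 : ℝ)..T, φ t * Q (ubar y x) 0)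
          (nhdsWithin 0 (Ioi 0)) (nhds Lm)) ∧
      (∃ Lp, 0 ≤ Lp ∧ Tendsto (fun x => ∫ t in (0 : ℝ)..T, φ t * Q (ubar y x) 1)
          (nhdsWithin 1 (Iio 1)) (nhds Lp))) := by
  refine ⟨fun F Q hFQ ψ hψ hc hsupp hψ_nonneg =>
    setIntegral_ubar_entropy_nonneg hp hFQ hψ hc hsupp hψ_nonneg, fun _ => by simp,
    fun F Q hFQ φ _ hφ => ?_⟩
  have hφ_int : 0 ≤ ∫ t in (0 : ℝ)..T, φ t := intervalIntegral.integral_nonneg hT hφ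
  obtain ⟨c, hc, hc_trace⟩ := exists_ubar_eventuallyEq_nhdsGT y 0
  exact
    ⟨⟨_, mul_nonpos_of_nonneg_of_nonpos hφ_int (hFQ.flux_zero_nonpos hc),
      tendsto_intervalIntegral_mul_comp_of_eventuallyEq hc_trace φ (Q · 0) 0 T⟩,
    ⟨_, mul_nonneg hφ_int (hFQ.flux_one_nonneg (ubar_eq_zero_or_one y 1)),
      tendsto_intervalIntegral_mul_comp_of_eventuallyEq
        (ubar_eventuallyEq_nhdsLT y 1) φ (Q · 1) 0 T⟩⟩

/-- Section 2.5: the single upward-shock profiles `ū_y` are stationary entropy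
solutions of `∂_t u + p ∂_x J(u) = 0` with boundary data `v₋ = 0`, `v₊ = 1` and
initial datum `ū_y`. -/
theorem stmt9 (p T y : ℝ) (hp : 0 < p) (hT : 0 < T) (hy : y ∈ Set.Icc (0:ℝ) 1) :
    -- (i) the entropy inequality for the time-independent function u(t,x) = ū_y(x)
    (∀ F Q : ℝ → ℝ, IsLaxPair F Q → ∀ ψ : ℝ × ℝ → ℝ,
      ContDiff ℝ (⊤ : ℕ∞) ψ → HasCompactSupport ψ →
      tsupport ψ ⊆ Set.Ioo (0:ℝ) T ×ˢ Set.Ioo (0:ℝ) 1 → (∀ z, 0 ≤ ψ z) →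
      0 ≤ ∫ z in Set.Ioo (0:ℝ) T ×ˢ Set.Ioo (0:ℝ) 1,
            (F (ubar y z.2) * fderiv ℝ ψ z (1, 0)
              + p * Q (ubar y z.2) * fderiv ℝ ψ z (0, 1))) ∧
    -- (ii) the initial condition
    (∀ t : ℝ, (∫ x in (0:ℝ)..1, |ubar y x - ubar y x|) = 0) ∧
    -- (iii) the boundary conditions with data v₋ = 0, v₊ = 1
    (∀ F Q : ℝ → ℝ → ℝ, IsBoundaryPair F Q →
      ∀ φ : ℝ → ℝ, ContinuousOn φ (Set.Icc 0 T) → (∀ t ∈ Set.Icc (0:ℝ) T, 0 ≤ φ t) →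
      (∃ Lm ≤ (0:ℝ), Tendsto (fun x => ∫ t in (0:ℝ)..T, φ t * Q (ubar y x) 0)
          (nhdsWithin 0 (Set.Ioi 0)) (nhds Lm)) ∧
      (∃ Lp, 0 ≤ Lp ∧ Tendsto (fun x => ∫ t in (0:ℝ)..T, φ t * Q (ubar y x) 1)
          (nhdsWithin 1 (Set.Iio 1)) (nhds Lp))) := by
  obtain ⟨hentropy, hinitial, hboundary⟩ := stmt9_general p T y hp.le hT.le
  exact ⟨fun F Q hFQ ψ hψ => hentropy F Q hFQ ψ (hψ.of_le (by exact_mod_cast le_top)), hinitial,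
    fun F Q hFQ φ hφ => hboundary F Q hFQ φ (hφ.intervalIntegrable_of_Icc hT.le)⟩
end

section
/- Fix an integer n ≥ 2, real constants p, σ > 0, κ, θ ∈ ℝ, α, β, γ, δ ≥ 0, and an integer k ≥ 1 with n ≥ 2k + 1. Then for every k+1 ≤ i ≤ n−k and every η ∈ Ω_n, (L_n η̂_{i,k})(η) = n [ p (Ĵ_{i−1,k}(η) − Ĵ_{i,k}(η)) + σ n^κ (η̂_{i+1,k}(η) − 2η̂_{i,k}(η) + η̂_{i−1,k}(η)) ]; in particular the boundary generators L₋, L₊ give no contribution. (Identity (eq. current).) -/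
open Finset

/-- Exchange the values of a configuration at sites `i` and `i+1`. -/
def swapC (η : ℕ → ℝ) (i : ℕ) : ℕ → ℝ :=
  fun j => if j = i then η (i+1) else if j = i+1 then η i else η j

/-- Flip the value (`a ↦ 1 - a`) of a configuration at site `i`. -/
def flipC (η : ℕ → ℝ) (i : ℕ) : ℕ → ℝ :=
  fun j => if j = i then 1 - η i else η j

/-- Generator of the totally asymmetric simple exclusion on `{1,…,n}`. -/
def Lta (n : ℕ) (f : (ℕ → ℝ) → ℝ) (η : ℕ → ℝ) : ℝ :=
  ∑ i ∈ Finset.Icc 1 (n-1), η i * (1 - η (i+1)) * (f (swapC η i) - f η)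

/-- Generator of the symmetric simple exclusion on `{1,…,n}`. -/
def Lss (n : ℕ) (f : (ℕ → ℝ) → ℝ) (η : ℕ → ℝ) : ℝ :=
  ∑ i ∈ Finset.Icc 1 (n-1), (f (swapC η i) - f η)

/-- Generator of the left reservoir, acting at site `1`. -/
def Lminus (α γ : ℝ) (f : (ℕ → ℝ) → ℝ) (η : ℕ → ℝ) : ℝ :=
  (α * (1 - η 1) + γ * η 1) * (f (flipC η 1) - f η)

/-- Generator of the right reservoir, acting at site `n`. -/
def Lplus (n : ℕ) (β δ : ℝ) (f : (ℕ → ℝ) → ℝ) (η : ℕ → ℝ) : ℝ :=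
  (δ * (1 - η n) + β * η n) * (f (flipC η n) - f η)

/-- The full generator `L_n = n[p L_ta + σ n^κ L_ss + n^θ (L₋ + L₊)]`. -/
noncomputable def Ln (n : ℕ) (p σ κ θ α β γ δ : ℝ) (f : (ℕ → ℝ) → ℝ) (η : ℕ → ℝ) : ℝ :=
  (n : ℝ) * (p * Lta n f η + σ * (n:ℝ)^κ * Lss n f η
    + (n:ℝ)^θ * (Lminus α γ f η + Lplus n β δ f η))

/-- The smoothly weighted average `η̂_{i,k}` with weights `w_{i'} = (k - |i'|)/k²`. -/
noncomputable def hatEta (k i : ℕ) (η : ℕ → ℝ) : ℝ :=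
  ∑ j ∈ Finset.Icc (i+1-k) (i+k-1),
    ((((k:ℤ) - |(i:ℤ) - (j:ℤ)|) : ℤ) : ℝ) / (k:ℝ)^2 * η j

/-- The smoothly weighted current `Ĵ_{i,k}`. -/
noncomputable def hatJ (k i : ℕ) (η : ℕ → ℝ) : ℝ :=
  ∑ j ∈ Finset.Icc (i+1-k) (i+k-1),
    ((((k:ℤ) - |(i:ℤ) - (j:ℤ)|) : ℤ) : ℝ) / (k:ℝ)^2 * (η j * (1 - η (j+1)))

/-!
Exchanging the values at `m` and `m + 1` changes a linear statistic `∑ⱼ wⱼ ηⱼ` by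
`(wₘ - wₘ₊₁) (ηₘ₊₁ - ηₘ)`, and flipping site `m` changes it by `wₘ (1 - 2 ηₘ)`. For the tent weights
of `η̂_{i,k}` the reservoir terms vanish because `w₁ = wₙ = 0`. Moreover `wₘ₊₁` is the tent weight
centred at `i - 1`, so the differences `wₘ - wₘ₊₁` turn sums over bonds into differences of window
averages; both `Ĵ_{i,k}` and `η̂_{i+1,k}` are themselves `η̂_{i,k}` evaluated at another function,
the current and the translate of `η` respectively.
-/

/-- The linear statistic `∑_{j=1}^n w_j η_j` of a configuration on the sites `{1,…,n}`: the class of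
observables, containing every `η̂_{i,k}` whose window fits, on which the generators are computed. -/
def linearStat (n : ℕ) (w η : ℕ → ℝ) : ℝ :=
  ∑ j ∈ Icc 1 n, w j * η j

section LinearStat

variable {n m : ℕ} (w η : ℕ → ℝ)

lemma linearStat_swapC_sub (hm : m ∈ Icc 1 (n - 1)) :
    linearStat n w (swapC η m) - linearStat n w η = (w m - w (m + 1)) * (η (m + 1) - η m) := by
  rw [mem_Icc] at hm
  have hleft : m ∈ Icc 1 n := mem_Icc.2 ⟨by omega, by omega⟩
  have hright : m + 1 ∈ Icc 1 n := mem_Icc.2 ⟨by omega, by omega⟩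
  rw [linearStat, linearStat, ← sum_sub_distrib,
    sum_eq_add_of_mem m (m + 1) hleft hright (by omega)]
  · simp only [swapC, if_true, if_neg (Nat.succ_ne_self m)]
    ring
  · rintro j - ⟨hjm, hjm'⟩
    simp only [swapC, if_neg hjm, if_neg hjm', sub_self]

lemma linearStat_flipC_sub (hm : m ∈ Icc 1 n) :
    linearStat n w (flipC η m) - linearStat n w η = w m * (1 - 2 * η m) := by
  rw [linearStat, linearStat, ← sum_sub_distrib, sum_eq_single_of_mem m hm]
  · simp only [flipC, if_true]
    ring
  · intro j _ hjm
    simp only [flipC, if_neg hjm, sub_self]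

lemma Lta_linearStat (hη : ∀ j ∈ Icc 1 n, η j = 0 ∨ η j = 1) :
    Lta n (linearStat n w) η =
      ∑ m ∈ Icc 1 (n - 1), (w (m + 1) - w m) * (η m * (1 - η (m + 1))) := by
  refine sum_congr rfl fun m hm => ?_
  rw [linearStat_swapC_sub w η hm]
  rw [mem_Icc] at hm
  have jump : η m * (1 - η (m + 1)) * (η (m + 1) - η m) = -(η m * (1 - η (m + 1))) := by
    rcases hη m (mem_Icc.2 ⟨by omega, by omega⟩) with h | h <;>
      rcases hη (m + 1) (mem_Icc.2 ⟨by omega, by omega⟩) with h' | h' <;> rw [h, h'] <;> ring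
  linear_combination (w m - w (m + 1)) * jump

lemma Lss_linearStat :
    Lss n (linearStat n w) η = ∑ m ∈ Icc 1 (n - 1), (w m - w (m + 1)) * (η (m + 1) - η m) :=
  sum_congr rfl fun _ hm => linearStat_swapC_sub w η hm

lemma Lminus_linearStat (hn : 1 ≤ n) (α γ : ℝ) :
    Lminus α γ (linearStat n w) η =
      (α * (1 - η 1) + γ * η 1) * (w 1 * (1 - 2 * η 1)) := by
  rw [Lminus, linearStat_flipC_sub w η (left_mem_Icc.2 hn)]

lemma Lplus_linearStat (hn : 1 ≤ n) (β δ : ℝ) :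
    Lplus n β δ (linearStat n w) η =
      (δ * (1 - η n) + β * η n) * (w n * (1 - 2 * η n)) := by
  rw [Lplus, linearStat_flipC_sub w η (right_mem_Icc.2 hn)]

end LinearStat

/-- The weight `(k - |i - j|)⁺ / k²` of the site `j` in `η̂_{i,k}`, extended by zero outside the
window so that sums over windows can be taken over any larger set of sites. -/
noncomputable def tentWeight (k i j : ℕ) : ℝ :=
  ((max ((k : ℤ) - |(i : ℤ) - (j : ℤ)|) 0 : ℤ) : ℝ) / (k : ℝ) ^ 2

section TentWeight

variable {k i j : ℕ}

lemma tentWeight_eq_zero (h : i + k ≤ j ∨ j + k ≤ i) : tentWeight k i j = 0 := by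
  have habs : (k : ℤ) ≤ |(i : ℤ) - (j : ℤ)| := le_abs.2 (by omega)
  rw [tentWeight, max_eq_right (sub_nonpos.2 habs), Int.cast_zero, zero_div]

lemma tentWeight_of_le_add (hij : i ≤ j + k) (hji : j ≤ i + k) :
    tentWeight k i j = (((k : ℤ) - |(i : ℤ) - (j : ℤ)| : ℤ) : ℝ) / (k : ℝ) ^ 2 := by
  have habs : |(i : ℤ) - (j : ℤ)| ≤ k := abs_le.2 ⟨by omega, by omega⟩
  rw [tentWeight, max_eq_left (sub_nonneg.2 habs)]

lemma tentWeight_succ_succ (k i j : ℕ) : tentWeight k (i + 1) (j + 1) = tentWeight k i j := by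
  simp only [tentWeight, Nat.cast_add, add_sub_add_right_eq_sub]

lemma hatEta_eq_sum_tentWeight {S : Finset ℕ} (hS : Icc (i + 1 - k) (i + k - 1) ⊆ S)
    (η : ℕ → ℝ) : hatEta k i η = ∑ j ∈ S, tentWeight k i j * η j := by
  rw [← sum_subset hS]
  · refine sum_congr rfl fun j hj => ?_
    rw [mem_Icc] at hj
    rw [tentWeight_of_le_add (by omega) (by omega)]
  · intro j _ hj
    rw [mem_Icc] at hj
    rw [tentWeight_eq_zero (by omega), zero_mul]

lemma hatEta_eq_linearStat {n : ℕ} (hi : k + 1 ≤ i) (hin : i + k ≤ n) :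
    hatEta k i = linearStat n (tentWeight k i) :=
  funext fun η => hatEta_eq_sum_tentWeight (Icc_subset_Icc (by omega) (by omega)) η

lemma hatEta_succ (hi : k ≤ i + 1) (η : ℕ → ℝ) :
    hatEta k (i + 1) η = hatEta k i fun j => η (j + 1) := by
  have hwindow : Icc (i + 1 - k) (i + k - 1) ⊆ Ico (i + 1 - k) (i + k) := fun j hj => by
    rw [mem_Icc] at hj
    exact mem_Ico.2 ⟨by omega, by omega⟩
  have hwindow_succ : Icc (i + 1 + 1 - k) (i + 1 + k - 1) ⊆
      Ico (i + 1 - k + 1) (i + k + 1) := fun j hj => by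
    rw [mem_Icc] at hj
    exact mem_Ico.2 ⟨by omega, by omega⟩
  rw [hatEta_eq_sum_tentWeight hwindow_succ, ← sum_Ico_add', hatEta_eq_sum_tentWeight hwindow]
  simp only [tentWeight_succ_succ]

lemma hatJ_eq_hatEta (k i : ℕ) (η : ℕ → ℝ) :
    hatJ k i η = hatEta k i fun j => η j * (1 - η (j + 1)) :=
  rfl

end TentWeight

section GeneratorHatEta

variable {n k i : ℕ}

lemma sum_tentWeight_succ_sub (hi : k ≤ i) (hin : i + 1 + k ≤ n) (g : ℕ → ℝ) :
    ∑ m ∈ Icc 1 (n - 1), (tentWeight k (i + 1) (m + 1) - tentWeight k (i + 1) m) * g m =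
      hatEta k i g - hatEta k (i + 1) g := by
  have hwindow : Icc (i + 1 - k) (i + k - 1) ⊆ Icc 1 (n - 1) :=
    Icc_subset_Icc (by omega) (by omega)
  have hwindow_succ : Icc (i + 1 + 1 - k) (i + 1 + k - 1) ⊆ Icc 1 (n - 1) :=
    Icc_subset_Icc (by omega) (by omega)
  rw [hatEta_eq_sum_tentWeight hwindow, hatEta_eq_sum_tentWeight hwindow_succ, ← sum_sub_distrib]
  exact sum_congr rfl fun m _ => by rw [tentWeight_succ_succ, sub_mul]

lemma Lta_hatEta_succ (hi : k ≤ i) (hin : i + 1 + k ≤ n) {η : ℕ → ℝ}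
    (hη : ∀ j ∈ Icc 1 n, η j = 0 ∨ η j = 1) :
    Lta n (hatEta k (i + 1)) η = hatJ k i η - hatJ k (i + 1) η := by
  rw [hatEta_eq_linearStat (by omega) hin, Lta_linearStat _ _ hη,
    sum_tentWeight_succ_sub hi hin fun j => η j * (1 - η (j + 1)), hatJ_eq_hatEta, hatJ_eq_hatEta]

lemma Lss_hatEta_succ (hi : k ≤ i) (hin : i + 1 + k ≤ n) (η : ℕ → ℝ) :
    Lss n (hatEta k (i + 1)) η =
      hatEta k (i + 2) η - 2 * hatEta k (i + 1) η + hatEta k i η := by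
  set w := tentWeight k (i + 1)
  calc Lss n (hatEta k (i + 1)) η
      = ∑ m ∈ Icc 1 (n - 1), (w m - w (m + 1)) * (η (m + 1) - η m) := by
        rw [hatEta_eq_linearStat (by omega) hin, Lss_linearStat]
    _ = ∑ m ∈ Icc 1 (n - 1), (w (m + 1) - w m) * η m -
          ∑ m ∈ Icc 1 (n - 1), (w (m + 1) - w m) * η (m + 1) := by
        rw [← sum_sub_distrib]
        exact sum_congr rfl fun m _ => by ring
    _ = hatEta k i η - hatEta k (i + 1) η -
          (hatEta k (i + 1) η - hatEta k (i + 2) η) := by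
        rw [sum_tentWeight_succ_sub hi hin, sum_tentWeight_succ_sub hi hin fun m => η (m + 1),
          ← hatEta_succ (by omega), ← hatEta_succ (by omega)]
    _ = hatEta k (i + 2) η - 2 * hatEta k (i + 1) η + hatEta k i η := by ring

lemma Lminus_hatEta (hi : k + 1 ≤ i) (hin : i + k ≤ n) (α γ : ℝ) (η : ℕ → ℝ) :
    Lminus α γ (hatEta k i) η = 0 := by
  rw [hatEta_eq_linearStat hi hin, Lminus_linearStat _ _ (by omega),
    tentWeight_eq_zero (by omega), zero_mul, mul_zero]

lemma Lplus_hatEta (hi : k + 1 ≤ i) (hin : i + k ≤ n) (β δ : ℝ) (η : ℕ → ℝ) :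
    Lplus n β δ (hatEta k i) η = 0 := by
  rw [hatEta_eq_linearStat hi hin, Lplus_linearStat _ _ (by omega),
    tentWeight_eq_zero (by omega), zero_mul, mul_zero]

end GeneratorHatEta

theorem stmt11_general {n k i : ℕ} (hi : k + 1 ≤ i) (hin : i + k ≤ n) (p σ κ θ α β γ δ : ℝ)
    {η : ℕ → ℝ} (hη : ∀ j ∈ Icc 1 n, η j = 0 ∨ η j = 1) :
    Ln n p σ κ θ α β γ δ (hatEta k i) η
      = (n : ℝ) * (p * (hatJ k (i - 1) η - hatJ k i η)
          + σ * (n : ℝ) ^ κ *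
            (hatEta k (i + 1) η - 2 * hatEta k i η + hatEta k (i - 1) η)) := by
  obtain ⟨i, rfl⟩ := Nat.exists_eq_add_of_le' (Nat.one_le_of_lt hi)
  have hki : k ≤ i := Nat.le_of_succ_le_succ hi
  rw [Ln, Lminus_hatEta hi hin, Lplus_hatEta hi hin, Lta_hatEta_succ hki hin hη,
    Lss_hatEta_succ hki hin, Nat.add_sub_cancel, add_zero, mul_zero, add_zero]

/-- Identity (eq. current): for `k+1 ≤ i ≤ n−k`, the action of the full generator on the
smoothly weighted average `η̂_{i,k}` involves only the bulk dynamics: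
`L_n η̂_{i,k} = n[p(Ĵ_{i−1,k} − Ĵ_{i,k}) + σ n^κ (η̂_{i+1,k} − 2η̂_{i,k} + η̂_{i−1,k})]`. -/
theorem stmt11 (n : ℕ) (hn : 2 ≤ n) (p σ κ θ α β γ δ : ℝ)
    (hp : 0 < p) (hσ : 0 < σ) (hα : 0 ≤ α) (hβ : 0 ≤ β) (hγ : 0 ≤ γ) (hδ : 0 ≤ δ)
    (k : ℕ) (hk : 1 ≤ k) (hkn : 2*k + 1 ≤ n)
    (i : ℕ) (hi1 : k + 1 ≤ i) (hi2 : i ≤ n - k)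
    (η : ℕ → ℝ) (hη : ∀ j, η j = 0 ∨ η j = 1) :
    Ln n p σ κ θ α β γ δ (hatEta k i) η
      = (n : ℝ) * (p * (hatJ k (i-1) η - hatJ k i η)
          + σ * (n:ℝ)^κ * (hatEta k (i+1) η - 2 * hatEta k i η + hatEta k (i-1) η)) :=
  stmt11_general hi1 (by omega) p σ κ θ α β γ δ fun j _ => hη j
end
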